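/- Let n ≥ 3 and let M be a compact connected oriented n-manifold whose boundary is a disjoint union of (n−1)-tori N_1,…,N_m. For each i, equip N_i with a flat structure, choose a totally geodesic k_i-dimensional subtorus T_i ⊆ N_i with 1 ≤ k_i ≤ n−2, and let R = M(T_1,…,T_m) be the generalized Dehn filling obtained from M by collapsing each N_i onto the leaf space L_i of the foliation of N_i by parallel copies of T_i. Then R is a pseudomanifold with a fundamental class, and ‖R‖ ≤ ‖M,∂M‖. -/

import Mathlib

noncomputable section

namespace BddCoh

/-! ### Singular chains and homology -/

/-- The standard `n`-simplex. -/
abbrev Δ (n : ℕ) : Set (Fin (n + 1) → ℝ) := stdSimplex ℝ (Fin (n + 1))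

/-- Singular `n`-simplices in `X`. -/
abbrev SSimplex (X : Type) [TopologicalSpace X] (n : ℕ) := C(Δ n, X)

/-- Singular `n`-chains in `X` with coefficients in `R`. -/
def SChain (R : Type) [Ring R] (X : Type) [TopologicalSpace X] (n : ℕ) : Type :=
  SSimplex X n →₀ R

instance (R : Type) [Ring R] (X : Type) [TopologicalSpace X] (n : ℕ) :
    AddCommGroup (SChain R X n) := Finsupp.instAddCommGroup

instance (R : Type) [Ring R] (X : Type) [TopologicalSpace X] (n : ℕ) :
    Module R (SChain R X n) := Finsupp.module (SSimplex X n) R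

/-- Chains are finitely supported functions on simplices. -/
def chainEquiv (R : Type) [Ring R] (X : Type) [TopologicalSpace X] (n : ℕ) :
    (SSimplex X n →₀ R) ≃ₗ[R] SChain R X n := LinearEquiv.refl R (SChain R X n)

/-- The `i`-th face inclusion of standard simplices. -/
def face {n : ℕ} (i : Fin (n + 2)) : C(Δ n, Δ (n + 1)) where
  toFun x := ⟨i.insertNth 0 x.1, by
    refine ⟨fun j => ?_, ?_⟩
    · refine Fin.succAboveCases i ?_ (fun j => ?_) j
      · simp
      · simp [x.2.1 j]
    · rw [Fin.sum_univ_succAbove _ i]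
      simp [x.2.2]⟩
  continuous_toFun := by
    refine Continuous.subtype_mk ?_ _
    exact Continuous.finInsertNth i continuous_const continuous_subtype_val

variable {X : Type} [TopologicalSpace X] {R : Type} [Ring R]

/-- The `i`-th face of a singular `(n+1)`-simplex. -/
def faceOf {n : ℕ} (σ : SSimplex X (n + 1)) (i : Fin (n + 2)) : SSimplex X n :=
  σ.comp (face i)

/-- The boundary of a singular `(n+1)`-simplex, as a chain. -/
def bdryChain (R : Type) [Ring R] {n : ℕ} (σ : SSimplex X (n + 1)) : SChain R X n :=
  chainEquiv R X n (∑ i : Fin (n + 2), Finsupp.single (faceOf σ i) ((-1 : R) ^ (i : ℕ)))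

/-- The singular boundary operator. -/
def bdry (R : Type) [Ring R] (X : Type) [TopologicalSpace X] (n : ℕ) :
    SChain R X (n + 1) →ₗ[R] SChain R X n :=
  (Finsupp.linearCombination R (bdryChain R)).comp (chainEquiv R X (n + 1)).symm.toLinearMap

/-- The ℓ¹-norm of a real singular chain. -/
def l1 {n : ℕ} (c : SChain ℝ X n) : ℝ :=
  ((chainEquiv ℝ X n).symm c).sum fun _ r => |r|

/-- The submodule of chains supported on simplices with image contained in `Y`. -/
def chainsIn (R : Type) [Ring R] (X : Type) [TopologicalSpace X] (Y : Set X) (n : ℕ) :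
    Submodule R (SChain R X n) :=
  (Finsupp.supported R R {σ : SSimplex X n | Set.range σ ⊆ Y}).map (chainEquiv R X n).toLinearMap

/-- Relative `(n+1)`-cycles of the pair `(X, Y)`. -/
def relCycles (R : Type) [Ring R] (X : Type) [TopologicalSpace X] (Y : Set X) (n : ℕ) :
    Submodule R (SChain R X (n + 1)) :=
  (chainsIn R X Y n).comap (bdry R X n)

/-- Relative `(n+1)`-boundaries of the pair `(X, Y)`. -/
def relBdries (R : Type) [Ring R] (X : Type) [TopologicalSpace X] (Y : Set X) (n : ℕ) :
    Submodule R (SChain R X (n + 1)) :=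
  LinearMap.range (bdry R X (n + 1)) ⊔ chainsIn R X Y (n + 1)

/-- Relative singular homology `H_{n+1}(X, Y; R)`. -/
def relHomology (R : Type) [Ring R] (X : Type) [TopologicalSpace X] (Y : Set X) (n : ℕ) :=
  relCycles R X Y n ⧸ ((relBdries R X Y n).comap (relCycles R X Y n).subtype)

instance (Y : Set X) (n : ℕ) : AddCommGroup (relHomology R X Y n) :=
  Submodule.Quotient.addCommGroup _

instance (Y : Set X) (n : ℕ) : Module R (relHomology R X Y n) :=
  Submodule.Quotient.module _

/-- The class of a relative cycle in relative homology. -/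
def relHomClass {Y : Set X} {n : ℕ} (c : relCycles R X Y n) : relHomology R X Y n :=
  Submodule.Quotient.mk c

/-- The ℓ¹-seminorm on relative singular homology. -/
def l1HomNorm {Y : Set X} {n : ℕ} (α : relHomology ℝ X Y n) : ℝ :=
  sInf {r : ℝ | ∃ c : relCycles ℝ X Y n, relHomClass c = α ∧ r = l1 c.1}


/-! ### Amenability and countable CW pairs -/

/-- A group is amenable if it admits a left-invariant finitely additive
probability measure defined on all subsets. -/
def IsAmenable (G : Type*) [Group G] : Prop :=
  ∃ m : Set G → ℝ, (∀ A, 0 ≤ m A) ∧ m Set.univ = 1 ∧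
    (∀ A B, Disjoint A B → m (A ∪ B) = m A + m B) ∧
    (∀ (g : G) (A : Set G), m ((g * ·) '' A) = m A)

open CategoryTheory in
/-- A type witnessing that `X'` is obtained from `X` by attaching generalized cells `f : S ⟶ D`
(definition of the older Mathlib). -/
structure RelativeCWComplex.AttachGeneralizedCells.{u} {S D : TopCat.{u}} (f : S ⟶ D)
    (X X' : TopCat.{u}) where
  /-- The index type over the generalized cells -/
  cells : Type u
  /-- An attaching map for each generalized cell -/
  attachMaps : cells → (S ⟶ X)
  /-- `X'` is the pushout of `∐ S ⟶ X` and `∐ S ⟶ ∐ D`. -/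
  iso_pushout : X' ≅ Limits.pushout (Limits.Sigma.desc attachMaps)
    (Limits.Sigma.map fun (_ : cells) ↦ f)

/-- A relative CW-complex: an expanding sequence of spaces `sk i` (the `(i-1)`-skeleton), where
`sk 0` is arbitrary and each `sk (n + 1)` is obtained from `sk n` by attaching `n`-disks
(definition of the older Mathlib). -/
structure RelativeCWComplex.{u} where
  /-- The skeletons. -/
  sk : ℕ → TopCat.{u}
  /-- Each `sk (n + 1)` is obtained from `sk n` by attaching `n`-disks. -/
  attachCells (n : ℕ) : RelativeCWComplex.AttachGeneralizedCells
    (TopCat.diskBoundaryInclusion.{u} n) (sk n) (sk (n + 1))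

/-- A CW-complex is a relative CW-complex whose `sk 0` is empty
(definition of the older Mathlib). -/
structure CWComplex.{u} extends RelativeCWComplex.{u} where
  /-- `sk 0` is empty. -/
  isEmpty_sk_zero : IsEmpty (sk 0)

open CategoryTheory in
/-- The inclusion map from `sk n` to `sk (n + 1)` (definition of the older Mathlib). -/
def RelativeCWComplex.skInclusion.{u} (C : RelativeCWComplex.{u}) (n : ℕ) :
    C.sk n ⟶ C.sk (n + 1) :=
  Limits.pushout.inl _ _ ≫ (C.attachCells n).iso_pushout.inv

open CategoryTheory in
/-- The topological space of a relative CW-complex (definition of the older Mathlib). -/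
def RelativeCWComplex.toTopCat.{u} (C : RelativeCWComplex.{u}) : TopCat.{u} :=
  Limits.colimit (Functor.ofSequence C.skInclusion)

open CategoryTheory in
/-- `X` carries the structure of a countable CW-complex. -/
def IsCountableCW (X : Type) [TopologicalSpace X] : Prop :=
  ∃ C : CWComplex.{0}, (∀ n, Countable ((C.attachCells n).cells)) ∧
    Nonempty ((RelativeCWComplex.toTopCat C.toRelativeCWComplex : TopCat) ≅ TopCat.of X)

open CategoryTheory in
/-- `(X, Y)` is a pair of countable CW-complexes, i.e. `X` is a countable CW-complex and
`Y` is a subcomplex of `X` (realized as the `(-1)`-skeleton of a relative CW-structure on `X`),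
which is itself a countable CW-complex. -/
def IsCountableCWPair (X : Type) [TopologicalSpace X] (Y : Set X) : Prop :=
  IsCountableCW X ∧ IsCountableCW Y ∧
  ∃ (C : RelativeCWComplex.{0}) (φ : (RelativeCWComplex.toTopCat C : TopCat) ≅ TopCat.of X),
    (∀ n, Countable ((C.attachCells n).cells)) ∧
    Set.range (fun y => φ.hom ((Limits.colimit.ι (Functor.ofSequence C.skInclusion) 0) y)) = Y

open CategoryTheory in
/-- The fundamental group is the automorphism group of the basepoint in the fundamental groupoid
(definition of the older Mathlib). -/
def FundamentalGroup.{u} (X : Type u) [TopologicalSpace X] (x : X) : Type u :=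
  Aut (FundamentalGroupoid.mk x)

open CategoryTheory in
instance (X : Type*) [TopologicalSpace X] (x : X) : Group (FundamentalGroup X x) :=
  inferInstanceAs (Group (Aut (FundamentalGroupoid.mk x)))

/-- Every connected component of `Y` has amenable fundamental group. -/
def AmenableComponents (Y : Type) [TopologicalSpace Y] : Prop :=
  ∀ y : Y, IsAmenable (FundamentalGroup (connectedComponent y) ⟨y, mem_connectedComponent⟩)


/-- The inclusion of a subspace, as a continuous map. -/
def subIncl {X : Type} [TopologicalSpace X] (Y : Set X) : C(↥Y, X) :=
  ⟨Subtype.val, continuous_subtype_val⟩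

open CategoryTheory in
/-- The map induced by a continuous map on fundamental groups. -/
def pi1Map {X Y : Type} [TopologicalSpace X] [TopologicalSpace Y] (f : C(X, Y)) (x : X) :
    FundamentalGroup X x →* FundamentalGroup Y (f x) :=
  (FundamentalGroupoid.fundamentalGroupoidFunctor.map
    (show TopCat.of X ⟶ TopCat.of Y from TopCat.ofHom f)).mapAut ⟨x⟩

/-! ### Topological manifolds with boundary and fundamental classes -/

/-- The closed upper half space `ℍⁿ = {x : ℝⁿ | x₀ ≥ 0}`. -/
def halfSpace (n : ℕ) : Set (Fin n → ℝ) := {x | ∀ j : Fin n, (j : ℕ) = 0 → 0 ≤ x j}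

/-- `M` is a topological `n`-manifold with boundary `B`: every point has an open
neighbourhood homeomorphic to an open subset of the closed half space `ℍⁿ`, with points of
`B` (and only those) corresponding to points of the boundary hyperplane. -/
def IsTopMfdWithBdry (n : ℕ) (M : Type) [TopologicalSpace M] (B : Set M) : Prop :=
  T2Space M ∧
  ∀ x : M, ∃ (U : Set M) (V : Set ↥(halfSpace n)) (e : ↥U ≃ₜ ↥V),
    IsOpen U ∧ IsOpen V ∧ x ∈ U ∧
    ∀ y : ↥U, ((∀ j : Fin n, (j : ℕ) = 0 → ((e y : ↥(halfSpace n)) : Fin n → ℝ) j = 0) ↔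
      (y : M) ∈ B)

/-- Extension of coefficients from `ℤ` to `ℝ` on singular chains. -/
def intChain {M : Type} [TopologicalSpace M] {m : ℕ} (z : SChain ℤ M m) : SChain ℝ M m :=
  chainEquiv ℝ M m
    (Finsupp.mapRange (Int.cast : ℤ → ℝ) (by simp) ((chainEquiv ℤ M m).symm z))

/-- `μ ∈ H_{n+1}(M, B; ℝ)` is a fundamental class (with regular set `reg`): it is the
image of an integral relative homology class which induces a generator of the local
homology group `H_{n+1}(M, M ∖ {x}; ℤ)` at every point `x ∈ reg`. For a compact connected
oriented `(n+1)`-manifold `M` with boundary `B` one takes `reg = Bᶜ` (the interior), and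
for the pseudomanifolds arising from generalized Dehn fillings one takes `reg` to be the
image of the interior of the filled manifold. -/
def IsFundClassOn (M : Type) [TopologicalSpace M] (B : Set M) (reg : Set M) (n : ℕ)
    (μ : relHomology ℝ M B n) : Prop :=
  ∃ (z : SChain ℤ M (n + 1)) (hz : z ∈ relCycles ℤ M B n),
    (∃ hzr : intChain z ∈ relCycles ℝ M B n, relHomClass ⟨intChain z, hzr⟩ = μ) ∧
    ∀ x ∈ reg,
      ∃ hloc : z ∈ relCycles ℤ M ({x}ᶜ) n,
        ∀ β : relHomology ℤ M ({x}ᶜ) n, ∃ k : ℤ, β = k • relHomClass ⟨z, hloc⟩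

/-- The fundamental class of a compact connected oriented manifold with boundary:
its regular points are all the interior points. -/
def IsFundClass (M : Type) [TopologicalSpace M] (B : Set M) (n : ℕ)
    (μ : relHomology ℝ M B n) : Prop :=
  IsFundClassOn M B Bᶜ n μ

/-! ### Gluings of manifolds along boundary components -/

/-- The data of a gluing of the manifolds-with-boundary `(piece j, bdry j)`, `j < k`,
along (some of) their boundary components: a finite set `E` of gluings, each of which
identifies a boundary component `S₁ e` of the piece `j₁ e` with a boundary component
`S₂ e` of the piece `j₂ e` via a homeomorphism `glue e`; each boundary component is used
at most once. -/
structure GluingData (k : ℕ) where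
  piece : Fin k → Type
  top : ∀ j, TopologicalSpace (piece j)
  bdry : ∀ j, Set (piece j)
  E : Type
  finE : Finite E
  j₁ : E → Fin k
  j₂ : E → Fin k
  S₁ : (e : E) → Set (piece (j₁ e))
  S₂ : (e : E) → Set (piece (j₂ e))
  comp₁ : ∀ e, ∃ y ∈ bdry (j₁ e), S₁ e = connectedComponentIn (bdry (j₁ e)) y
  comp₂ : ∀ e, ∃ y ∈ bdry (j₂ e), S₂ e = connectedComponentIn (bdry (j₂ e)) y
  sub₁ : ∀ e, S₁ e ⊆ bdry (j₁ e)
  sub₂ : ∀ e, S₂ e ⊆ bdry (j₂ e)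
  glue : (e : E) → ↥(S₁ e) ≃ₜ ↥(S₂ e)
  used_inj : Function.Injective (fun x : E ⊕ E =>
    match x with
    | Sum.inl e => (⟨j₁ e, S₁ e⟩ : Σ j : Fin k, Set (piece j))
    | Sum.inr e => ⟨j₂ e, S₂ e⟩)

attribute [instance] GluingData.top

namespace GluingData

variable {k : ℕ} (D : GluingData k)

/-- The identifications performed by the gluing. -/
def rel : (Σ j, D.piece j) → (Σ j, D.piece j) → Prop := fun a b =>
  ∃ (e : D.E) (s : ↥(D.S₁ e)), a = ⟨D.j₁ e, (s : D.piece (D.j₁ e))⟩ ∧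
    b = ⟨D.j₂ e, (D.glue e s : D.piece (D.j₂ e))⟩

/-- The glued space: the quotient of the disjoint union of the pieces by the
identifications given by the gluing homeomorphisms. -/
def Glued : Type := Quot D.rel

instance : TopologicalSpace D.Glued := by unfold Glued; infer_instance

/-- The canonical map from a piece to the glued space. -/
def emb (j : Fin k) : C(D.piece j, D.Glued) :=
  ⟨fun x => Quot.mk D.rel ⟨j, x⟩, by exact continuous_quot_mk.comp continuous_sigmaMk⟩

/-- The union `𝒮` of the glued hypersurfaces inside the glued space. -/
def gluedSet : Set D.Glued := ⋃ e : D.E, (D.emb (D.j₁ e)) '' (D.S₁ e)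

/-- The boundary of the glued space: what remains of the boundaries of the pieces after
removing the glued hypersurfaces. -/
def gluedBdry : Set D.Glued := (⋃ j, (D.emb j) '' (D.bdry j)) \ D.gluedSet

lemma emb_mapsTo_bdry (j : Fin k) :
    Set.MapsTo (D.emb j) (D.bdry j) (D.gluedBdry ∪ D.gluedSet) := by
  intro y hy
  by_cases hx : D.emb j y ∈ D.gluedSet
  · exact Or.inr hx
  · exact Or.inl ⟨Set.mem_iUnion.2 ⟨j, ⟨y, hy, rfl⟩⟩, hx⟩

/-- A gluing is compatible if every gluing homeomorphism `f : S₁ → S₂` satisfies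
`f_*(K₁) = K₂`, where `K_i` is the kernel of the map induced on fundamental groups by the
inclusion `S_i → M_{j_i}`. -/
def Compatible : Prop :=
  ∀ (e : D.E) (s : ↥(D.S₁ e)),
    Subgroup.map (pi1Map ((D.glue e) : C(↥(D.S₁ e), ↥(D.S₂ e))) s)
      (MonoidHom.ker (pi1Map (subIncl (D.S₁ e)) s)) =
    MonoidHom.ker (pi1Map (subIncl (D.S₂ e)) ((D.glue e) s))

end GluingData

/-! ### Generalized Dehn fillings -/

/-- The projection of `ℝ^q` onto the standard flat torus `(ℝ/ℤ)^q`. -/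
def torusProj (q : ℕ) : (Fin q → ℝ) →+ (Fin q → AddCircle (1 : ℝ)) where
  toFun x := fun j => (x j : AddCircle (1 : ℝ))
  map_zero' := by funext j; simp
  map_add' a b := by funext j; simp [Pi.add_apply]

/-- The data of a generalized Dehn filling: a manifold `M` of dimension `n = d + 3` whose
boundary is the disjoint union of the `(n-1)`-tori `N i` (each `N i` carries a flat
structure, transported from the standard torus by the homeomorphism `flat i`), together
with, for each `i`, a rational linear subspace `V i ⊆ ℝ^{n-1}` (the tangent space of a
totally geodesic `k_i`-subtorus `T_i ⊆ N_i` with `1 ≤ k_i ≤ n - 2`); the filling is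
obtained by collapsing each `N i` along the parallel copies of `T_i`, i.e. along the
cosets of the subtorus determined by `V i`. -/
structure DehnData (d m : ℕ) where
  M : Type
  top : TopologicalSpace M
  B : Set M
  N : Fin m → Set M
  iscomp : ∀ i, ∃ y ∈ B, N i = connectedComponentIn B y
  cover : B = ⋃ i, N i
  inj : Function.Injective N
  flat : (i : Fin m) → (↥(N i) ≃ₜ (Fin (d + 2) → AddCircle (1 : ℝ)))
  V : Fin m → Submodule ℝ (Fin (d + 2) → ℝ)
  rat : ∀ i, ∃ s : Set (Fin (d + 2) → ℤ),
    V i = Submodule.span ℝ ((fun z : Fin (d + 2) → ℤ => fun j => ((z j : ℤ) : ℝ)) '' s)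
  dim_pos : ∀ i, 1 ≤ Module.finrank ℝ (V i)
  dim_le : ∀ i, Module.finrank ℝ (V i) ≤ d + 1

attribute [instance] DehnData.top

namespace DehnData

variable {d m : ℕ} (D : DehnData d m)

/-- The subtorus along whose cosets the `i`-th boundary torus is collapsed. -/
def W (i : Fin m) : AddSubgroup (Fin (d + 2) → AddCircle (1 : ℝ)) :=
  AddSubgroup.map (torusProj (d + 2)) (D.V i).toAddSubgroup

/-- The collapsing relation: two points of the `i`-th boundary torus are identified if
they lie on the same leaf of the foliation by parallel copies of the subtorus. -/
def rel : D.M → D.M → Prop := fun a b =>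
  ∃ (i : Fin m) (ha : a ∈ D.N i) (hb : b ∈ D.N i),
    D.flat i ⟨a, ha⟩ - D.flat i ⟨b, hb⟩ ∈ D.W i

/-- The generalized Dehn filling `R = M(T_1, …, T_m)`: the quotient of `M` obtained by
collapsing each boundary torus `N i` onto the leaf space `L i` of its foliation by the
parallel copies of the subtorus `T_i`. -/
def Rfill : Type := Quot D.rel

instance : TopologicalSpace D.Rfill := by unfold Rfill; infer_instance

/-- The collapsing map `M → R`. -/
def q : C(D.M, D.Rfill) := ⟨Quot.mk D.rel, continuous_quot_mk⟩

end DehnData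

/-!
The boundary tori are collapsed onto tori of dimension at most `n - 2`. The boundary of the image
`z` in `R` of a relative fundamental cycle of `M` is an `(n - 1)`-cycle in these collapsed tori,
whose homology vanishes in degree `n - 1`; hence `z - w` is a cycle for some chain `w` in them, and
it represents a fundamental class. Since an `n`-cycle of `R` bounds as soon as it bounds locally at
one regular point, every fundamental class is a multiple of this one by a number of absolute value
at most one.

It remains to push `w` away at no cost in norm. Label the vertices of every singular simplex by
elements of `ℤ ^ r`, and straighten the simplices that lie in a collapsed torus: lift them to the
universal covering, round the vertices down to the lattice, translate each one by its label and take
the affine simplex. Now average over all labels in `[0, N) ^ r`. As these boxes form a Følner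
sequence, rounding no longer matters in the limit `N → ∞`: the averaged straightening of a chain in
a collapsed torus depends only on the sum of its coefficients, up to a chain of small norm. After
alternation this sum is zero, so the contribution of `w` tends to zero, while neither averaging
nor alternation increases the norm.
-/

/-! ### Singular chains -/

section Chains

variable {Y Z : Type} [TopologicalSpace Y] [TopologicalSpace Z] {k m n : ℕ}

/-- A singular simplex, regarded as a singular chain with coefficient `1`. -/
def ofSimplex (R : Type) [Ring R] (σ : SSimplex X n) : SChain R X n :=
  chainEquiv R X n (Finsupp.single σ 1)

/-- The linear extension to singular chains of a function defined on singular simplices. -/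
def chainLift {W : Type*} [AddCommGroup W] [Module R W] (φ : SSimplex X n → W) :
    SChain R X n →ₗ[R] W :=
  (Finsupp.linearCombination R φ).comp (chainEquiv R X n).symm.toLinearMap

@[simp]
lemma chainLift_ofSimplex {W : Type*} [AddCommGroup W] [Module R W] (φ : SSimplex X n → W)
    (σ : SSimplex X n) : chainLift (R := R) φ (ofSimplex R σ) = φ σ := by
  simp [chainLift, ofSimplex]

lemma smul_ofSimplex (a : R) (σ : SSimplex X n) :
    a • ofSimplex R σ = chainEquiv R X n (Finsupp.single σ a) := by
  simp only [ofSimplex, ← map_smul, Finsupp.smul_single, smul_eq_mul, mul_one]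

lemma chain_induction {p : SChain R X n → Prop} (c : SChain R X n) (zero : p 0)
    (add : ∀ a b, p a → p b → p (a + b)) (smul : ∀ (a : R) σ, p (a • ofSimplex R σ)) : p c := by
  suffices h : ∀ c : SSimplex X n →₀ R, p (chainEquiv R X n c) from h ((chainEquiv R X n).symm c)
  intro c
  induction c using Finsupp.induction_linear with
  | zero => simpa using zero
  | add f g hf hg => simpa only [map_add] using add _ _ hf hg
  | single σ a => simpa only [smul_ofSimplex] using smul a σ

lemma chainHom_ext {W : Type*} [AddCommGroup W] [Module R W] {f g : SChain R X n →ₗ[R] W}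
    (h : ∀ σ, f (ofSimplex R σ) = g (ofSimplex R σ)) : f = g := by
  ext c
  induction c using chain_induction with
  | zero => simp
  | add a b ha hb => simp [ha, hb]
  | smul a σ => simp [h]

lemma chainHom_congr {W : Type*} [AddCommGroup W] [Module R W] {f g : SChain R X n →ₗ[R] W}
    (h : ∀ σ, f (ofSimplex R σ) = g (ofSimplex R σ)) (c : SChain R X n) : f c = g c := by
  rw [chainHom_ext h]

/-- The map induced on singular chains by a continuous map. -/
def pushforward (f : C(X, Y)) : SChain R X n →ₗ[R] SChain R Y n :=
  chainLift fun σ => ofSimplex R (f.comp σ)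

@[simp]
lemma pushforward_ofSimplex (f : C(X, Y)) (σ : SSimplex X n) :
    pushforward f (ofSimplex R σ) = ofSimplex R (f.comp σ) := by
  simp [pushforward]

lemma bdry_ofSimplex (σ : SSimplex X (n + 1)) :
    bdry R X n (ofSimplex R σ) =
      ∑ i : Fin (n + 2), (-1 : R) ^ (i : ℕ) • ofSimplex R (faceOf σ i) := by
  simp only [smul_ofSimplex, ← map_sum]
  simp [bdry, ofSimplex, bdryChain]

lemma bdry_pushforward (f : C(X, Y)) (c : SChain R X (n + 1)) :
    bdry R Y n (pushforward f c) = pushforward f (bdry R X n c) := by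
  refine chainHom_congr (f := (bdry R Y n).comp (pushforward f))
    (g := (pushforward f).comp (bdry R X n)) (fun σ => ?_) c
  simp [bdry_ofSimplex, map_sum, faceOf, ContinuousMap.comp_assoc]

lemma pushforward_pushforward (g : C(Y, Z)) (f : C(X, Y)) (c : SChain R X n) :
    pushforward g (pushforward f c) = pushforward (g.comp f) c := by
  refine chainHom_congr (f := (pushforward g).comp (pushforward f))
    (g := pushforward (g.comp f)) (fun σ => ?_) c
  simp [ContinuousMap.comp_assoc]

@[simp]
lemma pushforward_id (c : SChain R X n) : pushforward (ContinuousMap.id X) c = c := by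
  refine chainHom_congr (f := pushforward (ContinuousMap.id X)) (g := LinearMap.id) (fun σ => ?_) c
  simp

lemma pushforward_eq_mapDomain (f : C(X, Y)) (c : SChain R X n) :
    pushforward f c = chainEquiv R Y n (Finsupp.mapDomain (fun σ => f.comp σ)
      ((chainEquiv R X n).symm c)) := by
  induction c using chain_induction with
  | zero => simp
  | add a b ha hb => simp [ha, hb, Finsupp.mapDomain_add]
  | smul a σ =>
    rw [map_smul, pushforward_ofSimplex, smul_ofSimplex, smul_ofSimplex]
    simp

lemma pushforward_injective {f : C(X, Y)} (hf : Function.Injective f) :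
    Function.Injective (pushforward (R := R) (n := n) f) := by
  have hcomp : Function.Injective (fun σ : SSimplex X n => f.comp σ) := fun σ τ h => by
    ext1 x
    exact hf (DFunLike.congr_fun h x)
  intro a b hab
  simp only [pushforward_eq_mapDomain, EmbeddingLike.apply_eq_iff_eq] at hab
  exact (chainEquiv R X n).symm.injective (Finsupp.mapDomain_injective hcomp hab)

/-- The affine map of standard simplices induced by a map of vertices. -/
def simplexMap (θ : Fin (m + 1) → Fin (n + 1)) : C(Δ m, Δ n) :=
  ⟨stdSimplex.map θ, stdSimplex.continuous_map θ⟩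

lemma simplexMap_apply (θ : Fin (m + 1) → Fin (n + 1)) (x : Δ m) (j : Fin (n + 1)) :
    (simplexMap θ x).1 j = ∑ i, if θ i = j then x.1 i else 0 := by
  change (FunOnFinite.linearMap ℝ ℝ θ x.1) j = _
  rw [FunOnFinite.linearMap_apply_apply, Finset.sum_filter]

lemma simplexMap_comp (θ : Fin (m + 1) → Fin (n + 1)) (η : Fin (k + 1) → Fin (m + 1)) :
    (simplexMap θ).comp (simplexMap η) = simplexMap (θ ∘ η) := by
  ext1 x
  exact stdSimplex.map_comp_apply η θ x

lemma simplexMap_id : simplexMap (id : Fin (n + 1) → Fin (n + 1)) = ContinuousMap.id _ := by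
  ext1 x
  exact stdSimplex.map_id_apply x

lemma face_apply_self (i : Fin (n + 2)) (x : Δ n) : (face i x).1 i = 0 := by
  simp [face]

lemma face_apply_succAbove (i : Fin (n + 2)) (x : Δ n) (j : Fin (n + 1)) :
    (face i x).1 (i.succAbove j) = x.1 j := by
  simp [face]

lemma face_eq_simplexMap (i : Fin (n + 2)) : face (n := n) i = simplexMap i.succAbove := by
  ext1 x
  apply Subtype.ext
  funext j
  rw [simplexMap_apply]
  refine Fin.succAboveCases i ?_ (fun j => ?_) j
  · simp [face_apply_self, Fin.succAbove_ne]
  · simp [face_apply_succAbove]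

lemma face_comp_face (i : Fin (n + 3)) (j : Fin (n + 2)) :
    (face (i.succAbove j)).comp (face (n := n) (j.predAbove i)) = (face i).comp (face j) := by
  simp only [face_eq_simplexMap, simplexMap_comp]
  congr 1
  funext l
  simp [Fin.succAbove_succAbove_succAbove_predAbove]

lemma faceOf_faceOf (σ : SSimplex X (n + 2)) (i : Fin (n + 3)) (j : Fin (n + 2)) :
    faceOf (faceOf σ (i.succAbove j)) (j.predAbove i) = faceOf (faceOf σ i) j := by
  simp only [faceOf, ContinuousMap.comp_assoc, face_comp_face]

lemma alternating_sum_eq_zero_of_simplicial {W : Type*} [AddCommGroup W] [Module R W]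
    {F : Fin (n + 3) → Fin (n + 2) → W}
    (hF : ∀ i j, F (i.succAbove j) (j.predAbove i) = F i j) :
    ∑ i : Fin (n + 3), (-1 : R) ^ (i : ℕ) • ∑ j : Fin (n + 2), (-1 : R) ^ (j : ℕ) • F i j = 0 := by
  simp only [Finset.smul_sum, smul_smul, ← pow_add]
  rw [← Finset.sum_product']
  refine Finset.sum_involution (fun p _ => (p.1.succAbove p.2, p.2.predAbove p.1)) ?_ ?_ ?_ ?_
  · rintro ⟨i, j⟩ -
    simp only [hF, Fin.neg_one_pow_succAbove_add_predAbove]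
    simp
  · rintro ⟨i, j⟩ - - h
    exact Fin.succAbove_ne i j (congrArg Prod.fst h)
  · simp
  · rintro ⟨i, j⟩ -
    simp [Fin.succAbove_succAbove_predAbove, Fin.predAbove_predAbove_succAbove]

lemma bdry_bdry (c : SChain R X (n + 2)) : bdry R X n (bdry R X (n + 1) c) = 0 := by
  refine chainHom_congr (f := (bdry R X n).comp (bdry R X (n + 1))) (g := 0) (fun σ => ?_) c
  simp only [LinearMap.comp_apply, bdry_ofSimplex, map_sum, map_smul]
  exact alternating_sum_eq_zero_of_simplicial fun i j => by rw [faceOf_faceOf]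

end Chains

/-! ### Chains supported in a subset -/

section ChainsIn

variable {Y : Type} [TopologicalSpace Y] {n : ℕ} {A B : Set X}

instance : Nonempty (Δ n) := ⟨stdSimplex.vertex 0⟩

instance : CompactSpace (Δ n) := isCompact_iff_compactSpace.1 (isCompact_stdSimplex ℝ _)

instance : PreconnectedSpace (Δ n) :=
  Subtype.preconnectedSpace (convex_stdSimplex ℝ _).isPreconnected

lemma chainsIn_eq_span (A : Set X) :
    chainsIn R X A n =
      Submodule.span R (ofSimplex R '' {σ : SSimplex X n | Set.range σ ⊆ A}) := by
  rw [chainsIn, Finsupp.supported_eq_span_single, Submodule.map_span, Set.image_image]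
  rfl

lemma ofSimplex_mem_chainsIn {σ : SSimplex X n} (h : Set.range σ ⊆ A) :
    ofSimplex R σ ∈ chainsIn R X A n := by
  rw [chainsIn_eq_span]
  exact Submodule.subset_span (Set.mem_image_of_mem _ h)

lemma chainsIn_le {S : Submodule R (SChain R X n)}
    (h : ∀ σ : SSimplex X n, Set.range σ ⊆ A → ofSimplex R σ ∈ S) : chainsIn R X A n ≤ S := by
  rw [chainsIn_eq_span, Submodule.span_le]
  rintro _ ⟨σ, hσ, rfl⟩
  exact h σ hσ

lemma chainsIn_mono (h : A ⊆ B) : chainsIn R X A n ≤ chainsIn R X B n :=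
  chainsIn_le fun _ hσ => ofSimplex_mem_chainsIn (hσ.trans h)

lemma mem_chainsIn_inter {c : SChain R X n} (hA : c ∈ chainsIn R X A n)
    (hB : c ∈ chainsIn R X B n) : c ∈ chainsIn R X (A ∩ B) n := by
  obtain ⟨a, ha, rfl⟩ := hA
  obtain ⟨b, hb, hab⟩ := hB
  obtain rfl : b = a := (chainEquiv R X n).injective hab
  refine ⟨b, ?_, rfl⟩
  simp only [SetLike.mem_coe, Finsupp.mem_supported] at ha hb ⊢
  exact fun σ hσ => Set.subset_inter (ha hσ) (hb hσ)

lemma mem_chainsIn_univ (c : SChain R X n) : c ∈ chainsIn R X Set.univ n := by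
  induction c using chain_induction with
  | zero => exact zero_mem _
  | add a b ha hb => exact add_mem ha hb
  | smul a σ => exact Submodule.smul_mem _ _ (ofSimplex_mem_chainsIn (Set.subset_univ _))

lemma eq_zero_of_mem_chainsIn_empty {c : SChain R X n} (h : c ∈ chainsIn R X ∅ n) : c = 0 := by
  have hle : chainsIn R X ∅ n ≤ ⊥ := chainsIn_le fun σ hσ =>
    (hσ ⟨Classical.arbitrary _, rfl⟩).elim
  simpa using hle h

lemma pushforward_mem_chainsIn {f : C(X, Y)} {B : Set Y} (h : Set.MapsTo f A B)
    {c : SChain R X n} (hc : c ∈ chainsIn R X A n) : pushforward f c ∈ chainsIn R Y B n := by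
  refine chainsIn_le (S := (chainsIn R Y B n).comap (pushforward f)) (fun σ hσ => ?_) hc
  simp only [Submodule.mem_comap, pushforward_ofSimplex]
  refine ofSimplex_mem_chainsIn ?_
  rintro _ ⟨x, rfl⟩
  exact h (hσ ⟨x, rfl⟩)

lemma bdry_mem_chainsIn {c : SChain R X (n + 1)} (hc : c ∈ chainsIn R X A (n + 1)) :
    bdry R X n c ∈ chainsIn R X A n := by
  refine chainsIn_le (S := (chainsIn R X A n).comap (bdry R X n)) (fun σ hσ => ?_) hc
  simp only [Submodule.mem_comap, bdry_ofSimplex]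
  refine Submodule.sum_mem _ fun i _ => Submodule.smul_mem _ _ (ofSimplex_mem_chainsIn ?_)
  rintro _ ⟨x, rfl⟩
  exact hσ ⟨face i x, rfl⟩

lemma exists_isCompact_subset_mem_chainsIn {c : SChain R X n} (hc : c ∈ chainsIn R X A n) :
    ∃ C ⊆ A, IsCompact C ∧ c ∈ chainsIn R X C n := by
  rw [chainsIn_eq_span] at hc
  induction hc using Submodule.span_induction with
  | mem x h =>
    obtain ⟨σ, hσ, rfl⟩ := h
    exact ⟨Set.range σ, hσ, isCompact_range σ.continuous, ofSimplex_mem_chainsIn subset_rfl⟩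
  | zero => exact ⟨∅, Set.empty_subset _, isCompact_empty, zero_mem _⟩
  | add a b _ _ ha hb =>
    obtain ⟨C, hCA, hC, ha⟩ := ha
    obtain ⟨C', hCA', hC', hb⟩ := hb
    exact ⟨C ∪ C', Set.union_subset hCA hCA', hC.union hC',
      add_mem (chainsIn_mono Set.subset_union_left ha) (chainsIn_mono Set.subset_union_right hb)⟩
  | smul a x _ hx =>
    obtain ⟨C, hCA, hC, hx⟩ := hx
    exact ⟨C, hCA, hC, Submodule.smul_mem _ _ hx⟩

lemma exists_comp_eq_of_range_subset_image {f : C(X, Y)} (hf : Topology.IsEmbedding f)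
    {σ : SSimplex Y n} (hσ : Set.range σ ⊆ f '' A) :
    ∃ τ : SSimplex X n, Set.range τ ⊆ A ∧ f.comp τ = σ := by
  have hrange (x) : σ x ∈ Set.range f := Set.image_subset_range f A (hσ ⟨x, rfl⟩)
  let τ : SSimplex X n := ⟨fun x => hf.toHomeomorph.symm ⟨σ x, hrange x⟩, by fun_prop⟩
  have hτ (x) : f (τ x) = σ x :=
    congrArg Subtype.val (hf.toHomeomorph.apply_symm_apply ⟨σ x, hrange x⟩)
  refine ⟨τ, ?_, ContinuousMap.ext hτ⟩
  rintro _ ⟨x, rfl⟩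
  rw [← hf.injective.mem_set_image, hτ]
  exact hσ ⟨x, rfl⟩

lemma exists_pushforward_eq {f : C(X, Y)} (hf : Topology.IsEmbedding f) {c : SChain R Y n}
    (hc : c ∈ chainsIn R Y (f '' A) n) : ∃ b ∈ chainsIn R X A n, pushforward f b = c := by
  suffices h : chainsIn R Y (f '' A) n ≤ (chainsIn R X A n).map (pushforward f) from h hc
  refine chainsIn_le fun σ hσ => ?_
  obtain ⟨τ, hτ, rfl⟩ := exists_comp_eq_of_range_subset_image hf hσ
  exact ⟨ofSimplex R τ, ofSimplex_mem_chainsIn hτ, pushforward_ofSimplex f τ⟩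

end ChainsIn

/-! ### Natural operators on chains -/

section NaturalOp

variable {Y : Type} [TopologicalSpace Y] {k m n : ℕ}

/-- The identity of the standard simplex, as a singular chain. -/
def idChain (R : Type) [Ring R] (k : ℕ) : SChain R (Δ k) k := ofSimplex R (ContinuousMap.id _)

/-- The natural operator from `k`-chains to `m`-chains determined, as in the Yoneda lemma, by its
value `a` on the identity of the standard `k`-simplex. -/
def naturalOp (a : SChain R (Δ k) m) : SChain R X k →ₗ[R] SChain R X m :=
  chainLift fun σ => pushforward σ a

@[simp]
lemma naturalOp_ofSimplex (a : SChain R (Δ k) m) (σ : SSimplex X k) :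
    naturalOp a (ofSimplex R σ) = pushforward σ a := by
  simp [naturalOp]

lemma pushforward_naturalOp (f : C(X, Y)) (a : SChain R (Δ k) m) (c : SChain R X k) :
    pushforward f (naturalOp a c) = naturalOp a (pushforward f c) := by
  refine chainHom_congr (f := (pushforward f).comp (naturalOp a))
    (g := (naturalOp a).comp (pushforward f)) (fun σ => ?_) c
  simp [pushforward_pushforward]

lemma naturalOp_mem_chainsIn (a : SChain R (Δ k) m) {A : Set X} {c : SChain R X k}
    (hc : c ∈ chainsIn R X A k) : naturalOp a c ∈ chainsIn R X A m := by
  refine chainsIn_le (S := (chainsIn R X A m).comap (naturalOp a)) (fun σ hσ => ?_) hc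
  simp only [Submodule.mem_comap, naturalOp_ofSimplex]
  exact pushforward_mem_chainsIn (A := Set.univ) (fun x _ => hσ ⟨x, rfl⟩) (mem_chainsIn_univ a)

lemma bdry_naturalOp (a : SChain R (Δ k) (m + 1)) (c : SChain R X k) :
    bdry R X m (naturalOp a c) = naturalOp (bdry R _ m a) c := by
  refine chainHom_congr (f := (bdry R X m).comp (naturalOp a)) (g := naturalOp (bdry R _ m a))
    (fun σ => ?_) c
  simp [bdry_pushforward]

lemma naturalOp_idChain (c : SChain R X k) : naturalOp (idChain R k) c = c := by
  refine chainHom_congr (f := naturalOp (idChain R k)) (g := LinearMap.id) (fun σ => ?_) c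
  simp [idChain]

lemma naturalOp_bdry (a : SChain R (Δ k) m) (c : SChain R X (k + 1)) :
    naturalOp a (bdry R X k c) = naturalOp (naturalOp a (bdry R _ k (idChain R (k + 1)))) c := by
  refine chainHom_congr (f := (naturalOp a).comp (bdry R X k))
    (g := naturalOp (naturalOp a (bdry R _ k (idChain R (k + 1))))) (fun σ => ?_) c
  simp [pushforward_naturalOp, ← bdry_pushforward, idChain]

lemma naturalOp_naturalOp (b : SChain R (Δ m) n) (a : SChain R (Δ k) m) (c : SChain R X k) :
    naturalOp b (naturalOp a c) = naturalOp (naturalOp b a) c := by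
  refine chainHom_congr (f := (naturalOp b).comp (naturalOp a)) (g := naturalOp (naturalOp b a))
    (fun σ => ?_) c
  simp [pushforward_naturalOp]

lemma naturalOp_zero (c : SChain R X k) : naturalOp (0 : SChain R (Δ k) m) c = 0 := by
  refine chainHom_congr (f := naturalOp (0 : SChain R (Δ k) m)) (g := 0) (fun σ => ?_) c
  simp

lemma naturalOp_sub (a b : SChain R (Δ k) m) (c : SChain R X k) :
    naturalOp (a - b) c = naturalOp a c - naturalOp b c := by
  refine chainHom_congr (f := naturalOp (a - b)) (g := naturalOp a - naturalOp b) (fun σ => ?_) c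
  simp

end NaturalOp

/-! ### Cones and acyclic models -/

section Cone

variable {Y : Type} [TopologicalSpace Y] {k m : ℕ}

/-- The quotient map from the prism onto the simplex `Δ (k + 1) = {vertex 0} * Δ k` collapsing the
bottom of the prism to the cone point. -/
def joinMap (k : ℕ) : C(Δ k × unitInterval, Δ (k + 1)) where
  toFun p := ⟨Fin.cons (1 - (p.2 : ℝ)) (fun j => (p.2 : ℝ) * p.1.1 j), by
    refine ⟨fun j => ?_, ?_⟩
    · refine Fin.cases ?_ (fun j => ?_) j
      · simpa using p.2.2.2
      · simpa using mul_nonneg p.2.2.1 (p.1.2.1 j)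
    · rw [Fin.sum_univ_succ]
      simp [← Finset.mul_sum, p.1.2.2]⟩
  continuous_toFun := by
    refine Continuous.subtype_mk (continuous_pi fun j => ?_) _
    refine Fin.cases ?_ (fun j => ?_) j
    · simp only [Fin.cons_zero]
      fun_prop
    · simp only [Fin.cons_succ]
      exact (continuous_subtype_val.comp continuous_snd).mul
        ((continuous_apply j).comp (continuous_subtype_val.comp continuous_fst))

lemma joinMap_apply_zero (p : Δ k × unitInterval) : (joinMap k p).1 0 = 1 - p.2 := by simp [joinMap]

lemma joinMap_apply_succ (p : Δ k × unitInterval) (j : Fin (k + 1)) :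
    (joinMap k p).1 j.succ = p.2 * p.1.1 j := by simp [joinMap]

lemma joinMap_eq_iff {p : Δ k × unitInterval} {y : Δ (k + 1)} :
    joinMap k p = y ↔ 1 - (p.2 : ℝ) = y.1 0 ∧ ∀ j, (p.2 : ℝ) * p.1.1 j = y.1 (Fin.succ j) := by
  rw [Subtype.ext_iff, funext_iff, Fin.forall_fin_succ]
  simp only [joinMap_apply_zero, joinMap_apply_succ]

lemma joinMap_surjective : Function.Surjective (joinMap k) := by
  intro y
  set s := ∑ j : Fin (k + 1), y.1 j.succ with hs
  have hy : y.1 0 + s = 1 := by rw [hs, ← Fin.sum_univ_succ, y.2.2]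
  have hs_nonneg : 0 ≤ s := Finset.sum_nonneg fun j _ => y.2.1 _
  by_cases h : s = 0
  · have hzero (j : Fin (k + 1)) : y.1 j.succ = 0 :=
      (Finset.sum_eq_zero_iff_of_nonneg (fun j _ => y.2.1 _)).1 h j (Finset.mem_univ _)
    refine ⟨(Classical.arbitrary _, 0), joinMap_eq_iff.2 ⟨?_, fun j => ?_⟩⟩
    · simpa [h] using hy.symm
    · simp [hzero]
  · refine ⟨(⟨fun j => y.1 j.succ / s, fun j => div_nonneg (y.2.1 _) hs_nonneg, ?_⟩,
      ⟨s, hs_nonneg, by linarith [y.2.1 0]⟩), joinMap_eq_iff.2 ⟨?_, fun j => ?_⟩⟩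
    · rw [← Finset.sum_div, div_self h]
    · simp only
      linarith
    · exact mul_div_cancel₀ _ h

lemma eq_or_eq_of_joinMap_eq {a b : Δ k × unitInterval} (h : joinMap k a = joinMap k b) :
    a.2 = b.2 ∧ (a.2 = 0 ∨ a.1 = b.1) := by
  obtain ⟨h0, hsucc⟩ := joinMap_eq_iff.1 h
  rw [joinMap_apply_zero] at h0
  have hsnd : a.2 = b.2 := Subtype.ext (by linarith)
  refine ⟨hsnd, or_iff_not_imp_left.2 fun hne => Subtype.ext (funext fun j => ?_)⟩
  have hj := hsucc j
  rw [joinMap_apply_succ, ← hsnd] at hj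
  exact mul_left_cancel₀ (fun h => hne (Subtype.ext h)) hj

lemma isQuotientMap_joinMap : Topology.IsQuotientMap (joinMap k) :=
  (joinMap k).continuous.isClosedMap.isQuotientMap (joinMap k).continuous joinMap_surjective

lemma face_zero_eq_joinMap (x : Δ k) : face 0 x = joinMap k (x, 1) := by
  refine (joinMap_eq_iff.2 ⟨?_, fun j => ?_⟩).symm
  · simp [face_apply_self]
  · rw [← Fin.succAbove_zero, face_apply_succAbove]
    simp

lemma face_succ_joinMap (i : Fin (k + 2)) (x : Δ k) (s : unitInterval) :
    face i.succ (joinMap k (x, s)) = joinMap (k + 1) (face i x, s) := by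
  refine (joinMap_eq_iff.2 ⟨?_, Fin.succAboveCases i ?_ fun j => ?_⟩).symm
  · rw [← Fin.succ_succAbove_zero i, face_apply_succAbove, joinMap_apply_zero]
  · simp [face_apply_self]
  · rw [← Fin.succ_succAbove_succ, face_apply_succAbove, face_apply_succAbove, joinMap_apply_succ]

lemma face_one_eq_joinMap (x : Δ 0) : face 1 x = joinMap 0 (x, 0) := by
  refine (joinMap_eq_iff.2 ⟨?_, fun j => ?_⟩).symm
  · have hx : x.1 0 = 1 := by simpa using x.2.2
    rw [← Fin.one_succAbove_zero, face_apply_succAbove, hx]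
    simp
  · obtain rfl : j = 0 := Subsingleton.elim (α := Fin 1) _ _
    rw [Fin.succ_zero_eq_one', face_apply_self]
    simp

/-- A homotopy, with the time variable second, from a constant map to the identity of `X`. -/
structure Contraction (X : Type) [TopologicalSpace X] where
  center : X
  toMap : C(X × unitInterval, X)
  toMap_zero : ∀ x, toMap (x, 0) = center
  toMap_one : ∀ x, toMap (x, 1) = x

namespace Contraction

/-- The contraction of a convex set along the segments issuing from one of its points. -/
def ofConvex {E : Type} [AddCommGroup E] [Module ℝ E] [TopologicalSpace E]
    [IsTopologicalAddGroup E] [ContinuousSMul ℝ E] {C : Set E} (hC : Convex ℝ C) (p : C) :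
    Contraction C where
  center := p
  toMap := ⟨fun a => ⟨(p : E) + (a.2 : ℝ) • ((a.1 : E) - p),
    hC.add_smul_sub_mem p.2 a.1.2 a.2.2⟩, by fun_prop⟩
  toMap_zero := by simp
  toMap_one := by simp

/-- The product of two contractions. -/
def prod (T : Contraction X) (S : Contraction Y) : Contraction (X × Y) where
  center := (T.center, S.center)
  toMap := ⟨fun a => (T.toMap (a.1.1, a.2), S.toMap (a.1.2, a.2)), by fun_prop⟩
  toMap_zero := by simp [T.toMap_zero, S.toMap_zero]
  toMap_one := by simp [T.toMap_one, S.toMap_one]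

/-- A contraction of the standard simplex. -/
def simplex (k : ℕ) : Contraction (Δ k) :=
  ofConvex (convex_stdSimplex ℝ _) (Classical.arbitrary _)

/-- A contraction of the prism over the standard simplex. -/
def prism (k : ℕ) : Contraction (Δ k × unitInterval) :=
  (simplex k).prod (ofConvex (convex_Icc 0 1) 0)

variable (T : Contraction X)

lemma factorsThrough_joinMap (σ : SSimplex X k) :
    Function.FactorsThrough (T.toMap.comp (σ.prodMap (ContinuousMap.id unitInterval)))
      (joinMap k) := by
  intro a b h
  change T.toMap (σ a.1, a.2) = T.toMap (σ b.1, b.2)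
  obtain ⟨hsnd, hzero | hfst⟩ := eq_or_eq_of_joinMap_eq h
  · rw [← hsnd, hzero, T.toMap_zero, T.toMap_zero]
  · rw [← hsnd, hfst]

/-- The cone on a singular simplex along a contraction; vertex `0` is the cone point. -/
def coneSimplex (σ : SSimplex X k) : SSimplex X (k + 1) :=
  isQuotientMap_joinMap.lift (T.toMap.comp (σ.prodMap (ContinuousMap.id unitInterval)))
    (T.factorsThrough_joinMap σ)

lemma coneSimplex_joinMap (σ : SSimplex X k) (a : Δ k × unitInterval) :
    T.coneSimplex σ (joinMap k a) = T.toMap (σ a.1, a.2) :=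
  DFunLike.congr_fun (isQuotientMap_joinMap.lift_comp
    (T.toMap.comp (σ.prodMap (ContinuousMap.id unitInterval))) (T.factorsThrough_joinMap σ)) a

lemma faceOf_coneSimplex_zero (σ : SSimplex X k) : faceOf (T.coneSimplex σ) 0 = σ := by
  ext1 x
  rw [faceOf, ContinuousMap.comp_apply, face_zero_eq_joinMap, coneSimplex_joinMap, T.toMap_one]

lemma faceOf_coneSimplex_succ (σ : SSimplex X (k + 1)) (i : Fin (k + 2)) :
    faceOf (T.coneSimplex σ) i.succ = T.coneSimplex (faceOf σ i) := by
  ext1 y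
  obtain ⟨⟨x, s⟩, rfl⟩ := joinMap_surjective y
  rw [faceOf, ContinuousMap.comp_apply, face_succ_joinMap, coneSimplex_joinMap,
    coneSimplex_joinMap]
  rfl

lemma faceOf_coneSimplex_one (σ : SSimplex X 0) :
    faceOf (T.coneSimplex σ) 1 = ContinuousMap.const _ T.center := by
  ext1 x
  rw [faceOf, ContinuousMap.comp_apply, face_one_eq_joinMap, coneSimplex_joinMap, T.toMap_zero]
  rfl

/-- The cone operator of a contraction on singular chains. -/
def cone (k : ℕ) : SChain R X k →ₗ[R] SChain R X (k + 1) :=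
  chainLift fun σ => ofSimplex R (T.coneSimplex σ)

@[simp]
lemma cone_ofSimplex (σ : SSimplex X k) :
    T.cone k (ofSimplex R σ) = ofSimplex R (T.coneSimplex σ) := by
  simp [cone]

end Contraction

/-- The augmentation: the sum of the coefficients of a chain. -/
def augmentation (R : Type) [Ring R] (X : Type) [TopologicalSpace X] (k : ℕ) :
    SChain R X k →ₗ[R] R :=
  chainLift fun _ => 1

@[simp]
lemma augmentation_ofSimplex (σ : SSimplex X k) : augmentation R X k (ofSimplex R σ) = 1 := by
  simp [augmentation]

lemma augmentation_bdry (c : SChain R X 1) : augmentation R X 0 (bdry R X 0 c) = 0 :=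
  chainHom_congr (f := (augmentation R X 0).comp (bdry R X 0)) (g := 0)
    (fun σ => by simp [bdry_ofSimplex, Fin.sum_univ_two]) c

namespace Contraction

variable (T : Contraction X)

lemma bdry_cone (c : SChain R X (k + 1)) :
    bdry R X (k + 1) (T.cone (k + 1) c) = c - T.cone k (bdry R X k c) := by
  refine chainHom_congr (f := (bdry R X (k + 1)).comp (T.cone (k + 1)))
    (g := LinearMap.id - (T.cone k).comp (bdry R X k)) (fun σ => ?_) c
  simp only [LinearMap.comp_apply, cone_ofSimplex, bdry_ofSimplex, LinearMap.sub_apply, map_sum,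
    map_smul]
  rw [Fin.sum_univ_succ]
  simp only [faceOf_coneSimplex_zero, faceOf_coneSimplex_succ, Fin.val_succ, pow_succ]
  simp [sub_eq_add_neg]

lemma bdry_cone_zero (c : SChain R X 0) :
    bdry R X 0 (T.cone 0 c) =
      c - augmentation R X 0 c • ofSimplex R (ContinuousMap.const _ T.center) := by
  refine chainHom_congr (f := (bdry R X 0).comp (T.cone 0))
    (g := LinearMap.id -
      (augmentation R X 0).smulRight (ofSimplex R (ContinuousMap.const _ T.center)))
    (fun σ => ?_) c
  simp [bdry_ofSimplex, Fin.sum_univ_two, faceOf_coneSimplex_zero, faceOf_coneSimplex_one,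
    sub_eq_add_neg]

lemma bdry_cone_of_bdry_eq_zero {c : SChain R X (k + 1)} (h : bdry R X k c = 0) :
    bdry R X (k + 1) (T.cone (k + 1) c) = c := by
  rw [bdry_cone, h, map_zero, sub_zero]

lemma bdry_cone_of_augmentation_eq_zero {c : SChain R X 0} (h : augmentation R X 0 c = 0) :
    bdry R X 0 (T.cone 0 c) = c := by
  rw [bdry_cone_zero, h, zero_smul, sub_zero]

end Contraction

/-- A family of chains on the standard simplices whose natural operators commute with the boundary
and are the identity in degree `0`. -/
structure IsNaturalChainMap (f : ∀ k, SChain R (Δ k) k) : Prop where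
  zero : f 0 = idChain R 0
  bdry_succ : ∀ k, bdry R _ k (f (k + 1)) = naturalOp (f k) (bdry R _ k (idChain R (k + 1)))

/-- The chain homotopy between the identity and a natural chain map furnished by acyclic models. -/
def acyclicHomotopy (f : ∀ k, SChain R (Δ k) k) : ∀ k, SChain R (Δ k) (k + 1)
  | 0 => 0
  | k + 1 => (Contraction.simplex (k + 1)).cone (k + 1)
      (f (k + 1) - idChain R (k + 1) -
        naturalOp (acyclicHomotopy f k) (bdry R _ k (idChain R (k + 1))))

namespace IsNaturalChainMap

variable {f : ∀ k, SChain R (Δ k) k}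

lemma bdry_naturalOp (hf : IsNaturalChainMap f) (k : ℕ) (c : SChain R X (k + 1)) :
    bdry R X k (naturalOp (f (k + 1)) c) = naturalOp (f k) (bdry R X k c) := by
  rw [BddCoh.bdry_naturalOp, hf.bdry_succ, ← naturalOp_bdry]

lemma bdry_acyclicHomotopy (hf : IsNaturalChainMap f) (k : ℕ) :
    bdry R _ (k + 1) (acyclicHomotopy f (k + 1)) =
      f (k + 1) - idChain R (k + 1) -
        naturalOp (acyclicHomotopy f k) (bdry R _ k (idChain R (k + 1))) := by
  induction k with
  | zero =>
    refine Contraction.bdry_cone_of_bdry_eq_zero _ ?_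
    rw [acyclicHomotopy, naturalOp_zero, sub_zero, map_sub, hf.bdry_succ, hf.zero,
      naturalOp_idChain, sub_self]
  | succ k ih =>
    refine Contraction.bdry_cone_of_bdry_eq_zero _ ?_
    rw [map_sub, map_sub, hf.bdry_succ, BddCoh.bdry_naturalOp, ih, naturalOp_sub, naturalOp_sub,
      ← naturalOp_bdry, bdry_bdry, map_zero, naturalOp_idChain, sub_zero, sub_self]

lemma naturalOp_sub_self (hf : IsNaturalChainMap f) (k : ℕ) (c : SChain R X (k + 1)) :
    naturalOp (f (k + 1)) c - c =
      bdry R X (k + 1) (naturalOp (acyclicHomotopy f (k + 1)) c) +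
        naturalOp (acyclicHomotopy f k) (bdry R X k c) := by
  rw [BddCoh.bdry_naturalOp, hf.bdry_acyclicHomotopy, naturalOp_bdry (acyclicHomotopy f k) c,
    naturalOp_sub, naturalOp_sub, naturalOp_idChain c]
  abel

end IsNaturalChainMap

end Cone

/-! ### Homotopy invariance -/

section Homotopy

variable {Y : Type} [TopologicalSpace Y] {k : ℕ}

/-- The inclusion of the standard simplex as the level `t` of the prism. -/
def prismLevel (k : ℕ) (t : unitInterval) : C(Δ k, Δ k × unitInterval) :=
  ⟨fun x => (x, t), by fun_prop⟩

/-- The inclusion of the prism over the `i`-th face. -/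
def prismFace (i : Fin (k + 2)) : C(Δ k × unitInterval, Δ (k + 1) × unitInterval) :=
  (face i).prodMap (ContinuousMap.id unitInterval)

/-- The chain triangulating the prism, constructed recursively by coning. -/
def prismChain (R : Type) [Ring R] : ∀ k, SChain R (Δ k × unitInterval) (k + 1)
  | 0 => (Contraction.prism 0).cone 0 (ofSimplex R (prismLevel 0 1) - ofSimplex R (prismLevel 0 0))
  | k + 1 => (Contraction.prism (k + 1)).cone (k + 1)
      (ofSimplex R (prismLevel (k + 1) 1) - ofSimplex R (prismLevel (k + 1) 0) -
        ∑ i : Fin (k + 2), (-1 : R) ^ (i : ℕ) • pushforward (prismFace i) (prismChain R k))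

lemma bdry_prismChain_zero : bdry R _ 0 (prismChain R 0) =
    ofSimplex R (prismLevel 0 1) - ofSimplex R (prismLevel 0 0) := by
  rw [prismChain, Contraction.bdry_cone_of_augmentation_eq_zero]
  simp

lemma faceOf_prismLevel (i : Fin (k + 2)) (t : unitInterval) :
    faceOf (prismLevel (k + 1) t) i = (prismFace i).comp (prismLevel k t) := rfl

lemma prismFace_comp_prismFace (i : Fin (k + 3)) (j : Fin (k + 2)) :
    (prismFace (i.succAbove j)).comp (prismFace (k := k) (j.predAbove i)) =
      (prismFace i).comp (prismFace j) := by
  ext1 x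
  exact Prod.ext (DFunLike.congr_fun (face_comp_face i j) x.1) rfl

lemma bdry_prismChain_succ (k : ℕ) : bdry R _ (k + 1) (prismChain R (k + 1)) =
    ofSimplex R (prismLevel (k + 1) 1) - ofSimplex R (prismLevel (k + 1) 0) -
      ∑ i : Fin (k + 2), (-1 : R) ^ (i : ℕ) • pushforward (prismFace i) (prismChain R k) := by
  induction k with
  | zero =>
    refine Contraction.bdry_cone_of_bdry_eq_zero _ ?_
    simp only [map_sub, map_sum, map_smul, bdry_ofSimplex, bdry_pushforward, bdry_prismChain_zero,
      pushforward_ofSimplex, faceOf_prismLevel, smul_sub, Finset.sum_sub_distrib, sub_self]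
  | succ k ih =>
    refine Contraction.bdry_cone_of_bdry_eq_zero _ ?_
    simp only [map_sub, map_sum, map_smul, bdry_ofSimplex, bdry_pushforward, ih,
      pushforward_ofSimplex, faceOf_prismLevel, smul_sub, Finset.sum_sub_distrib]
    rw [alternating_sum_eq_zero_of_simplicial fun i j => by
      simp only [pushforward_pushforward, prismFace_comp_prismFace]]
    simp

/-- The chain homotopy induced by a homotopy. -/
def homotopyOp (H : C(X × unitInterval, Y)) (k : ℕ) : SChain R X k →ₗ[R] SChain R Y (k + 1) :=
  chainLift fun σ =>
    pushforward (H.comp (σ.prodMap (ContinuousMap.id unitInterval))) (prismChain R k)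

lemma pushforward_sub_pushforward (H : C(X × unitInterval, Y)) {f g : C(X, Y)}
    (hf : ∀ x, H (x, 0) = f x) (hg : ∀ x, H (x, 1) = g x) (c : SChain R X (k + 1)) :
    pushforward g c - pushforward f c =
      bdry R Y (k + 1) (homotopyOp H (k + 1) c) + homotopyOp H k (bdry R X k c) := by
  refine chainHom_congr (f := pushforward g - pushforward f)
    (g := (bdry R Y (k + 1)).comp (homotopyOp H (k + 1)) + (homotopyOp H k).comp (bdry R X k))
    (fun σ => ?_) c
  have hbot : (H.comp (σ.prodMap (ContinuousMap.id unitInterval))).comp (prismLevel (k + 1) 0) =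
      f.comp σ := by
    ext1 x
    simp [prismLevel, hf]
  have htop : (H.comp (σ.prodMap (ContinuousMap.id unitInterval))).comp (prismLevel (k + 1) 1) =
      g.comp σ := by
    ext1 x
    simp [prismLevel, hg]
  have hside (i) : (H.comp (σ.prodMap (ContinuousMap.id unitInterval))).comp (prismFace i) =
      H.comp ((faceOf σ i).prodMap (ContinuousMap.id unitInterval)) := rfl
  simp only [LinearMap.sub_apply, LinearMap.add_apply, LinearMap.comp_apply, homotopyOp,
    chainLift_ofSimplex, bdry_ofSimplex, map_sum, map_smul, bdry_pushforward,
    bdry_prismChain_succ, map_sub, pushforward_pushforward, pushforward_ofSimplex, hbot, htop,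
    hside]
  abel

end Homotopy

/-! ### Barycentric subdivision -/

section Subdivision

variable {k m : ℕ}

lemma map_mem_of_mem_span {V W : Type*} [AddCommGroup V] [AddCommGroup W] [Module R V]
    [Module R W] {S : Set V} {p : Submodule R W} (f : V →ₗ[R] W) (h : ∀ x ∈ S, f x ∈ p) {x : V}
    (hx : x ∈ Submodule.span R S) : f x ∈ p :=
  Submodule.span_le (p := p.comap f).2 h hx

/-- The barycentric subdivision of the standard simplex. -/
def subdivChain (R : Type) [Ring R] : ∀ k, SChain R (Δ k) k
  | 0 => idChain R 0
  | k + 1 => (Contraction.ofConvex (convex_stdSimplex ℝ _) stdSimplex.barycenter).cone k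
      (naturalOp (subdivChain R k) (bdry R _ k (idChain R (k + 1))))

lemma subdivChain_succ (k : ℕ) : subdivChain R (k + 1) =
    (Contraction.ofConvex (convex_stdSimplex ℝ _) stdSimplex.barycenter).cone k
      (naturalOp (subdivChain R k) (bdry R _ k (idChain R (k + 1)))) := rfl

lemma isNaturalChainMap_subdivChain : IsNaturalChainMap (subdivChain R) where
  zero := rfl
  bdry_succ k := by
    induction k with
    | zero =>
      rw [subdivChain_succ, Contraction.bdry_cone_of_augmentation_eq_zero]
      rw [subdivChain, naturalOp_idChain, augmentation_bdry]
    | succ k ih =>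
      rw [subdivChain_succ, Contraction.bdry_cone_of_bdry_eq_zero]
      rw [bdry_naturalOp, ih, ← naturalOp_bdry, bdry_bdry, map_zero]

section Affine

variable {E : Type} [NormedAddCommGroup E] [NormedSpace ℝ E] {C : Set E}

/-- The affine singular simplex in a convex set with prescribed vertices. -/
def affineSimplex (hC : Convex ℝ C) (v : Fin (m + 1) → C) : SSimplex C m :=
  ⟨fun x => ⟨∑ i, x.1 i • (v i : E), hC.sum_mem (fun i _ => x.2.1 i) x.2.2 fun i _ => (v i).2⟩,
    Continuous.subtype_mk (continuous_finsetSum _ fun i _ =>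
      ((continuous_apply i).comp continuous_subtype_val).smul continuous_const) _⟩

lemma coe_affineSimplex (hC : Convex ℝ C) (v : Fin (m + 1) → C) (x : Δ m) :
    (affineSimplex hC v x : E) = ∑ i, x.1 i • (v i : E) := rfl

lemma affineSimplex_mem_of_convex (hC : Convex ℝ C) {v : Fin (m + 1) → C} {S : Set E}
    (hS : Convex ℝ S) (hv : ∀ i, (v i : E) ∈ S) (x : Δ m) : (affineSimplex hC v x : E) ∈ S :=
  hS.sum_mem (fun i _ => x.2.1 i) x.2.2 fun i _ => hv i

lemma affineSimplex_comp_face (hC : Convex ℝ C) (v : Fin (m + 2) → C) (i : Fin (m + 2)) :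
    (affineSimplex hC v).comp (face i) = affineSimplex hC (v ∘ i.succAbove) := by
  ext1 x
  apply Subtype.ext
  rw [ContinuousMap.comp_apply, coe_affineSimplex, coe_affineSimplex,
    Fin.sum_univ_succAbove _ i]
  simp [face_apply_self, face_apply_succAbove]

lemma coneSimplex_affineSimplex (hC : Convex ℝ C) (v : Fin (m + 1) → C) (p : C) :
    (Contraction.ofConvex hC p).coneSimplex (affineSimplex hC v) =
      affineSimplex hC (Fin.cons p v) := by
  ext1 y
  obtain ⟨⟨x, s⟩, rfl⟩ := joinMap_surjective y
  rw [Contraction.coneSimplex_joinMap]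
  apply Subtype.ext
  rw [coe_affineSimplex, Fin.sum_univ_succ]
  simp only [Fin.cons_zero, Fin.cons_succ, joinMap_apply_zero, joinMap_apply_succ, mul_smul,
    ← Finset.smul_sum]
  change (p : E) + (s : ℝ) • ((affineSimplex hC v x : E) - p) = _
  rw [coe_affineSimplex]
  module

lemma affineSimplex_comp_coneSimplex (hC : Convex ℝ C) (v : Fin (m + 1) → C) (b : Δ m)
    (τ : SSimplex (Δ m) k) :
    (affineSimplex hC v).comp
        ((Contraction.ofConvex (convex_stdSimplex ℝ _) b).coneSimplex τ) =
      (Contraction.ofConvex hC (affineSimplex hC v b)).coneSimplex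
        ((affineSimplex hC v).comp τ) := by
  ext1 y
  obtain ⟨⟨x, s⟩, rfl⟩ := joinMap_surjective y
  rw [ContinuousMap.comp_apply, Contraction.coneSimplex_joinMap, Contraction.coneSimplex_joinMap]
  apply Subtype.ext
  change ∑ i, (b.1 i + (s : ℝ) * ((τ x).1 i - b.1 i)) • (v i : E) =
    ∑ i, b.1 i • (v i : E) + (s : ℝ) • (∑ i, (τ x).1 i • (v i : E) - ∑ i, b.1 i • (v i : E))
  simp only [add_smul, mul_smul, sub_smul, Finset.sum_add_distrib, ← Finset.smul_sum,
    Finset.sum_sub_distrib]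

lemma pushforward_affineSimplex_cone (hC : Convex ℝ C) (v : Fin (m + 1) → C) (b : Δ m)
    (c : SChain R (Δ m) k) :
    pushforward (affineSimplex hC v)
        ((Contraction.ofConvex (convex_stdSimplex ℝ _) b).cone k c) =
      (Contraction.ofConvex hC (affineSimplex hC v b)).cone k
        (pushforward (affineSimplex hC v) c) := by
  refine chainHom_congr
    (f := (pushforward (affineSimplex hC v)).comp
      ((Contraction.ofConvex (convex_stdSimplex ℝ _) b).cone k))
    (g := ((Contraction.ofConvex hC (affineSimplex hC v b)).cone k).comp
      (pushforward (affineSimplex hC v))) (fun σ => ?_) c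
  simp [affineSimplex_comp_coneSimplex]

/-- The chains spanned by the affine simplices with vertices in the convex hull of `S` and with
edges of length at most `δ`. -/
def affineChainsLE (R : Type) [Ring R] (hC : Convex ℝ C) (S : Set E) (m : ℕ) (δ : ℝ) :
    Submodule R (SChain R C m) :=
  Submodule.span R {c | ∃ w : Fin (m + 1) → C, (∀ i, (w i : E) ∈ convexHull ℝ S) ∧
    (∀ i j, dist (w i) (w j) ≤ δ) ∧ c = ofSimplex R (affineSimplex hC w)}

lemma barycenter_apply (m : ℕ) (i : Fin (m + 1)) :
    (stdSimplex.barycenter : Δ m).1 i = (m + 1 : ℝ)⁻¹ :=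
  (stdSimplex.barycenter_apply (𝕜 := ℝ) (X := Fin (m + 1)) i).trans (by simp)

lemma dist_barycenter_le (v : Fin (m + 1) → E) {δ : ℝ} (h : ∀ i j, dist (v i) (v j) ≤ δ)
    (j : Fin (m + 1)) :
    dist (v j) (∑ i, (stdSimplex.barycenter : Δ m).1 i • v i) ≤ (m : ℝ) / (m + 1) * δ := by
  have hm : (0 : ℝ) < m + 1 := by positivity
  have hsub : v j - ∑ i, (stdSimplex.barycenter : Δ m).1 i • v i =
      (m + 1 : ℝ)⁻¹ • ∑ i : Fin m, (v j - v (j.succAbove i)) := by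
    have hsum : ∑ i : Fin m, (v j - v (j.succAbove i)) = ∑ i, (v j - v i) := by
      simp [Fin.sum_univ_succAbove (fun i => v j - v i) j]
    simp only [barycenter_apply, hsum, Finset.sum_sub_distrib, Finset.sum_const,
      Finset.card_univ, Fintype.card_fin, ← Finset.smul_sum, smul_sub]
    rw [← Nat.cast_smul_eq_nsmul ℝ, smul_smul, Nat.cast_add_one, inv_mul_cancel₀ hm.ne', one_smul]
  have hnorm : ‖∑ i : Fin m, (v j - v (j.succAbove i))‖ ≤ m * δ := by
    refine (norm_sum_le_of_le (n := fun _ => δ) Finset.univ fun i _ => ?_).trans (by simp)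
    rw [← dist_eq_norm]
    exact h _ _
  rw [dist_eq_norm, hsub, norm_smul, Real.norm_of_nonneg (by positivity)]
  calc (m + 1 : ℝ)⁻¹ * ‖∑ i : Fin m, (v j - v (j.succAbove i))‖ ≤ (m + 1 : ℝ)⁻¹ * (m * δ) := by
        gcongr
    _ = m / (m + 1) * δ := by field_simp

lemma dist_affineSimplex_barycenter_le (hC : Convex ℝ C) {v : Fin (m + 1) → C} {δ : ℝ}
    (h : ∀ i j, dist (v i) (v j) ≤ δ) {x : E}
    (hx : x ∈ convexHull ℝ (Set.range fun i => (v i : E))) :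
    dist x (affineSimplex hC v stdSimplex.barycenter) ≤ (m : ℝ) / (m + 1) * δ := by
  refine convexHull_min ?_ (convex_closedBall _ _) hx
  rintro _ ⟨j, rfl⟩
  exact dist_barycenter_le (fun i => (v i : E)) h j

lemma cone_barycenter_mem_affineChainsLE (hC : Convex ℝ C) {v : Fin (m + 2) → C} {δ : ℝ}
    (hδ : 0 ≤ δ) (h : ∀ i j, dist (v i) (v j) ≤ δ) (i : Fin (m + 2)) {c : SChain R C m}
    (hc : c ∈ affineChainsLE R hC (Set.range fun j => (v (i.succAbove j) : E)) m
      ((m : ℝ) / (m + 1) * δ)) :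
    (Contraction.ofConvex hC (affineSimplex hC v stdSimplex.barycenter)).cone m c ∈
      affineChainsLE R hC (Set.range fun j => (v j : E)) (m + 1)
        (((m + 1 : ℕ) : ℝ) / ((m + 1 : ℕ) + 1) * δ) := by
  refine map_mem_of_mem_span _ ?_ hc
  rintro _ ⟨w, hw, hdist, rfl⟩
  rw [Contraction.cone_ofSimplex, coneSimplex_affineSimplex]
  have hw' (a) : (w a : E) ∈ convexHull ℝ (Set.range fun j => (v j : E)) :=
    convexHull_mono (Set.range_comp_subset_range i.succAbove fun j => (v j : E)) (hw a)
  have hcenter (a) : dist (w a) (affineSimplex hC v stdSimplex.barycenter) ≤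
      ((m + 1 : ℕ) : ℝ) / ((m + 1 : ℕ) + 1) * δ :=
    dist_affineSimplex_barycenter_le hC h (hw' a)
  have hratio : (m : ℝ) / (m + 1) ≤ ((m + 1 : ℕ) : ℝ) / ((m + 1 : ℕ) + 1) := by
    rw [div_le_div_iff₀ (by positivity) (by positivity)]
    push_cast
    nlinarith
  refine Submodule.subset_span ⟨_, Fin.cases ?_ hw', Fin.cases ?_ fun a => ?_, rfl⟩
  · exact affineSimplex_mem_of_convex hC (convex_convexHull ℝ _)
      (fun j => subset_convexHull _ _ (Set.mem_range_self j)) _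
  · refine Fin.cases ?_ fun b => ?_
    · rw [dist_self]
      positivity
    · rw [dist_comm]
      exact hcenter b
  · refine Fin.cases (hcenter a) fun b => ?_
    exact (hdist a b).trans (by gcongr)

lemma pushforward_subdivChain_mem_affineChainsLE (hC : Convex ℝ C) (m : ℕ)
    (v : Fin (m + 1) → C) {δ : ℝ} (hδ : 0 ≤ δ) (h : ∀ i j, dist (v i) (v j) ≤ δ) :
    pushforward (affineSimplex hC v) (subdivChain R m) ∈
      affineChainsLE R hC (Set.range fun i => (v i : E)) m ((m : ℝ) / (m + 1) * δ) := by
  induction m with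
  | zero =>
    refine Submodule.subset_span ⟨v, fun i => subset_convexHull _ _ ⟨i, rfl⟩, fun i j => ?_, ?_⟩
    · simp [Subsingleton.elim (α := Fin 1) i j]
    · simp [subdivChain, idChain]
  | succ m ih =>
    rw [subdivChain_succ, pushforward_affineSimplex_cone, pushforward_naturalOp,
      ← bdry_pushforward, idChain, pushforward_ofSimplex, ContinuousMap.comp_id, bdry_ofSimplex]
    simp only [map_sum, map_smul, naturalOp_ofSimplex, faceOf, affineSimplex_comp_face]
    exact Submodule.sum_mem _ fun i _ => Submodule.smul_mem _ _
      (cone_barycenter_mem_affineChainsLE hC hδ h i (ih _ fun a b => h _ _))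

end Affine

/-- The `s`-fold iterated barycentric subdivision of the standard simplex. -/
def iterSubdivChain (R : Type) [Ring R] (s k : ℕ) : SChain R (Δ k) k :=
  (naturalOp (subdivChain R k))^[s] (idChain R k)

lemma iterSubdivChain_zero (k : ℕ) : iterSubdivChain R 0 k = idChain R k := rfl

lemma iterSubdivChain_succ (s k : ℕ) :
    iterSubdivChain R (s + 1) k = naturalOp (subdivChain R k) (iterSubdivChain R s k) := by
  simp [iterSubdivChain, Function.iterate_succ_apply']

lemma naturalOp_iterSubdivChain (s k : ℕ) (c : SChain R X k) :
    naturalOp (iterSubdivChain R s k) c = (naturalOp (subdivChain R k))^[s] c := by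
  induction s with
  | zero => rw [iterSubdivChain_zero, naturalOp_idChain, Function.iterate_zero_apply]
  | succ s ih => rw [iterSubdivChain_succ, ← naturalOp_naturalOp, Function.iterate_succ_apply', ih]

lemma isNaturalChainMap_iterSubdivChain (s : ℕ) : IsNaturalChainMap (iterSubdivChain R s) where
  zero := by
    induction s with
    | zero => rfl
    | succ s ih => rw [iterSubdivChain_succ, ih, subdivChain, naturalOp_idChain]
  bdry_succ k := by
    induction s with
    | zero => simp only [iterSubdivChain_zero, naturalOp_idChain]
    | succ s ih =>
      rw [iterSubdivChain_succ, isNaturalChainMap_subdivChain.bdry_naturalOp, ih,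
        naturalOp_naturalOp, iterSubdivChain_succ]

lemma dist_vertex_le_one (i j : Fin (k + 1)) :
    dist (stdSimplex.vertex (S := ℝ) i) (stdSimplex.vertex j) ≤ 1 := by
  rw [Subtype.dist_eq, dist_pi_le_iff zero_le_one]
  exact fun l => Real.dist_le_of_mem_Icc_01
    (mem_Icc_of_mem_stdSimplex (stdSimplex.vertex i).2 l)
    (mem_Icc_of_mem_stdSimplex (stdSimplex.vertex j).2 l)

lemma affineSimplex_vertex :
    affineSimplex (convex_stdSimplex ℝ (Fin (k + 1))) stdSimplex.vertex = ContinuousMap.id _ := by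
  ext1 x
  refine Subtype.ext (funext fun j => ?_)
  rw [coe_affineSimplex]
  simp [Finset.sum_apply, Pi.single_apply]

lemma iterSubdivChain_mem_affineChainsLE (s k : ℕ) :
    iterSubdivChain R s k ∈ affineChainsLE R (convex_stdSimplex ℝ (Fin (k + 1))) Set.univ k
      (((k : ℝ) / (k + 1)) ^ s) := by
  induction s with
  | zero =>
    refine Submodule.subset_span ⟨stdSimplex.vertex, by simp, fun i j => ?_, ?_⟩
    · simpa using dist_vertex_le_one i j
    · rw [iterSubdivChain_zero, idChain, affineSimplex_vertex]
  | succ s ih =>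
    rw [iterSubdivChain_succ]
    refine map_mem_of_mem_span _ ?_ ih
    rintro _ ⟨w, -, hw, rfl⟩
    rw [naturalOp_ofSimplex, pow_succ']
    refine Submodule.span_mono ?_ (pushforward_subdivChain_mem_affineChainsLE
      (convex_stdSimplex ℝ (Fin (k + 1))) k w (by positivity) hw)
    rintro _ ⟨w, -, hdist, rfl⟩
    exact ⟨w, by simp, hdist, rfl⟩

lemma exists_naturalOp_iterSubdivChain_ofSimplex_mem_sup {U V : Set X} (hU : IsOpen U)
    (hV : IsOpen V) (σ : SSimplex X k) (hσ : Set.range σ ⊆ U ∪ V) :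
    ∃ s, naturalOp (iterSubdivChain R s k) (ofSimplex R σ) ∈
      chainsIn R X U k ⊔ chainsIn R X V k := by
  obtain ⟨δ, hδ, hleb⟩ := lebesgue_number_lemma_of_metric (s := (Set.univ : Set (Δ k)))
    (c := fun b : Bool => σ ⁻¹' (bif b then U else V)) isCompact_univ
    (fun b => by cases b <;> simp [hU.preimage σ.continuous, hV.preimage σ.continuous])
    (fun x _ => Set.mem_iUnion.2 ((hσ ⟨x, rfl⟩).elim (⟨true, ·⟩) (⟨false, ·⟩)))
  have hratio : (k : ℝ) / (k + 1) < 1 := (div_lt_one (by positivity)).2 (lt_add_one _)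
  obtain ⟨s, hs⟩ := exists_pow_lt_of_lt_one hδ hratio
  refine ⟨s, ?_⟩
  rw [naturalOp_ofSimplex]
  refine map_mem_of_mem_span _ ?_ (iterSubdivChain_mem_affineChainsLE (R := R) s k)
  rintro _ ⟨w, -, hw, rfl⟩
  rw [pushforward_ofSimplex]
  have hball (x) : affineSimplex (convex_stdSimplex ℝ (Fin (k + 1))) w x ∈
      Metric.ball (w 0) δ :=
    affineSimplex_mem_of_convex _ (convex_ball (w 0).1 δ) (fun i => (hw i 0).trans_lt hs) x
  obtain ⟨b, hb⟩ := hleb (w 0) trivial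
  cases b
  · exact Submodule.mem_sup_right (ofSimplex_mem_chainsIn
      (Set.range_subset_iff.2 fun x => hb (hball x)))
  · exact Submodule.mem_sup_left (ofSimplex_mem_chainsIn
      (Set.range_subset_iff.2 fun x => hb (hball x)))

lemma naturalOp_mem_sup_chainsIn (a : SChain R (Δ k) m) {U V : Set X} {c : SChain R X k}
    (h : c ∈ chainsIn R X U k ⊔ chainsIn R X V k) :
    naturalOp a c ∈ chainsIn R X U m ⊔ chainsIn R X V m := by
  obtain ⟨x, hx, y, hy, rfl⟩ := Submodule.mem_sup.1 h
  rw [map_add]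
  exact Submodule.add_mem_sup (naturalOp_mem_chainsIn a hx) (naturalOp_mem_chainsIn a hy)

lemma eventually_naturalOp_iterSubdivChain_mem_sup {U V : Set X} (hU : IsOpen U) (hV : IsOpen V)
    {c : SChain R X k} (hc : c ∈ chainsIn R X (U ∪ V) k) :
    ∀ᶠ s in Filter.atTop, naturalOp (iterSubdivChain R s k) c ∈
      chainsIn R X U k ⊔ chainsIn R X V k := by
  rw [chainsIn_eq_span] at hc
  induction hc using Submodule.span_induction with
  | mem x h =>
    obtain ⟨σ, hσ, rfl⟩ := h
    obtain ⟨s, hs⟩ := exists_naturalOp_iterSubdivChain_ofSimplex_mem_sup (R := R) hU hV σ hσ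
    filter_upwards [Filter.eventually_ge_atTop s] with t hst
    obtain ⟨u, rfl⟩ := Nat.exists_eq_add_of_le' hst
    rw [naturalOp_iterSubdivChain, Function.iterate_add_apply, ← naturalOp_iterSubdivChain,
      ← naturalOp_iterSubdivChain]
    exact naturalOp_mem_sup_chainsIn _ hs
  | zero => exact Filter.Eventually.of_forall fun s => by simp
  | add a b _ _ ha hb =>
    filter_upwards [ha, hb] with s hsa hsb
    rw [map_add]
    exact add_mem hsa hsb
  | smul a x _ hx =>
    filter_upwards [hx] with s hs
    rw [map_smul]
    exact Submodule.smul_mem _ _ hs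

end Subdivision

/-! ### Mayer–Vietoris arguments and vanishing of local homology -/

section MayerVietoris

variable {Y : Type} [TopologicalSpace Y] {k : ℕ} {A B U V : Set X}

lemma mem_relBdries_iff {v : SChain R X (k + 1)} : v ∈ relBdries R X A k ↔
    ∃ a, ∃ u ∈ chainsIn R X A (k + 1), bdry R X (k + 1) a + u = v := by
  simp only [relBdries, Submodule.mem_sup, LinearMap.mem_range, exists_exists_eq_and]

lemma mem_relCycles_iff {v : SChain R X (k + 1)} : v ∈ relCycles R X A k ↔
    bdry R X k v ∈ chainsIn R X A k := Iff.rfl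

lemma relBdries_mono (h : A ⊆ B) : relBdries R X A k ≤ relBdries R X B k :=
  sup_le_sup_left (chainsIn_mono h) _

lemma relCycles_mono (h : A ⊆ B) : relCycles R X A k ≤ relCycles R X B k :=
  Submodule.comap_mono (chainsIn_mono h)

lemma bdry_mem_relBdries (a : SChain R X (k + 2)) : bdry R X (k + 1) a ∈ relBdries R X A k :=
  Submodule.mem_sup_left ⟨a, rfl⟩

lemma chainsIn_le_relBdries : chainsIn R X A (k + 1) ≤ relBdries R X A k := le_sup_right

lemma relBdries_le_relCycles : relBdries R X A k ≤ relCycles R X A k := by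
  intro v hv
  obtain ⟨a, u, hu, rfl⟩ := mem_relBdries_iff.1 hv
  rw [mem_relCycles_iff, map_add, bdry_bdry, zero_add]
  exact bdry_mem_chainsIn hu

lemma pushforward_mem_relBdries {e : C(X, Y)} {B : Set Y} (h : Set.MapsTo e A B)
    {v : SChain R X (k + 1)} (hv : v ∈ relBdries R X A k) :
    pushforward e v ∈ relBdries R Y B k := by
  obtain ⟨a, u, hu, rfl⟩ := mem_relBdries_iff.1 hv
  rw [map_add, ← bdry_pushforward]
  exact add_mem (bdry_mem_relBdries _) (chainsIn_le_relBdries (pushforward_mem_chainsIn h hu))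

lemma pushforward_mem_relCycles {e : C(X, Y)} {B : Set Y} (h : Set.MapsTo e A B)
    {v : SChain R X (k + 1)} (hv : v ∈ relCycles R X A k) :
    pushforward e v ∈ relCycles R Y B k := by
  rw [mem_relCycles_iff, bdry_pushforward]
  exact pushforward_mem_chainsIn h hv

lemma IsNaturalChainMap.naturalOp_sub_self_mem_relBdries {f : ∀ k, SChain R (Δ k) k}
    (hf : IsNaturalChainMap f) {v : SChain R X (k + 1)} (hv : v ∈ relCycles R X A k) :
    naturalOp (f (k + 1)) v - v ∈ relBdries R X A k := by
  rw [hf.naturalOp_sub_self]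
  exact add_mem (bdry_mem_relBdries _) (chainsIn_le_relBdries (naturalOp_mem_chainsIn _ hv))

lemma IsNaturalChainMap.mem_relBdries_of_naturalOp {f : ∀ k, SChain R (Δ k) k}
    (hf : IsNaturalChainMap f) {v : SChain R X (k + 1)} (hv : v ∈ relCycles R X A k)
    (h : naturalOp (f (k + 1)) v ∈ relBdries R X A k) : v ∈ relBdries R X A k := by
  simpa using sub_mem h (hf.naturalOp_sub_self_mem_relBdries hv)

lemma exists_isNaturalChainMap_add_eq (hU : IsOpen U) (hV : IsOpen V) {c : SChain R X k}
    (hc : c ∈ chainsIn R X (U ∪ V) k) :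
    ∃ f : ∀ k, SChain R (Δ k) k, IsNaturalChainMap f ∧
      ∃ x ∈ chainsIn R X U k, ∃ y ∈ chainsIn R X V k, x + y = naturalOp (f k) c := by
  obtain ⟨s, hs⟩ := (eventually_naturalOp_iterSubdivChain_mem_sup hU hV hc).exists
  exact ⟨_, isNaturalChainMap_iterSubdivChain s, Submodule.mem_sup.1 hs⟩

lemma mem_relBdries_inter (hU : IsOpen U) (hV : IsOpen V) {v : SChain R X (k + 1)}
    (hvU : v ∈ relBdries R X U k) (hvV : v ∈ relBdries R X V k)
    (hUV : relCycles R X (U ∪ V) (k + 1) ≤ relBdries R X (U ∪ V) (k + 1)) :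
    v ∈ relBdries R X (U ∩ V) k := by
  have hv : v ∈ relCycles R X (U ∩ V) k :=
    mem_chainsIn_inter (relBdries_le_relCycles hvU) (relBdries_le_relCycles hvV)
  obtain ⟨a, u, hu, hau⟩ := mem_relBdries_iff.1 hvU
  obtain ⟨b, w, hw, hbw⟩ := mem_relBdries_iff.1 hvV
  have hbdry : bdry R X (k + 1) (a - b) = w - u := by
    rw [map_sub, eq_sub_of_add_eq hau, eq_sub_of_add_eq hbw]
    abel
  have hab : a - b ∈ relCycles R X (U ∪ V) (k + 1) := by
    rw [mem_relCycles_iff, hbdry]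
    exact sub_mem (chainsIn_mono Set.subset_union_right hw)
      (chainsIn_mono Set.subset_union_left hu)
  obtain ⟨e, x, hx, hex⟩ := mem_relBdries_iff.1 (hUV hab)
  obtain ⟨f, hf, x₁, hx₁, x₂, hx₂, hsum⟩ := exists_isNaturalChainMap_add_eq hU hV hx
  have hxbdry : bdry R X (k + 1) x = w - u := by
    rw [eq_sub_of_add_eq' hex, map_sub, hbdry, bdry_bdry, sub_zero]
  have hcommon : naturalOp (f (k + 1)) u + bdry R X (k + 1) x₁ =
      naturalOp (f (k + 1)) w - bdry R X (k + 1) x₂ := by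
    rw [eq_sub_iff_add_eq, add_assoc, ← map_add, hsum, hf.bdry_naturalOp, hxbdry, ← map_add,
      add_sub_cancel]
  refine hf.mem_relBdries_of_naturalOp hv (mem_relBdries_iff.2
    ⟨naturalOp (f (k + 2)) a - x₁, naturalOp (f (k + 1)) u + bdry R X (k + 1) x₁,
      mem_chainsIn_inter ?_ ?_, ?_⟩)
  · exact add_mem (naturalOp_mem_chainsIn _ hu) (bdry_mem_chainsIn hx₁)
  · rw [hcommon]
    exact sub_mem (naturalOp_mem_chainsIn _ hw) (bdry_mem_chainsIn hx₂)
  · rw [map_sub, hf.bdry_naturalOp, ← hau, map_add]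
    abel

lemma bdry_mem_chainsIn_of_pushforward {e : C(X, Y)} (he : Topology.IsEmbedding e)
    {c : SChain R X (k + 1)}
    (h : bdry R Y k (pushforward e c) ∈ chainsIn R Y (e '' A) k) :
    bdry R X k c ∈ chainsIn R X A k := by
  obtain ⟨b, hb, hbc⟩ := exists_pushforward_eq he h
  rw [bdry_pushforward] at hbc
  rwa [← pushforward_injective he.injective hbc]

lemma exists_relCycle_sub_pushforward_mem_relBdries {e : C(X, Y)}
    (he : Topology.IsOpenEmbedding e) (hA : IsClosed (e '' A)) {v : SChain R Y (k + 1)}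
    (hv : v ∈ relCycles R Y (e '' A)ᶜ k) :
    ∃ c ∈ relCycles R X Aᶜ k, v - pushforward e c ∈ relBdries R Y (e '' A)ᶜ k := by
  have hcover : Set.range e ∪ (e '' A)ᶜ = Set.univ :=
    Set.eq_univ_of_forall fun x => (em (x ∈ e '' A)).imp (fun h => Set.image_subset_range e A h) id
  obtain ⟨f, hf, x, hx, y, hy, hxy⟩ := exists_isNaturalChainMap_add_eq he.isOpen_range
    hA.isOpen_compl (c := v) (hcover ▸ mem_chainsIn_univ v)
  obtain ⟨c, -, rfl⟩ := exists_pushforward_eq he.isEmbedding (Set.image_univ ▸ hx)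
  have hc : pushforward e c ∈ relCycles R Y (e '' A)ᶜ k := by
    rw [mem_relCycles_iff, eq_sub_of_add_eq hxy, map_sub, hf.bdry_naturalOp]
    exact sub_mem (naturalOp_mem_chainsIn _ hv) (bdry_mem_chainsIn hy)
  refine ⟨c, bdry_mem_chainsIn_of_pushforward (A := Aᶜ) he.isEmbedding ?_, ?_⟩
  · refine chainsIn_mono ?_ (mem_chainsIn_inter hc (bdry_mem_chainsIn hx))
    rintro _ ⟨hxA, x, rfl⟩
    exact ⟨x, fun hx => hxA ⟨x, hx, rfl⟩, rfl⟩
  · have hsplit : v - pushforward e c = y - (naturalOp (f (k + 1)) v - v) := by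
      rw [← hxy]
      abel
    rw [hsplit]
    exact sub_mem (chainsIn_le_relBdries hy) (hf.naturalOp_sub_self_mem_relBdries hv)

/-- The relative homology `H_j(X, X \ A)` vanishes for all `j > N`. -/
def LocalHomologyVanishesAbove (R : Type) [Ring R] {X : Type} [TopologicalSpace X] (N : ℕ)
    (A : Set X) : Prop :=
  ∀ j ≥ N, relCycles R X Aᶜ j ≤ relBdries R X Aᶜ j

namespace LocalHomologyVanishesAbove

variable {N : ℕ}

lemma empty : LocalHomologyVanishesAbove R N (∅ : Set X) := fun _ _ v _ =>
  chainsIn_le_relBdries (Set.compl_empty ▸ mem_chainsIn_univ v)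

lemma mono_degree {N' : ℕ} (hA : LocalHomologyVanishesAbove R N A) (h : N ≤ N') :
    LocalHomologyVanishesAbove R N' A :=
  fun j hj => hA j (h.trans hj)

lemma union (hA : LocalHomologyVanishesAbove R N A) (hB : LocalHomologyVanishesAbove R N B)
    (hAB : LocalHomologyVanishesAbove R N (A ∩ B)) (hAcl : IsClosed A) (hBcl : IsClosed B) :
    LocalHomologyVanishesAbove R N (A ∪ B) := by
  intro j hj v hv
  rw [Set.compl_union] at hv ⊢
  refine mem_relBdries_inter hAcl.isOpen_compl hBcl.isOpen_compl
    (hA j hj (relCycles_mono Set.inter_subset_left hv))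
    (hB j hj (relCycles_mono Set.inter_subset_right hv)) ?_
  rw [← Set.compl_inter]
  exact hAB (j + 1) (hj.trans (Nat.le_succ j))

lemma biUnion {P : Set X → Prop} (hcl : ∀ A, P A → IsClosed A)
    (hP : ∀ A, P A → LocalHomologyVanishesAbove R N A) (hinter : ∀ A B, P A → P B → P (A ∩ B))
    {ι : Type*} (S : Finset ι) (A : ι → Set X) (hA : ∀ i ∈ S, P (A i)) :
    LocalHomologyVanishesAbove R N (⋃ i ∈ S, A i) := by
  classical
  induction S using Finset.induction_on generalizing A with
  | empty => simpa using empty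
  | insert i S _ ih =>
    have hS : ∀ j ∈ S, P (A j) := fun j hj => hA j (Finset.mem_insert_of_mem hj)
    have hi : P (A i) := hA i (Finset.mem_insert_self _ _)
    rw [Finset.set_biUnion_insert]
    refine union (hP _ hi) (ih A hS) ?_ (hcl _ hi)
      (isClosed_biUnion_finset fun j hj => hcl _ (hS j hj))
    rw [Set.inter_iUnion₂]
    exact ih (fun j => A i ∩ A j) fun j hj => hinter _ _ hi (hS j hj)

lemma of_forall_isOpen [T2Space X]
    (h : ∀ O, IsOpen O → A ⊆ O → ∃ F, A ⊆ F ∧ F ⊆ O ∧ LocalHomologyVanishesAbove R N F) :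
    LocalHomologyVanishesAbove R N A := by
  intro j hj v hv
  obtain ⟨B, hBA, hB, hvB⟩ := exists_isCompact_subset_mem_chainsIn hv
  obtain ⟨F, hAF, hFB, hF⟩ := h Bᶜ hB.isClosed.isOpen_compl (Set.subset_compl_comm.1 hBA)
  exact relBdries_mono (Set.compl_subset_compl.2 hAF)
    (hF j hj (chainsIn_mono (Set.subset_compl_comm.1 hFB) hvB))

lemma image [T2Space Y] (h : LocalHomologyVanishesAbove R N A) {e : C(X, Y)}
    (he : Topology.IsOpenEmbedding e) (hA : IsCompact A) :
    LocalHomologyVanishesAbove R N (e '' A) := by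
  intro j hj v hv
  obtain ⟨c, hc, hvc⟩ := exists_relCycle_sub_pushforward_mem_relBdries he
    (hA.image e.continuous).isClosed hv
  have hmaps : Set.MapsTo e Aᶜ (e '' A)ᶜ := fun x hx =>
    he.injective.mem_set_image.not.2 hx
  simpa using add_mem hvc (pushforward_mem_relBdries hmaps (h j hj hc))

end LocalHomologyVanishesAbove

/-- The homology of the subspace `A` vanishes in degree `j`; in degree `0` this is the unreduced
homology. -/
def HomologyVanishesAt (R : Type) [Ring R] {X : Type} [TopologicalSpace X] (A : Set X) : ℕ → Prop
  | 0 => ∀ c ∈ chainsIn R X A 0, ∃ b ∈ chainsIn R X A 1, bdry R X 0 b = c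
  | j + 1 => ∀ c ∈ chainsIn R X A (j + 1), bdry R X j c = 0 →
      ∃ b ∈ chainsIn R X A (j + 2), bdry R X (j + 1) b = c

namespace HomologyVanishesAt

variable {j : ℕ}

lemma empty (j : ℕ) : HomologyVanishesAt R (∅ : Set X) j := by
  cases j with
  | zero => exact fun c hc =>
      ⟨0, zero_mem _, by rw [eq_zero_of_mem_chainsIn_empty hc, map_zero]⟩
  | succ j => exact fun c hc _ =>
      ⟨0, zero_mem _, by rw [eq_zero_of_mem_chainsIn_empty hc, map_zero]⟩

lemma exists_bdry_eq (h : HomologyVanishesAt R A j) {x : SChain R X (j + 1)}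
    (hx : bdry R X j x ∈ chainsIn R X A j) :
    ∃ y ∈ chainsIn R X A (j + 1), bdry R X j y = bdry R X j x := by
  cases j with
  | zero => exact h _ hx
  | succ j => exact h _ hx (bdry_bdry _)

lemma union (h₁ : HomologyVanishesAt R U (j + 1)) (h₂ : HomologyVanishesAt R V (j + 1))
    (h₃ : HomologyVanishesAt R (U ∩ V) j) (hU : IsOpen U) (hV : IsOpen V) :
    HomologyVanishesAt R (U ∪ V) (j + 1) := by
  intro c hc hcycle
  obtain ⟨f, hf, x, hx, y, hy, hxy⟩ := exists_isNaturalChainMap_add_eq hU hV hc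
  have hneg : bdry R X j x = -bdry R X j y := by
    rw [eq_neg_iff_add_eq_zero, ← map_add, hxy, hf.bdry_naturalOp, hcycle, map_zero]
  obtain ⟨z, hz, hzx⟩ := h₃.exists_bdry_eq (x := x) (mem_chainsIn_inter (bdry_mem_chainsIn hx)
    (by rw [hneg]; exact neg_mem (bdry_mem_chainsIn hy)))
  obtain ⟨b₁, hb₁, hb₁'⟩ := h₁ (x - z)
    (sub_mem hx (chainsIn_mono Set.inter_subset_left hz)) (by rw [map_sub, hzx, sub_self])
  obtain ⟨b₂, hb₂, hb₂'⟩ := h₂ (y + z)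
    (add_mem hy (chainsIn_mono Set.inter_subset_right hz))
    (by rw [map_add, hzx, hneg, add_neg_cancel])
  refine ⟨b₁ + b₂ - naturalOp (acyclicHomotopy f (j + 1)) c, sub_mem (add_mem
    (chainsIn_mono Set.subset_union_left hb₁) (chainsIn_mono Set.subset_union_right hb₂))
    (naturalOp_mem_chainsIn _ hc), ?_⟩
  have hhomotopy := hf.naturalOp_sub_self _ c
  rw [hcycle, map_zero, add_zero] at hhomotopy
  rw [map_sub, map_add, hb₁', hb₂', ← hhomotopy, ← hxy]
  abel

lemma of_convex {E : Type} [AddCommGroup E] [Module ℝ E] [TopologicalSpace E]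
    [IsTopologicalAddGroup E] [ContinuousSMul ℝ E] {C : Set E} (hC : Convex ℝ C) (j : ℕ) :
    HomologyVanishesAt R C (j + 1) := by
  rcases C.eq_empty_or_nonempty with rfl | ⟨p, hp⟩
  · exact empty _
  intro c hc hcycle
  let incl : C(C, E) := ⟨Subtype.val, continuous_subtype_val⟩
  have hincl : Topology.IsEmbedding incl := Topology.IsEmbedding.subtypeVal
  obtain ⟨c, -, rfl⟩ := exists_pushforward_eq hincl (A := Set.univ) (c := c)
    (by simpa [incl] using hc)
  rw [bdry_pushforward, map_eq_zero_iff _ (pushforward_injective hincl.injective)] at hcycle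
  refine ⟨pushforward incl ((Contraction.ofConvex hC ⟨p, hp⟩).cone (j + 1) c),
    pushforward_mem_chainsIn (A := Set.univ) (fun x _ => x.2) (mem_chainsIn_univ _), ?_⟩
  rw [bdry_pushforward, Contraction.bdry_cone_of_bdry_eq_zero _ hcycle]

lemma isOpen_exists_lt_or_lt {ι : Type} (S : Finset ι) (a b : ι → ℝ) :
    IsOpen {x : ι → ℝ | ∃ s ∈ S, x s < a s ∨ b s < x s} := by
  simp only [Set.ofPred_exists, Set.ofPred_and, Set.ofPred_or]
  exact isOpen_iUnion fun s => isOpen_const.inter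
    ((isOpen_lt (continuous_apply s) continuous_const).union
      (isOpen_lt continuous_const (continuous_apply s)))

lemma inter_exists_lt_or_lt {ι : Type} {a b : ι → ℝ} (hab : a ≤ b) (S : Finset ι)
    {C : Set (ι → ℝ)} (hC : Convex ℝ C) (hCo : IsOpen C) (hj : S.card ≤ j) :
    HomologyVanishesAt R (C ∩ {x | ∃ s ∈ S, x s < a s ∨ b s < x s}) j := by
  classical
  induction S using Finset.induction_on generalizing C j with
  | empty => simpa using empty j
  | insert s S hs ih =>
    rw [Finset.card_insert_of_notMem hs] at hj
    obtain ⟨j, rfl⟩ := Nat.exists_eq_add_of_le' (Nat.le_of_add_left_le hj)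
    set O := {x : ι → ℝ | ∃ s ∈ S, x s < a s ∨ b s < x s} with hO
    have hOo : IsOpen O := isOpen_exists_lt_or_lt S a b
    have hproj : IsLinearMap ℝ fun x : ι → ℝ => x s := ⟨fun _ _ => rfl, fun _ _ => rfl⟩
    have hlt : IsOpen {x : ι → ℝ | x s < a s} := isOpen_lt (continuous_apply s) continuous_const
    have hgt : IsOpen {x : ι → ℝ | b s < x s} := isOpen_lt continuous_const (continuous_apply s)
    have hClt := hC.inter (convex_halfSpace_lt hproj (a s))
    have hCgt := hC.inter (convex_halfSpace_gt hproj (b s))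
    have hunion_lt : HomologyVanishesAt R (C ∩ O ∪ C ∩ {x | x s < a s}) (j + 1) := by
      refine union (ih hC hCo (by omega)) (of_convex hClt j) ?_ (hCo.inter hOo) (hCo.inter hlt)
      rw [← Set.inter_inter_distrib_left, Set.inter_comm O, ← Set.inter_assoc]
      exact ih hClt (hCo.inter hlt) (by omega)
    have hdisjoint : (C ∩ O ∪ C ∩ {x | x s < a s}) ∩ (C ∩ {x | b s < x s}) =
        C ∩ {x | b s < x s} ∩ O := by
      ext x
      have : x s < a s → ¬ b s < x s := fun h => (h.trans_le (hab s)).not_gt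
      simp only [Set.mem_inter_iff, Set.mem_union, Set.mem_ofPred_eq]
      tauto
    have hall : HomologyVanishesAt R
        (C ∩ O ∪ C ∩ {x | x s < a s} ∪ C ∩ {x | b s < x s}) (j + 1) := by
      refine union hunion_lt (of_convex hCgt j) ?_
        ((hCo.inter hOo).union (hCo.inter hlt)) (hCo.inter hgt)
      rw [hdisjoint]
      exact ih hCgt (hCo.inter hgt) (by omega)
    convert hall using 1
    ext x
    simp only [Finset.exists_mem_insert, hO, Set.mem_inter_iff, Set.mem_union, Set.mem_ofPred_eq,
      ← and_or_left, or_assoc, or_comm (b := ∃ t ∈ S, _)]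

end HomologyVanishesAt

namespace LocalHomologyVanishesAbove

lemma Icc {q : ℕ} (a b : Fin q → ℝ) : LocalHomologyVanishesAbove R q (Set.Icc a b) := by
  by_cases hab : a ≤ b
  · intro j hj v hv
    have hcompl : Set.univ ∩ {x : Fin q → ℝ | ∃ s ∈ Finset.univ, x s < a s ∨ b s < x s} =
        (Set.Icc a b)ᶜ := by
      ext x
      simp only [Set.univ_inter, Set.mem_ofPred_eq, Set.mem_compl_iff, Set.mem_Icc, Pi.le_def,
        ← forall_and, not_forall, not_and_or, not_le, Finset.mem_univ, true_and]
    have hvanish := HomologyVanishesAt.inter_exists_lt_or_lt (R := R) hab Finset.univ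
      convex_univ isOpen_univ (by simpa using hj)
    rw [hcompl] at hvanish
    obtain ⟨y, hy, hyv⟩ := hvanish.exists_bdry_eq hv
    obtain ⟨b, -, hb⟩ := HomologyVanishesAt.of_convex convex_univ j (v - y)
      (mem_chainsIn_univ _) (by rw [map_sub, hyv, sub_self])
    exact mem_relBdries_iff.2 ⟨b, y, hy, by rw [hb, sub_add_cancel]⟩
  · rw [Set.Icc_eq_empty hab]
    exact empty

lemma of_isCompact_pi {q : ℕ} {A : Set (Fin q → ℝ)} (hA : IsCompact A) :
    LocalHomologyVanishesAbove R q A := by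
  refine of_forall_isOpen fun O hO hAO => ?_
  have hball : ∀ x ∈ A, ∃ ε > 0, Metric.closedBall x ε ⊆ O := fun x hx =>
    Metric.nhds_basis_closedBall.mem_iff.1 (hO.mem_nhds (hAO hx))
  choose! ε hε hεO using hball
  obtain ⟨t, htA, hcover⟩ := hA.elim_nhds_subcover (fun x => Metric.closedBall x (ε x))
    fun x hx => Metric.closedBall_mem_nhds x (hε x hx)
  refine ⟨_, hcover, Set.iUnion₂_subset fun x hx => hεO x (htA x hx), ?_⟩
  refine biUnion (P := fun A => ∃ a b, A = Set.Icc a b) ?_ ?_ ?_ t _ fun x hx => ?_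
  · rintro _ ⟨a, b, rfl⟩
    exact isClosed_Icc
  · rintro _ ⟨a, b, rfl⟩
    exact Icc a b
  · rintro _ _ ⟨a, b, rfl⟩ ⟨c, d, rfl⟩
    exact ⟨_, _, Set.Icc_inter_Icc⟩
  · refine ⟨fun i => x i - ε x, fun i => x i + ε x, ?_⟩
    rw [closedBall_pi _ (hε x (htA x hx)).le, ← Set.pi_univ_Icc]
    simp only [Real.closedBall_eq_Icc]

lemma of_isCompact [T2Space X] {N : ℕ} (hA : IsCompact A)
    (h : ∀ x ∈ A, ∃ q ≤ N, ∃ e : C(Fin q → ℝ, X), Topology.IsOpenEmbedding e ∧ x ∈ Set.range e) :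
    LocalHomologyVanishesAbove R N A := by
  have hchart (x : A) : ∃ q ≤ N, ∃ e : C(Fin q → ℝ, X), Topology.IsOpenEmbedding e ∧
      x.1 ∈ Set.range e := h x x.2
  choose q hq e he hx using hchart
  obtain ⟨t, ht⟩ := hA.elim_finite_subcover (fun x : A => Set.range (e x))
    (fun x => (he x).isOpen_range) fun x hxA => Set.mem_iUnion.2 ⟨⟨x, hxA⟩, hx ⟨x, hxA⟩⟩
  obtain ⟨B, hBcompact, hBrange, hAB⟩ := hA.finite_compact_cover t
    (fun x : A => Set.range (e x)) (fun x _ => (he x).isOpen_range) ht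
  rw [hAB]
  refine biUnion (P := fun A => IsCompact A ∧ ∃ q ≤ N, ∃ e : C(Fin q → ℝ, X),
    Topology.IsOpenEmbedding e ∧ A ⊆ Set.range e) (fun A hA => hA.1.isClosed) ?_ ?_ t _
    fun x _ => ⟨hBcompact x, q x, hq x, e x, he x, hBrange x⟩
  · rintro A ⟨hA, q, hq, e, he, hAe⟩
    have hpre : IsCompact (e ⁻¹' A) := he.isInducing.isCompact_preimage' hA hAe
    rw [← Set.image_preimage_eq_of_subset hAe]
    exact ((of_isCompact_pi hpre).mono_degree hq).image he hpre
  · rintro A B ⟨hA, q, hq, e, he, hAe⟩ ⟨hB, -⟩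
    exact ⟨hA.inter hB, q, hq, e, he, Set.inter_subset_left.trans hAe⟩

end LocalHomologyVanishesAbove

end MayerVietoris

/-! ### Local homology at interior points -/

section Injectivity

variable {Y : Type} [TopologicalSpace Y] {k : ℕ}

lemma mem_relBdries_compl_biUnion [T2Space X] {ι : Type} {O : Set X}
    (hO : ∀ x ∈ O, ∃ e : C(Fin (k + 1) → ℝ, X), Topology.IsOpenEmbedding e ∧ x ∈ Set.range e)
    {v : SChain R X (k + 1)} (S : Finset ι) (A : ι → Set X)
    (hA : ∀ i, IsCompact (A i)) (hAO : ∀ i ∈ S, A i ⊆ O)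
    (hv : ∀ i ∈ S, v ∈ relBdries R X (A i)ᶜ k) :
    v ∈ relBdries R X (⋃ i ∈ S, A i)ᶜ k := by
  classical
  induction S using Finset.induction_on with
  | empty => simpa using chainsIn_le_relBdries (mem_chainsIn_univ v)
  | insert i S _ ih =>
    rw [Finset.set_biUnion_insert, Set.compl_union]
    have hS := ih (fun j hj => hAO j (Finset.mem_insert_of_mem hj))
      (fun j hj => hv j (Finset.mem_insert_of_mem hj))
    have hcompact : IsCompact (⋃ j ∈ S, A j) := S.isCompact_biUnion fun j _ => hA j
    refine mem_relBdries_inter (hA i).isClosed.isOpen_compl hcompact.isClosed.isOpen_compl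
      (hv i (Finset.mem_insert_self _ _)) hS ?_
    rw [← Set.compl_inter]
    refine LocalHomologyVanishesAbove.of_isCompact (N := k + 1) ((hA i).inter hcompact)
      (fun x hx => ?_) (k + 1) le_rfl
    exact ⟨k + 1, le_rfl, hO x (hAO i (Finset.mem_insert_self _ _) hx.1)⟩

lemma mem_relBdries_compl_of_isCompact [T2Space X] {A : Set X}
    (hchart : ∀ x ∈ A, ∃ e : C(Fin (k + 1) → ℝ, X), Topology.IsOpenEmbedding e ∧ x ∈ Set.range e)
    (hA : IsCompact A) {v : SChain R X (k + 1)}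
    (hv : ∀ x ∈ A, v ∈ relBdries R X {x}ᶜ k) : v ∈ relBdries R X Aᶜ k := by
  have hclosed (x : A) : ∃ C : Set X, x.1 ∉ C ∧ IsClosed C ∧ v ∈ relBdries R X C k := by
    obtain ⟨a, u, hu, rfl⟩ := mem_relBdries_iff.1 (hv x x.2)
    obtain ⟨C, hCx, hC, huC⟩ := exists_isCompact_subset_mem_chainsIn hu
    exact ⟨C, fun hx => hCx hx rfl, hC.isClosed, mem_relBdries_iff.2 ⟨a, u, huC, rfl⟩⟩
  choose C hxC hC hvC using hclosed
  obtain ⟨t, ht⟩ := hA.elim_finite_subcover (fun x : A => (C x)ᶜ)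
    (fun x => (hC x).isOpen_compl) (fun x hx => Set.mem_iUnion.2 ⟨⟨x, hx⟩, hxC ⟨x, hx⟩⟩)
  obtain ⟨B, hB, hBC, hAB⟩ := hA.finite_compact_cover t (fun x : A => (C x)ᶜ)
    (fun x _ => (hC x).isOpen_compl) ht
  have hBA (i : A) (hi : i ∈ t) : B i ⊆ A := hAB ▸ Set.subset_biUnion_of_mem (u := B) hi
  rw [hAB]
  exact mem_relBdries_compl_biUnion hchart t B hB hBA
    fun i _ => relBdries_mono (Set.subset_compl_comm.1 (hBC i)) (hvC i)

lemma exists_homotopy_extend_by_id [T2Space X] {e : C(Y, X)} (he : Topology.IsOpenEmbedding e)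
    {A : Set Y} (hA : IsCompact A) (F : C(Y × unitInterval, Y))
    (hF : ∀ p ∉ A, ∀ t, F (p, t) = p) :
    ∃ G : C(X × unitInterval, X), (∀ p t, G (e p, t) = e (F (p, t))) ∧
      ∀ x ∉ Set.range e, ∀ t, G (x, t) = x := by
  classical
  let g : X × unitInterval → X :=
    fun z => if h : z.1 ∈ Set.range e then e (F (h.choose, z.2)) else z.1
  have hg_range (p : Y) (t : unitInterval) : g (e p, t) = e (F (p, t)) := by
    have h : e p ∈ Set.range e := ⟨p, rfl⟩
    simp only [g, dif_pos h]
    rw [he.injective h.choose_spec]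
  have hg_compl (x : X) (hx : x ∉ Set.range e) (t : unitInterval) : g (x, t) = x := dif_neg hx
  have hg_fst (z : X × unitInterval) (hz : z.1 ∈ (e '' A)ᶜ) : g z = z.1 := by
    by_cases hx : z.1 ∈ Set.range e
    · obtain ⟨p, hp⟩ := hx
      rw [← Prod.mk.eta (p := z), ← hp, hg_range, hF p fun hpA => hz ⟨p, hpA, hp⟩]
    · exact hg_compl _ hx _
  have hg : Continuous g := by
    refine continuous_iff_continuousAt.2 fun ⟨x, t⟩ => ?_
    by_cases hx : x ∈ Set.range e
    · obtain ⟨p, rfl⟩ := hx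
      have hcomp : g ∘ Prod.map e id = e ∘ F := funext fun z => hg_range z.1 z.2
      refine (he.prodMap (.id (X := unitInterval))).continuousAt_iff (x := (p, t)) |>.1 ?_
      rw [hcomp]
      exact (e.continuous.comp F.continuous).continuousAt
    · have hopen : IsOpen (Prod.fst ⁻¹' (e '' A)ᶜ : Set (X × unitInterval)) :=
        (hA.image e.continuous).isClosed.isOpen_compl.preimage continuous_fst
      have hmem : (x, t) ∈ (Prod.fst ⁻¹' (e '' A)ᶜ : Set (X × unitInterval)) :=
        fun h => hx (Set.image_subset_range _ _ h)
      exact continuous_fst.continuousAt.congr <|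
        Filter.mem_of_superset (hopen.mem_nhds hmem) fun z hz => (hg_fst z hz).symm
  exact ⟨⟨g, hg⟩, hg_range, hg_compl⟩

-- The displacement is damped by a tent function of slope `1 / 2`, so no other point reaches `b`.
lemma exists_homotopy_push_point {E : Type*} [NormedAddCommGroup E] [NormedSpace ℝ E] {a b : E}
    (hab : a ≠ b) :
    ∃ F : C(E × unitInterval, E), (∀ p, F (p, 0) = p) ∧
      (∀ p ∉ Metric.closedBall a (2 * ‖b - a‖), ∀ t, F (p, t) = p) ∧ ∀ p, F (p, 1) = b → p = a := by
  have hd : 0 < ‖b - a‖ := norm_pos_iff.2 (sub_ne_zero.2 hab.symm)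
  let tent : E → ℝ := fun p => max 0 (1 - ‖p - a‖ / (2 * ‖b - a‖))
  have htent : Continuous tent := by fun_prop
  refine ⟨⟨fun z => z.1 + (z.2.1 * tent z.1) • (b - a), by fun_prop⟩, fun p => by simp,
    fun p hp t => ?_, fun p hp => ?_⟩
  · have htent_p : tent p = 0 := by
      rw [Metric.mem_closedBall, dist_eq_norm, not_le] at hp
      refine max_eq_left ?_
      rw [sub_nonpos, one_le_div (by positivity)]
      exact hp.le
    simp [htent_p]
  · have hp : p + tent p • (b - a) = b := by simpa using hp
    have htent_nonneg : 0 ≤ tent p := le_max_left _ _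
    have htent_le : tent p ≤ 1 := max_le zero_le_one (sub_le_self _ (by positivity))
    have hsub : p - a = (1 - tent p) • (b - a) := by
      rw [sub_smul, one_smul, ← sub_eq_of_eq_add' hp.symm]
      abel_nf
    have hnorm : ‖p - a‖ / (2 * ‖b - a‖) = (1 - tent p) / 2 := by
      rw [hsub, norm_smul, Real.norm_of_nonneg (by linarith)]
      field_simp
    have htent_eq : tent p = max 0 (1 - (1 - tent p) / 2) := by rw [← hnorm]
    rw [max_eq_right (by linarith)] at htent_eq
    have hone : tent p = 1 := by linarith
    rwa [hone, sub_self, zero_smul, sub_eq_zero] at hsub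

lemma mem_relBdries_compl_singleton_of_chart [T2Space X] {N : ℕ} {e : C(Fin N → ℝ, X)}
    (he : Topology.IsOpenEmbedding e) (a b : Fin N → ℝ) {v : SChain R X (k + 1)}
    (hv : bdry R X k v = 0) (ha : v ∈ relBdries R X {e a}ᶜ k) :
    v ∈ relBdries R X {e b}ᶜ k := by
  rcases eq_or_ne a b with rfl | hab
  · exact ha
  obtain ⟨F, hF_zero, hF_id, hF_one⟩ := exists_homotopy_push_point hab
  obtain ⟨G, hG_range, hG_compl⟩ :=
    exists_homotopy_extend_by_id he (isCompact_closedBall _ _) F hF_id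
  let f : C(X, X) := ⟨fun x => G (x, 1), by fun_prop⟩
  have hG_zero (x : X) : G (x, 0) = x := by
    by_cases hx : x ∈ Set.range e
    · obtain ⟨p, rfl⟩ := hx
      rw [hG_range, hF_zero]
    · exact hG_compl x hx 0
  have hf : Set.MapsTo f {e a}ᶜ {e b}ᶜ := by
    intro x hx hfx
    by_cases hxe : x ∈ Set.range e
    · obtain ⟨p, rfl⟩ := hxe
      have hp : F (p, 1) = b := he.injective ((hG_range p 1).symm.trans hfx)
      exact hx (congrArg e (hF_one p hp))
    · exact hxe ⟨b, (hfx.symm.trans (hG_compl x hxe 1))⟩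
  have hhom := pushforward_sub_pushforward (R := R) (f := ContinuousMap.id X) (g := f) G hG_zero
    (fun _ => rfl) v
  rw [hv, map_zero, add_zero, pushforward_id] at hhom
  have hsplit : v = pushforward f v - bdry R X (k + 1) (homotopyOp G (k + 1) v) := by
    rw [← hhom]
    abel
  rw [hsplit]
  exact sub_mem (pushforward_mem_relBdries hf ha) (bdry_mem_relBdries _)

end Injectivity

/-! ### Manifolds with boundary -/

section Manifold

variable {M : Type} [TopologicalSpace M] {B : Set M} {n : ℕ}

/-- The part of the open ball of radius `r` around `c` that lies in the upper half space. -/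
def halfBall (c : Fin (n + 1) → ℝ) (r : ℝ) : Set (Fin (n + 1) → ℝ) :=
  {y | y ∈ Metric.ball c r ∧ 0 ≤ y 0}

lemma isCompact_preimage_closedBall_halfBall {c : Fin (n + 1) → ℝ} {r s : ℝ} (hs : s < r) :
    IsCompact (Subtype.val ⁻¹' Metric.closedBall c s : Set (halfBall c r)) := by
  have himage : halfBall c r ∩ Metric.closedBall c s = Metric.closedBall c s ∩ {y | 0 ≤ y 0} :=
    Set.ext fun y => ⟨fun hy => ⟨hy.2, hy.1.2⟩,
      fun hy => ⟨⟨Metric.closedBall_subset_ball hs hy.1, hy.2⟩, hy.1⟩⟩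
  rw [Subtype.isCompact_iff, Subtype.image_preimage_coe, himage]
  exact (isCompact_closedBall c s).inter_right (isClosed_le continuous_const (continuous_apply 0))

/-- The homotopy of `ℝⁿ⁺¹` lowering the first coordinate of a point `y` by `t * φ y`, but not
below `0`. -/
def pushDown (φ : C(Fin (n + 1) → ℝ, ℝ)) :
    C((Fin (n + 1) → ℝ) × unitInterval, Fin (n + 1) → ℝ) :=
  ⟨fun z => Function.update z.1 0 (max 0 (z.1 0 - z.2.1 * φ z.1)),
    continuous_fst.update 0 (by fun_prop)⟩

lemma pushDown_apply_zero (φ : C(Fin (n + 1) → ℝ, ℝ)) (y : Fin (n + 1) → ℝ) (t : unitInterval) :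
    pushDown φ (y, t) 0 = max 0 (y 0 - t * φ y) := by
  simp only [pushDown, ContinuousMap.coe_mk, Function.update_self]

lemma pushDown_mem_halfBall {φ : C(Fin (n + 1) → ℝ, ℝ)} (hφ : 0 ≤ φ) {c : Fin (n + 1) → ℝ}
    (hc : c 0 = 0) {r : ℝ} {y : Fin (n + 1) → ℝ} (hy : y ∈ halfBall c r) (t : unitInterval) :
    pushDown φ (y, t) ∈ halfBall c r := by
  have hr : 0 < r := Metric.pos_of_mem_ball hy.1
  obtain ⟨hball, hy0⟩ := hy
  rw [mem_ball_iff_norm, pi_norm_lt_iff hr] at hball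
  refine ⟨?_, (pushDown_apply_zero φ y t).symm ▸ le_max_left _ _⟩
  rw [mem_ball_iff_norm, pi_norm_lt_iff hr]
  intro i
  rcases eq_or_ne i 0 with rfl | hi
  · refine lt_of_le_of_lt ?_ (hball 0)
    simp only [Pi.sub_apply, pushDown_apply_zero, hc, sub_zero, Real.norm_eq_abs]
    rw [abs_of_nonneg (le_max_left _ _), abs_of_nonneg hy0]
    exact max_le hy0 (sub_le_self _ (mul_nonneg t.2.1 (hφ y)))
  · simpa only [pushDown, ContinuousMap.coe_mk, Pi.sub_apply, Function.update_of_ne hi]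
      using hball i

lemma pushDown_eq_self {φ : C(Fin (n + 1) → ℝ, ℝ)} (hφ : 0 ≤ φ) {y : Fin (n + 1) → ℝ}
    (hy : 0 ≤ y 0) {t : unitInterval} (h : t * φ y = 0 ∨ y 0 = 0) : pushDown φ (y, t) = y := by
  have hzero : max 0 (y 0 - t * φ y) = y 0 := by
    rcases h with h | h
    · rw [h, sub_zero, max_eq_right hy]
    · rw [h, zero_sub]
      exact max_eq_left (neg_nonpos.2 (mul_nonneg t.2.1 (hφ y)))
  exact Function.update_eq_iff.2 ⟨hzero, fun _ _ => rfl⟩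

lemma exists_halfBall_homotopy {c : Fin (n + 1) → ℝ} (hc : c 0 = 0) {r : ℝ} (hr : 0 < r) :
    ∃ F : C(halfBall c r × unitInterval, halfBall c r), (∀ y, F (y, 0) = y) ∧
      (∀ y, y.1 0 = 0 → ∀ t, F (y, t) = y) ∧
      (∀ y, y.1 ∉ Metric.closedBall c (r / 2) → ∀ t, F (y, t) = y) ∧
      ∃ O : Set (Fin (n + 1) → ℝ), IsOpen O ∧ c ∈ O ∧ ∀ y, y.1 ∈ O → (F (y, 1)).1 0 = 0 := by
  let φ : C(Fin (n + 1) → ℝ, ℝ) := ⟨fun y => max 0 (r / 2 - ‖y - c‖), by fun_prop⟩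
  have hφ : 0 ≤ φ := fun y => le_max_left _ _
  refine ⟨⟨fun z => ⟨pushDown φ (z.1.1, z.2), pushDown_mem_halfBall hφ hc z.1.2 z.2⟩, by fun_prop⟩,
    fun y => ?_, fun y hy t => ?_, fun y hy t => ?_, {y | y 0 < φ y},
    isOpen_lt (by fun_prop) (by fun_prop), ?_, fun y hy => ?_⟩
  · exact Subtype.ext (pushDown_eq_self hφ y.2.2 (.inl (zero_mul _)))
  · exact Subtype.ext (pushDown_eq_self hφ y.2.2 (.inr hy))
  · rw [Metric.mem_closedBall, dist_eq_norm, not_le] at hy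
    have hφy : φ y.1 = 0 := max_eq_left (by linarith)
    exact Subtype.ext (pushDown_eq_self hφ y.2.2 (.inl (by rw [hφy, mul_zero])))
  · change c 0 < max 0 (r / 2 - ‖c - c‖)
    rw [hc, sub_self, norm_zero, sub_zero]
    exact lt_max_of_lt_right (half_pos hr)
  · refine (pushDown_apply_zero φ y.1 1).trans (max_eq_left ?_)
    rw [Set.Icc.coe_one, one_mul, sub_nonpos]
    exact le_of_lt hy

lemma exists_isOpenEmbedding_range_eq_ball (c : Fin n → ℝ) {r : ℝ} (hr : 0 < r) :
    ∃ u : C(Fin n → ℝ, Fin n → ℝ), Topology.IsOpenEmbedding u ∧ Set.range u = Metric.ball c r := by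
  let u := OpenPartialHomeomorph.univBall (E := Fin n → ℝ) c r
  have hu : Topology.IsOpenEmbedding u := u.isOpenEmbedding (by simp [u])
  refine ⟨⟨u, hu.continuous⟩, hu, ?_⟩
  rw [← OpenPartialHomeomorph.univBall_target c hr, ← u.image_source_eq_target]
  simp [u]

/-- `f` is an open embedding of a half ball around `c` into `M` for which exactly the points on the
boundary hyperplane are mapped to `B`. -/
structure IsHalfBallChart (B : Set M) {c : Fin (n + 1) → ℝ} {r : ℝ} (f : C(halfBall c r, M)) :
    Prop where
  isOpenEmbedding : Topology.IsOpenEmbedding f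
  mem_iff : ∀ y, f y ∈ B ↔ y.1 0 = 0

namespace IsHalfBallChart

variable {c : Fin (n + 1) → ℝ} {r : ℝ} {f : C(halfBall c r, M)}

lemma apply_zero_pos (hf : IsHalfBallChart B f) {y : halfBall c r} (hy : f y ∉ B) : 0 < y.1 0 :=
  lt_of_le_of_ne y.2.2 fun h => hy ((hf.mem_iff y).2 h.symm)

lemma exists_interior_chart (hf : IsHalfBallChart B f) {y : Fin (n + 1) → ℝ}
    (hy : y ∈ Metric.ball c r) (hy0 : 0 < y 0) :
    ∃ g : C(Fin (n + 1) → ℝ, M), Topology.IsOpenEmbedding g ∧ Set.range g ⊆ Bᶜ ∧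
      ∃ r' > 0, ∀ z ∈ Metric.ball y r', ∃ hz : z ∈ halfBall c r, f ⟨z, hz⟩ ∈ Set.range g := by
  have hopen : IsOpen (Metric.ball c r ∩ {z | 0 < z 0}) :=
    Metric.isOpen_ball.inter (isOpen_lt continuous_const (continuous_apply 0))
  obtain ⟨r', hr', hsub⟩ := Metric.isOpen_iff.1 hopen y ⟨hy, hy0⟩
  obtain ⟨u, hu, hu_range⟩ := exists_isOpenEmbedding_range_eq_ball y hr'
  have hu_mem (p) : u p ∈ Metric.ball y r' := hu_range ▸ Set.mem_range_self p
  have hhalf {z} (hz : z ∈ Metric.ball y r') : z ∈ halfBall c r := ⟨(hsub hz).1, (hsub hz).2.le⟩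
  let j : (Fin (n + 1) → ℝ) → halfBall c r := fun p => ⟨u p, hhalf (hu_mem p)⟩
  have hj_range : Set.range j = Subtype.val ⁻¹' Metric.ball y r' := by
    ext z
    simp only [← hu_range, Set.mem_range, Set.mem_preimage, j, Subtype.ext_iff]
  have hj : Topology.IsOpenEmbedding j :=
    ⟨hu.isEmbedding.codRestrict _ _, hj_range ▸ Metric.isOpen_ball.preimage continuous_subtype_val⟩
  refine ⟨⟨f ∘ j, by fun_prop⟩, hf.isOpenEmbedding.comp hj, ?_, r', hr', fun z hz => ?_⟩
  · rintro _ ⟨p, rfl⟩ hp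
    exact (hsub (hu_mem p)).2.ne' ((hf.mem_iff _).1 hp)
  · obtain ⟨p, hp⟩ := hu_range.symm ▸ hz
    exact ⟨hhalf hz, p, congrArg f (Subtype.ext hp)⟩

lemma interior_induction (hf : IsHalfBallChart B f) {P : M → Prop}
    (hP : ∀ g : C(Fin (n + 1) → ℝ, M), Topology.IsOpenEmbedding g → Set.range g ⊆ Bᶜ →
      ∀ a b, P (g a) → P (g b)) {y z : halfBall c r} (hy : f y ∉ B) (hz : f z ∉ B) (hPy : P (f y)) :
    P (f z) := by
  have hconn : IsPreconnected (Metric.ball c r ∩ {z | 0 < z 0}) :=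
    ((convex_ball c r).inter
      (convex_halfSpace_gt (IsLinearMap.mk (fun _ _ => rfl) fun _ _ => rfl) _)).isPreconnected
  refine hconn.induction₂' (fun a b => ∀ ha hb, P (f ⟨a, ha⟩) → P (f ⟨b, hb⟩)) ?_ ?_
    ⟨y.2.1, hf.apply_zero_pos hy⟩ ⟨z.2.1, hf.apply_zero_pos hz⟩ y.2 z.2 hPy
  · rintro a ⟨ha, ha0⟩
    obtain ⟨g, hg, hgB, r', hr', hball⟩ := hf.exists_interior_chart ha ha0
    filter_upwards [mem_nhdsWithin_of_mem_nhds (Metric.ball_mem_nhds a hr')] with b hb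
    obtain ⟨_, p, hp⟩ := hball a (Metric.mem_ball_self hr')
    obtain ⟨_, q, hq⟩ := hball b hb
    exact ⟨fun _ _ => hp ▸ hq ▸ hP g hg hgB p q, fun _ _ => hp ▸ hq ▸ hP g hg hgB q p⟩
  · intro a b d _ hb _ hab hbd ha' hd' hPa
    have hb' : b ∈ halfBall c r := ⟨hb.1, hb.2.le⟩
    exact hbd hb' hd' (hab ha' hb' hPa)

lemma mem_closure_preimage_compl (hf : IsHalfBallChart B f) (hc : c ∈ halfBall c r) :
    (⟨c, hc⟩ : halfBall c r) ∈ closure (f ⁻¹' Bᶜ) := by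
  have hr : 0 < r := Metric.pos_of_mem_ball hc.1
  refine Metric.mem_closure_iff.2 fun ε hε => ?_
  let δ := min ε r / 2
  have hδ : 0 < δ := half_pos (lt_min hε hr)
  have hδ_lt : δ < min ε r := half_lt_self (lt_min hε hr)
  have hdist : dist (c + fun _ => δ) c = δ := by
    rw [dist_self_add_left, pi_norm_const, Real.norm_of_nonneg hδ.le]
  have hpos : 0 < c 0 + δ := add_pos_of_nonneg_of_pos hc.2 hδ
  refine ⟨⟨c + fun _ => δ, ?_, hpos.le⟩, fun h => hpos.ne' ((hf.mem_iff _).1 h), ?_⟩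
  · rw [Metric.mem_ball, hdist]
    exact hδ_lt.trans_le (min_le_right _ _)
  · rw [dist_comm, Subtype.dist_eq, hdist]
    exact hδ_lt.trans_le (min_le_left _ _)

end IsHalfBallChart

/-- `F` is a homotopy from the identity of `M` to some map, stationary on `B`. -/
structure IsDeformationRel (B : Set M) (F : C(M × unitInterval, M)) : Prop where
  apply_zero : ∀ x, F (x, 0) = x
  apply_of_mem : ∀ x ∈ B, ∀ t, F (x, t) = x

namespace IsTopMfdWithBdry

lemma exists_isHalfBallChart (h : IsTopMfdWithBdry (n + 1) M B) (x : M) :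
    ∃ (c : Fin (n + 1) → ℝ) (r : ℝ) (hc : c ∈ halfBall c r) (f : C(halfBall c r, M)),
      IsHalfBallChart B f ∧ f ⟨c, hc⟩ = x := by
  obtain ⟨U, V, e, hU, ⟨O, hO, rfl⟩, hx, hB⟩ := h.2 x
  have hnonneg (y : halfSpace (n + 1)) : 0 ≤ y.1 0 := y.2 0 rfl
  let c := (e ⟨x, hx⟩).1.1
  obtain ⟨r, hr, hrO⟩ := Metric.isOpen_iff.1 hO c (e ⟨x, hx⟩).2
  have hc : c ∈ halfBall c r := ⟨Metric.mem_ball_self hr, hnonneg _⟩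
  let j : halfBall c r → (Subtype.val ⁻¹' O : Set (halfSpace (n + 1))) := fun y =>
    ⟨⟨y.1, fun i hi => (Fin.ext hi : i = 0) ▸ y.2.2⟩, hrO y.2.1⟩
  have hj_range : Set.range j = (fun y => y.1.1) ⁻¹' Metric.ball c r :=
    Set.ext fun y => ⟨fun ⟨z, hz⟩ => hz ▸ z.2.1, fun hy => ⟨⟨y.1.1, hy, hnonneg _⟩, rfl⟩⟩
  have hj_continuous : Continuous j := (continuous_subtype_val.subtype_mk _).subtype_mk _
  have hj : Topology.IsOpenEmbedding j :=
    ⟨.of_comp (f := j) (g := fun y => y.1.1) hj_continuous (by fun_prop) .subtypeVal,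
      hj_range ▸ Metric.isOpen_ball.preimage (by fun_prop)⟩
  have hf := hU.isOpenEmbedding_subtypeVal.comp (e.symm.isOpenEmbedding.comp hj)
  refine ⟨c, r, hc, ⟨_, hf.continuous⟩, ⟨hf, fun y => ?_⟩,
    congrArg Subtype.val (e.symm_apply_apply ⟨x, hx⟩)⟩
  change (e.symm (j y)).1 ∈ B ↔ _
  rw [← hB (e.symm (j y)), e.apply_symm_apply]
  exact ⟨fun h => h 0 rfl, fun h i hi => (Fin.ext hi : i = 0) ▸ h⟩

lemma exists_interior_chart (h : IsTopMfdWithBdry (n + 1) M B) {x : M} (hx : x ∈ Bᶜ) :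
    ∃ g : C(Fin (n + 1) → ℝ, M), Topology.IsOpenEmbedding g ∧ x ∈ Set.range g ∧
      Set.range g ⊆ Bᶜ := by
  obtain ⟨c, r, hc, f, hf, rfl⟩ := h.exists_isHalfBallChart x
  obtain ⟨g, hg, hgB, r', hr', hball⟩ := hf.exists_interior_chart hc.1 (hf.apply_zero_pos hx)
  exact ⟨g, hg, (hball c (Metric.mem_ball_self hr')).2, hgB⟩

lemma dense_compl (h : IsTopMfdWithBdry (n + 1) M B) : Dense Bᶜ := by
  intro x
  obtain ⟨c, r, hc, f, hf, rfl⟩ := h.exists_isHalfBallChart x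
  exact map_mem_closure f.continuous (hf.mem_closure_preimage_compl hc) fun _ => id

lemma interior_induction [PreconnectedSpace M] (h : IsTopMfdWithBdry (n + 1) M B) {P : M → Prop}
    (hP : ∀ g : C(Fin (n + 1) → ℝ, M), Topology.IsOpenEmbedding g → Set.range g ⊆ Bᶜ →
      ∀ a b, P (g a) → P (g b)) {x y : M} (hx : x ∉ B) (hy : y ∉ B) (hPx : P x) : P y := by
  have hlocal (x : M) : ∃ U, IsOpen U ∧ x ∈ U ∧ ∀ a ∈ U, ∀ b ∈ U, a ∉ B → b ∉ B → P a → P b := by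
    obtain ⟨c, r, hc, f, hf, rfl⟩ := h.exists_isHalfBallChart x
    refine ⟨Set.range f, hf.isOpenEmbedding.isOpen_range, ⟨_, rfl⟩, ?_⟩
    rintro _ ⟨a, rfl⟩ _ ⟨b, rfl⟩ ha hb
    exact hf.interior_induction hP ha hb
  let T : Set M := {z | z ∉ B ∧ P z}
  have hopen : IsOpen (closure T) := by
    refine isOpen_iff_forall_mem_open.2 fun z hz => ?_
    obtain ⟨U, hU, hzU, hUP⟩ := hlocal z
    obtain ⟨a, haU, haB, hPa⟩ := mem_closure_iff.1 hz U hU hzU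
    refine ⟨U, (h.dense_compl.open_subset_closure_inter hU).trans (closure_mono ?_), hU, hzU⟩
    exact fun b hb => ⟨hb.2, hUP a haU b hb.1 haB hb.2 hPa⟩
  have huniv : closure T = Set.univ :=
    IsClopen.eq_univ ⟨isClosed_closure, hopen⟩ ⟨x, subset_closure ⟨hx, hPx⟩⟩
  obtain ⟨U, hU, hyU, hUP⟩ := hlocal y
  obtain ⟨z, hzU, hzB, hPz⟩ := mem_closure_iff.1 (huniv ▸ Set.mem_univ y) U hU hyU
  exact hUP z hzU y hyU hzB hy hPz

lemma exists_isDeformationRel_nhds (h : IsTopMfdWithBdry (n + 1) M B) {x : M} (hx : x ∈ B) :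
    ∃ F : C(M × unitInterval, M), IsDeformationRel B F ∧
      ∃ U, IsOpen U ∧ x ∈ U ∧ ∀ y ∈ U, F (y, 1) ∈ B := by
  have := h.1
  obtain ⟨c, r, hc, f, hf, rfl⟩ := h.exists_isHalfBallChart x
  have hr : 0 < r := Metric.pos_of_mem_ball hc.1
  obtain ⟨F, hF_zero, hF_bdry, hF_far, O, hO, hcO, hF_one⟩ :=
    exists_halfBall_homotopy ((hf.mem_iff _).1 hx) hr
  obtain ⟨G, hG_range, hG_compl⟩ := exists_homotopy_extend_by_id hf.isOpenEmbedding
    (isCompact_preimage_closedBall_halfBall (half_lt_self hr)) F hF_far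
  refine ⟨G, ⟨fun y => ?_, fun y hy t => ?_⟩, f '' (Subtype.val ⁻¹' O),
    hf.isOpenEmbedding.isOpenMap _ (hO.preimage continuous_subtype_val), ⟨_, hcO, rfl⟩, ?_⟩
  · by_cases hy : y ∈ Set.range f
    · obtain ⟨p, rfl⟩ := hy
      rw [hG_range, hF_zero]
    · exact hG_compl y hy 0
  · by_cases hyf : y ∈ Set.range f
    · obtain ⟨p, rfl⟩ := hyf
      rw [hG_range, hF_bdry p ((hf.mem_iff _).1 hy)]
    · exact hG_compl y hyf t
  · rintro _ ⟨y, hy, rfl⟩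
    rw [hG_range, hf.mem_iff]
    exact hF_one y hy

lemma exists_isDeformationRel (h : IsTopMfdWithBdry (n + 1) M B) (hB : IsCompact B) :
    ∃ F : C(M × unitInterval, M), IsDeformationRel B F ∧
      ∃ U, IsOpen U ∧ B ⊆ U ∧ ∀ y ∈ U, F (y, 1) ∈ B := by
  suffices ∃ F : C(M × unitInterval, M), IsDeformationRel B F ∧
      ∃ U, IsOpen U ∧ B ∩ B ⊆ U ∧ ∀ y ∈ U, F (y, 1) ∈ B by simpa only [Set.inter_self] using this
  refine hB.induction_on (p := fun s => ∃ F : C(M × unitInterval, M), IsDeformationRel B F ∧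
    ∃ U, IsOpen U ∧ B ∩ s ⊆ U ∧ ∀ y ∈ U, F (y, 1) ∈ B) ?_ ?_ ?_ ?_
  · exact ⟨⟨Prod.fst, continuous_fst⟩, ⟨fun _ => rfl, fun _ _ _ => rfl⟩, ∅, isOpen_empty,
      by simp, by simp⟩
  · rintro s t hst ⟨F, hF, U, hU, hs, hUB⟩
    exact ⟨F, hF, U, hU, (Set.inter_subset_inter_right _ hst).trans hs, hUB⟩
  · rintro s t ⟨F, hF, U, hU, hs, hUB⟩ ⟨F', hF', U', hU', ht, hUB'⟩
    refine ⟨⟨fun z => F' (F z, z.2), by fun_prop⟩, ⟨fun x => ?_, fun x hx t => ?_⟩,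
      U ∪ (fun y => F (y, 1)) ⁻¹' U', hU.union (hU'.preimage (by fun_prop)), ?_, ?_⟩
    · exact (congrArg (fun y => F' (y, 0)) (hF.apply_zero x)).trans (hF'.apply_zero x)
    · exact (congrArg (fun y => F' (y, t)) (hF.apply_of_mem x hx t)).trans
        (hF'.apply_of_mem x hx t)
    · rintro x ⟨hx, hxs | hxt⟩
      · exact .inl (hs ⟨hx, hxs⟩)
      · exact .inr ((hF.apply_of_mem x hx 1).symm ▸ ht ⟨hx, hxt⟩ : F (x, 1) ∈ U')
    · rintro y (hy | hy)
      · exact (hF'.apply_of_mem _ (hUB y hy) 1).symm ▸ hUB y hy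
      · exact hUB' _ hy
  · intro x hx
    obtain ⟨F, hF, U, hU, hxU, hUB⟩ := h.exists_isDeformationRel_nhds hx
    exact ⟨U, mem_nhdsWithin_of_mem_nhds (hU.mem_nhds hxU), F, hF, U, hU,
      Set.inter_subset_right, hUB⟩

end IsTopMfdWithBdry

end Manifold

/-! ### Rational subspaces and maps of tori -/

section Lattice

variable {k l e q : ℕ}

/-- The inclusion of the integral lattice `ℤ^k` into `ℝ^k`. -/
def intVec (k : ℕ) : (Fin k → ℤ) →ₗ[ℤ] (Fin k → ℝ) :=
  (Int.castAddHom ℝ).toIntLinearMap.compLeft (Fin k)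

@[simp] lemma intVec_apply (z : Fin k → ℤ) (j : Fin k) : intVec k z j = z j := rfl

/-- The real extension `ℝ^k → ℝ^l` of a homomorphism `ℤ^k → ℤ^l`. -/
def realExt (f : (Fin k → ℤ) →ₗ[ℤ] (Fin l → ℤ)) : (Fin k → ℝ) →ₗ[ℝ] (Fin l → ℝ) :=
  Matrix.toLin' ((LinearMap.toMatrix' f).map (Int.castRingHom ℝ))

@[simp] lemma realExt_intVec (f : (Fin k → ℤ) →ₗ[ℤ] (Fin l → ℤ)) (z : Fin k → ℤ) :
    realExt f (intVec k z) = intVec l (f z) := by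
  conv_rhs => rw [← Matrix.toLin'_toMatrix' f]
  funext j
  exact (RingHom.map_mulVec (Int.castRingHom ℝ) (LinearMap.toMatrix' f) z j).symm

lemma realExt_apply (f : (Fin k → ℤ) →ₗ[ℤ] (Fin l → ℤ)) (x : Fin k → ℝ) (j : Fin l) :
    realExt f x j = ∑ i, (f (Pi.single i 1) j : ℝ) * x i := by
  simp [realExt, Matrix.toLin'_apply, Matrix.mulVec, dotProduct, LinearMap.toMatrix'_apply]

lemma span_range_intVec : Submodule.span ℝ (Set.range (intVec k)) = ⊤ := by
  refine top_unique ((Pi.basisFun ℝ (Fin k)).span_eq.ge.trans (Submodule.span_mono ?_))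
  rintro _ ⟨i, rfl⟩
  refine ⟨Pi.single i 1, ?_⟩
  funext j
  simp [Pi.single_apply]

lemma mem_of_forall_intVec_mem {f : (Fin k → ℝ) →ₗ[ℝ] (Fin l → ℝ)}
    {V : Submodule ℝ (Fin l → ℝ)} (h : ∀ z, f (intVec k z) ∈ V) (x : Fin k → ℝ) : f x ∈ V := by
  have hspan : Submodule.span ℝ (Set.range (intVec k)) ≤ V.comap f :=
    Submodule.span_le.2 (Set.range_subset_iff.2 h)
  exact hspan (span_range_intVec.ge Submodule.mem_top)

/-- A splitting of the lattice `ℤ^e` as `(V ∩ ℤ^e) ⊕ ℤ^q`, given by the projection onto the second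
summand and a section of it. -/
structure IntegralSplitting (V : Submodule ℝ (Fin e → ℝ)) (q : ℕ) where
  proj : (Fin e → ℤ) →ₗ[ℤ] (Fin q → ℤ)
  sec : (Fin q → ℤ) →ₗ[ℤ] (Fin e → ℤ)
  proj_sec : ∀ w, proj (sec w) = w
  proj_eq_zero_iff : ∀ z, proj z = 0 ↔ intVec e z ∈ V

-- The quotient of `ℤ^e` by the lattice points of a real subspace is torsion-free, hence free.
lemma exists_integralSplitting (V : Submodule ℝ (Fin e → ℝ)) :
    ∃ q, Nonempty (IntegralSplitting V q) := by
  let Λ : Submodule ℤ (Fin e → ℤ) := (V.restrictScalars ℤ).comap (intVec e)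
  have torsion_free : Module.IsTorsionFree ℤ ((Fin e → ℤ) ⧸ Λ) := by
    refine Module.isTorsionFree_iff_smul_eq_zero.2 fun a x => ?_
    obtain ⟨z, rfl⟩ := Λ.mkQ_surjective x
    rw [← map_smul, Submodule.mkQ_apply, Submodule.Quotient.mk_eq_zero, Submodule.mkQ_apply,
      Submodule.Quotient.mk_eq_zero]
    refine fun h => or_iff_not_imp_left.2 fun ha => ?_
    have hV : (a : ℝ) • intVec e z ∈ V := by
      rw [Int.cast_smul_eq_zsmul, ← map_smul]
      exact h
    exact (V.smul_mem_iff (Int.cast_ne_zero.2 ha)).1 hV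
  let b := Module.finBasis ℤ ((Fin e → ℤ) ⧸ Λ)
  let proj : (Fin e → ℤ) →ₗ[ℤ] (Fin _ → ℤ) := b.equivFun.toLinearMap ∘ₗ Λ.mkQ
  obtain ⟨sec, hsec⟩ := Module.projective_lifting_property proj LinearMap.id
    (b.equivFun.surjective.comp Λ.mkQ_surjective)
  refine ⟨_, ⟨proj, sec, LinearMap.congr_fun hsec, fun z => ?_⟩⟩
  change b.equivFun (Λ.mkQ z) = 0 ↔ z ∈ Λ
  rw [LinearEquiv.map_eq_zero_iff, Submodule.mkQ_apply, Submodule.Quotient.mk_eq_zero]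

namespace IntegralSplitting

variable {V : Submodule ℝ (Fin e → ℝ)} (P : IntegralSplitting V q)

lemma realExt_proj_realExt_sec (y : Fin q → ℝ) : realExt P.proj (realExt P.sec y) = y := by
  have h := mem_of_forall_intVec_mem (f := realExt P.proj ∘ₗ realExt P.sec - LinearMap.id) (V := ⊥)
    (fun z => by simp [P.proj_sec]) y
  simpa [sub_eq_zero] using h

lemma ker_realExt_proj (hV : ∃ s : Set (Fin e → ℤ), V = Submodule.span ℝ (intVec e '' s)) :
    LinearMap.ker (realExt P.proj) = V := by
  apply le_antisymm
  · intro x hx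
    have h := mem_of_forall_intVec_mem (f := LinearMap.id - realExt P.sec ∘ₗ realExt P.proj)
      (V := V) (fun z => by
        simp only [LinearMap.sub_apply, LinearMap.id_apply, LinearMap.comp_apply, realExt_intVec]
        rw [← map_sub, ← P.proj_eq_zero_iff, map_sub, P.proj_sec, sub_self]) x
    simpa [LinearMap.mem_ker.1 hx] using h
  · obtain ⟨s, hs⟩ := hV
    refine hs.le.trans (Submodule.span_le.2 ?_)
    rintro _ ⟨z, hz, rfl⟩
    have hzV : P.proj z = 0 :=
      (P.proj_eq_zero_iff z).2 (hs ▸ Submodule.subset_span (Set.mem_image_of_mem _ hz))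
    rw [SetLike.mem_coe, LinearMap.mem_ker, realExt_intVec, hzV, map_zero]

lemma rank_add_finrank (P : IntegralSplitting V q)
    (hV : ∃ s : Set (Fin e → ℤ), V = Submodule.span ℝ (intVec e '' s)) :
    q + Module.finrank ℝ V = e := by
  have h := LinearMap.finrank_range_add_finrank_ker (realExt P.proj)
  rwa [LinearMap.range_eq_top.2 fun y => ⟨_, P.realExt_proj_realExt_sec y⟩, P.ker_realExt_proj hV,
    finrank_top, Module.finrank_fin_fun, Module.finrank_fin_fun] at h

end IntegralSplitting

/-- The standard flat torus `(ℝ/ℤ)^k`. -/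
abbrev Torus (k : ℕ) : Type := Fin k → AddCircle (1 : ℝ)

lemma torusProj_surjective (k : ℕ) : Function.Surjective (torusProj k) := fun θ => by
  choose x hx using fun j => QuotientAddGroup.mk_surjective (θ j)
  exact ⟨x, funext hx⟩

lemma torusProj_eq_zero_iff {x : Fin k → ℝ} : torusProj k x = 0 ↔ ∃ z, intVec k z = x := by
  have hcoord (j : Fin k) : torusProj k x j = 0 ↔ ∃ n : ℤ, (n : ℝ) = x j := by
    refine (AddCircle.coe_eq_zero_iff (1 : ℝ)).trans ?_
    simp only [zsmul_eq_mul, mul_one]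
  simp only [funext_iff, Pi.zero_apply, hcoord, intVec_apply, Classical.skolem]

lemma torusProj_eq_iff {x y : Fin k → ℝ} :
    torusProj k x = torusProj k y ↔ ∃ z, intVec k z = x - y := by
  rw [← torusProj_eq_zero_iff, map_sub, sub_eq_zero]

@[fun_prop] lemma continuous_torusProj (k : ℕ) : Continuous (torusProj k) :=
  continuous_pi fun j => (AddCircle.continuous_mk' (1 : ℝ)).comp (continuous_apply j)

/-- The map of tori induced by a homomorphism of lattices. -/
def torusMap (f : (Fin k → ℤ) →ₗ[ℤ] (Fin l → ℤ)) : C(Torus k, Torus l) :=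
  ⟨fun θ j => ∑ i, f (Pi.single i 1) j • θ i, by fun_prop⟩

lemma torusMap_torusProj (f : (Fin k → ℤ) →ₗ[ℤ] (Fin l → ℤ)) (x : Fin k → ℝ) :
    torusMap f (torusProj k x) = torusProj l (realExt f x) := by
  funext j
  change ∑ i, f (Pi.single i 1) j • ((x i : ℝ) : AddCircle (1 : ℝ)) = (realExt f x j : ℝ)
  rw [realExt_apply]
  refine Eq.trans ?_ (map_sum (QuotientAddGroup.mk' (AddSubgroup.zmultiples (1 : ℝ))) _ _).symm
  exact Finset.sum_congr rfl fun i _ => by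
    rw [← AddCircle.coe_zsmul, zsmul_eq_mul, QuotientAddGroup.mk'_apply]

namespace IntegralSplitting

variable {V : Submodule ℝ (Fin e → ℝ)} (P : IntegralSplitting V q)

lemma torusMap_proj_torusMap_sec (θ : Torus q) : torusMap P.proj (torusMap P.sec θ) = θ := by
  obtain ⟨x, rfl⟩ := torusProj_surjective q θ
  rw [torusMap_torusProj, torusMap_torusProj, P.realExt_proj_realExt_sec]

lemma torusMap_proj_eq_iff (hV : ∃ s : Set (Fin e → ℤ), V = Submodule.span ℝ (intVec e '' s))
    (θ θ' : Torus e) : torusMap P.proj θ = torusMap P.proj θ' ↔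
      θ - θ' ∈ AddSubgroup.map (torusProj e) V.toAddSubgroup := by
  obtain ⟨x, rfl⟩ := torusProj_surjective e θ
  obtain ⟨y, rfl⟩ := torusProj_surjective e θ'
  have hker (v : Fin e → ℝ) : v ∈ V ↔ realExt P.proj v = 0 := by
    rw [← LinearMap.mem_ker, P.ker_realExt_proj hV]
  rw [torusMap_torusProj, torusMap_torusProj, torusProj_eq_iff, ← map_sub, ← map_sub]
  constructor
  · rintro ⟨w, hw⟩
    refine ⟨x - y - intVec e (P.sec w), (hker _).2 ?_, ?_⟩
    · rw [map_sub, realExt_intVec, P.proj_sec, hw, sub_self]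
    · rw [map_sub (torusProj e), torusProj_eq_zero_iff.2 ⟨_, rfl⟩, sub_zero]
  · rintro ⟨v, hv, hvxy⟩
    obtain ⟨z, hz⟩ := torusProj_eq_iff.1 hvxy.symm
    refine ⟨P.proj z, ?_⟩
    rw [← realExt_intVec, hz, map_sub, (hker v).1 hv, sub_zero]

end IntegralSplitting

end Lattice

/-! ### The collapsing map of a Dehn filling -/

section CompactQuotient

variable {M Q : Type} [TopologicalSpace M] [TopologicalSpace Q] {p : M → Q}

lemma isClosedMap_of_isClosed_ker [CompactSpace M] [T2Space M] (hp : Topology.IsQuotientMap p)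
    (hker : IsClosed {x : M × M | p x.1 = p x.2}) : IsClosedMap p := fun C hC => by
  have saturation : p ⁻¹' (p '' C) =
      Prod.snd '' ({x : M × M | p x.1 = p x.2} ∩ Prod.fst ⁻¹' C) := by
    ext b
    constructor
    · rintro ⟨a, ha, h⟩
      exact ⟨(a, b), ⟨h, ha⟩, rfl⟩
    · rintro ⟨⟨a, _⟩, ⟨h, ha⟩, rfl⟩
      exact ⟨a, ha, h⟩
  rw [← hp.isClosed_preimage, saturation]
  exact ((hker.inter (hC.preimage continuous_fst)).isCompact.image continuous_snd).isClosed

lemma t2Space_of_isClosedMap [T4Space M] (hp : Continuous p) (hsurj : Function.Surjective p)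
    (hclosed : IsClosedMap p) : T2Space Q := by
  refine ⟨fun x y hxy => ?_⟩
  have isClosed_fiber (x : Q) : IsClosed (p ⁻¹' {x}) := by
    obtain ⟨a, rfl⟩ := hsurj x
    rw [← Set.image_singleton]
    exact (hclosed _ isClosed_singleton).preimage hp
  obtain ⟨U, V, hU, hV, hxU, hyV, hUV⟩ := normal_separation (isClosed_fiber x) (isClosed_fiber y)
    (Set.disjoint_left.2 fun a ha hb => hxy (ha.symm.trans hb))
  refine ⟨(p '' Uᶜ)ᶜ, (p '' Vᶜ)ᶜ, (hclosed _ hU.isClosed_compl).isOpen_compl,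
    (hclosed _ hV.isClosed_compl).isOpen_compl, ?_, ?_, Set.disjoint_left.2 fun z hzU hzV => ?_⟩
  · rintro ⟨a, ha, h⟩
    exact ha (hxU h)
  · rintro ⟨a, ha, h⟩
    exact ha (hyV h)
  · obtain ⟨a, rfl⟩ := hsurj z
    exact Set.disjoint_left.1 hUV (not_not.1 fun h => hzU ⟨a, h, rfl⟩)
      (not_not.1 fun h => hzV ⟨a, h, rfl⟩)

end CompactQuotient

/-- A closed quotient map `proj : M → Q` onto a Hausdorff space which is injective off `B` and maps
`B` onto a disjoint union of finitely many tori of dimension at most `d + 1`. This is what the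
argument uses of the collapsing map of a generalized Dehn filling of a `(d + 3)`-manifold. -/
structure BoundaryCollapse (d m : ℕ) (M Q : Type) [TopologicalSpace M] [TopologicalSpace Q]
    (B : Set M) where
  proj : C(M, Q)
  t2Space : T2Space Q
  surjective : Function.Surjective proj
  isClosedMap : IsClosedMap proj
  isCompact_bdry : IsCompact B
  rank : Fin m → ℕ
  rank_le : ∀ i, rank i ≤ d + 1
  tori : C((Σ i, Torus (rank i)), Q)
  tori_injective : Function.Injective tori
  range_tori : Set.range tori = proj '' B
  eq_or_mem : ∀ a b, proj a = proj b → a = b ∨ (a ∈ B ∧ b ∈ B)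

namespace DehnData

variable {d m : ℕ} (D : DehnData d m)

lemma isCompact_N (i : Fin m) : IsCompact (D.N i) :=
  isCompact_iff_compactSpace.2 (D.flat i).symm.compactSpace

lemma N_subset_B (i : Fin m) : D.N i ⊆ D.B := D.cover ▸ Set.subset_iUnion D.N i

lemma isCompact_B : IsCompact D.B := D.cover ▸ isCompact_iUnion D.isCompact_N

variable {D} in
lemma eq_of_mem_N {i i' : Fin m} {a : D.M} (h : a ∈ D.N i) (h' : a ∈ D.N i') : i = i' := by
  obtain ⟨y, -, hy⟩ := D.iscomp i
  obtain ⟨y₂, -, hy₂⟩ := D.iscomp i'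
  apply D.inj
  rw [hy, hy₂, connectedComponentIn_eq (hy ▸ h : a ∈ connectedComponentIn D.B y),
    connectedComponentIn_eq (hy₂ ▸ h' : a ∈ connectedComponentIn D.B y₂)]

/-- The dimension of the leaf space of the `i`-th boundary torus. -/
def leafRank (i : Fin m) : ℕ := (exists_integralSplitting (D.V i)).choose

/-- A splitting of the fundamental group of the `i`-th boundary torus along the collapsed
subtorus. -/
def splitting (i : Fin m) : IntegralSplitting (D.V i) (D.leafRank i) :=
  (exists_integralSplitting (D.V i)).choose_spec.some

lemma leafRank_le (i : Fin m) : D.leafRank i ≤ d + 1 := by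
  have hrank := (D.splitting i).rank_add_finrank (D.rat i)
  have hpos := D.dim_pos i
  omega

/-- The projection of the `i`-th boundary torus onto its leaf space, which is again a torus. -/
def leafProj (i : Fin m) : C(D.N i, Torus (D.leafRank i)) :=
  (torusMap (D.splitting i).proj).comp (D.flat i)

/-- A section of the projection of the `i`-th boundary torus onto its leaf space. -/
def leafSec (i : Fin m) : C(Torus (D.leafRank i), D.N i) :=
  .comp (D.flat i).symm (torusMap (D.splitting i).sec)

@[simp] lemma leafProj_leafSec (i : Fin m) (θ : Torus (D.leafRank i)) :
    D.leafProj i (D.leafSec i θ) = θ := by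
  simp [leafProj, leafSec, (D.splitting i).torusMap_proj_torusMap_sec]

variable {D}

lemma rel_iff {a b : D.M} : D.rel a b ↔
    ∃ (i : Fin m) (ha : a ∈ D.N i) (hb : b ∈ D.N i), D.leafProj i ⟨a, ha⟩ = D.leafProj i ⟨b, hb⟩ :=
  exists_congr fun i => exists₂_congr fun _ _ =>
    ((D.splitting i).torusMap_proj_eq_iff (D.rat i) _ _).symm

lemma rel_symm {a b : D.M} (h : D.rel a b) : D.rel b a := by
  rw [rel_iff] at h ⊢
  obtain ⟨i, ha, hb, h⟩ := h
  exact ⟨i, hb, ha, h.symm⟩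

lemma rel_trans {a b c : D.M} (hab : D.rel a b) (hbc : D.rel b c) : D.rel a c := by
  rw [rel_iff] at hab hbc ⊢
  obtain ⟨i, ha, hb, hab⟩ := hab
  obtain ⟨i', hb', hc, hbc⟩ := hbc
  obtain rfl := eq_of_mem_N hb hb'
  exact ⟨i, ha, hc, hab.trans hbc⟩

lemma q_eq_iff {a b : D.M} : D.q a = D.q b ↔ a = b ∨ D.rel a b := by
  refine ⟨fun h => ?_, fun h => h.elim (congrArg _) (Quot.sound ·)⟩
  have hgen : Relation.EqvGen D.rel a b := Quot.eqvGen_exact h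
  clear h
  induction hgen with
  | rel _ _ h => exact .inr h
  | refl _ => exact .inl rfl
  | symm _ _ _ ih => exact ih.imp Eq.symm rel_symm
  | trans _ _ _ _ _ ih₁ ih₂ =>
    rcases ih₁ with rfl | h₁
    · exact ih₂
    · rcases ih₂ with rfl | h₂
      · exact .inr h₁
      · exact .inr (rel_trans h₁ h₂)

lemma isClosed_ker_q [T2Space D.M] : IsClosed {x : D.M × D.M | D.q x.1 = D.q x.2} := by
  have hker : {x : D.M × D.M | D.q x.1 = D.q x.2} = Set.diagonal D.M ∪
      ⋃ i, (fun x : D.N i × D.N i => ((x.1 : D.M), (x.2 : D.M))) ''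
        {x | D.leafProj i x.1 = D.leafProj i x.2} := by
    ext ⟨a, b⟩
    simp only [Set.mem_ofPred_eq, q_eq_iff, rel_iff, Set.mem_union, Set.mem_diagonal_iff,
      Set.mem_iUnion, Set.mem_image, Prod.mk.injEq, Prod.exists, Subtype.exists]
    refine or_congr Iff.rfl (exists_congr fun i => ?_)
    constructor
    · rintro ⟨ha, hb, h⟩
      exact ⟨a, ha, b, hb, h, rfl, rfl⟩
    · rintro ⟨a, ha, b, hb, h, rfl, rfl⟩
      exact ⟨ha, hb, h⟩
  rw [hker]
  refine isClosed_diagonal.union (isClosed_iUnion_of_finite fun i => ?_)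
  have : CompactSpace (D.N i) := isCompact_iff_compactSpace.1 (D.isCompact_N i)
  refine (IsCompact.image (IsClosed.isCompact ?_) (by fun_prop)).isClosed
  exact isClosed_eq (by fun_prop) (by fun_prop)

variable (D)

/-- The inclusion of the leaf spaces of all boundary tori into the filling. -/
def leafIncl : C((Σ i, Torus (D.leafRank i)), D.Rfill) where
  toFun p := D.q (D.leafSec p.1 p.2)
  continuous_toFun := continuous_sigma fun i =>
    D.q.continuous.comp (continuous_subtype_val.comp (D.leafSec i).continuous)

lemma leafIncl_leafProj (i : Fin m) (a : D.N i) :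
    D.leafIncl ⟨i, D.leafProj i a⟩ = D.q a :=
  q_eq_iff.2 (.inr (rel_iff.2 ⟨i, Subtype.prop _, a.2, D.leafProj_leafSec i _⟩))

lemma leafIncl_injective : Function.Injective D.leafIncl := by
  rintro ⟨i, θ⟩ ⟨i', θ'⟩ h
  have hi := (D.leafSec i θ).2
  have hi' := (D.leafSec i' θ').2
  rcases q_eq_iff.1 h with h | h
  · obtain rfl := eq_of_mem_N hi (h ▸ hi')
    have hθ := congrArg (D.leafProj i) (Subtype.ext h)
    rw [leafProj_leafSec, leafProj_leafSec] at hθ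
    exact Sigma.ext rfl (heq_of_eq hθ)
  · obtain ⟨k, hk, hk', h⟩ := rel_iff.1 h
    obtain rfl := eq_of_mem_N hk hi
    obtain rfl := eq_of_mem_N hk' hi'
    rw [Subtype.coe_eta, Subtype.coe_eta, leafProj_leafSec, leafProj_leafSec] at h
    exact Sigma.ext rfl (heq_of_eq h)

lemma range_leafIncl : Set.range D.leafIncl = D.q '' D.B := by
  apply subset_antisymm
  · rintro _ ⟨⟨i, θ⟩, rfl⟩
    exact ⟨_, D.N_subset_B i (D.leafSec i θ).2, rfl⟩
  · rintro _ ⟨a, ha, rfl⟩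
    rw [D.cover, Set.mem_iUnion] at ha
    obtain ⟨i, ha⟩ := ha
    exact ⟨_, D.leafIncl_leafProj i ⟨a, ha⟩⟩

/-- The collapsing map of a generalized Dehn filling. -/
def boundaryCollapse [CompactSpace D.M] [T2Space D.M] :
    BoundaryCollapse d m D.M D.Rfill D.B where
  proj := D.q
  t2Space := t2Space_of_isClosedMap D.q.continuous Quot.mk_surjective
    (isClosedMap_of_isClosed_ker isQuotientMap_quot_mk isClosed_ker_q)
  surjective := Quot.mk_surjective
  isClosedMap := isClosedMap_of_isClosed_ker isQuotientMap_quot_mk isClosed_ker_q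
  isCompact_bdry := D.isCompact_B
  rank := D.leafRank
  rank_le := D.leafRank_le
  tori := D.leafIncl
  tori_injective := D.leafIncl_injective
  range_tori := D.range_leafIncl
  eq_or_mem _ _ h := (q_eq_iff.1 h).imp_right fun ⟨i, ha, hb, _⟩ =>
    ⟨D.N_subset_B i ha, D.N_subset_B i hb⟩

end DehnData

/-! ### Homology of the filling -/

lemma torusProj_injOn_ball {k : ℕ} (x : Fin k → ℝ) :
    Set.InjOn (torusProj k) (Metric.ball x (1 / 2)) := fun y hy y' hy' h => by
  obtain ⟨z, hz⟩ := torusProj_eq_iff.1 h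
  have hdist : dist y y' < 1 := by
    linarith [dist_triangle_right y y' x, Metric.mem_ball.1 hy, Metric.mem_ball.1 hy']
  have hz_zero : z = 0 := by
    funext j
    rw [dist_eq_norm, ← hz] at hdist
    have hj : |(z j : ℝ)| < 1 := (norm_le_pi_norm (intVec k z) j).trans_lt hdist
    exact Int.abs_lt_one_iff.1 (by exact_mod_cast hj)
  rwa [hz_zero, map_zero, eq_comm, sub_eq_zero] at hz

lemma isOpenMap_torusProj (k : ℕ) : IsOpenMap (torusProj k) :=
  IsOpenMap.piMap (fun _ => QuotientAddGroup.isOpenMap_coe)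
    (.of_forall fun _ => QuotientAddGroup.mk_surjective)

lemma exists_torus_chart {k : ℕ} (θ : Torus k) :
    ∃ g : C(Fin k → ℝ, Torus k), Topology.IsOpenEmbedding g ∧ θ ∈ Set.range g := by
  obtain ⟨x, rfl⟩ := torusProj_surjective k θ
  obtain ⟨u, hu, hu_range⟩ := exists_isOpenEmbedding_range_eq_ball x one_half_pos
  have hu_mem (s) : u s ∈ Metric.ball x (1 / 2) := hu_range ▸ Set.mem_range_self s
  obtain ⟨s, hs⟩ : x ∈ Set.range u := hu_range ▸ Metric.mem_ball_self one_half_pos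
  refine ⟨⟨fun s => torusProj k (u s), by fun_prop⟩, ?_, s, congrArg (torusProj k) hs⟩
  exact .of_continuous_injective_isOpenMap (by fun_prop)
    (fun s t h => hu.injective (torusProj_injOn_ball x (hu_mem s) (hu_mem t) h))
    ((isOpenMap_torusProj k).comp hu.isOpenMap)

namespace BoundaryCollapse

variable {d m n k : ℕ} {M Q : Type} [TopologicalSpace M] [TopologicalSpace Q] {B : Set M}
  (S : BoundaryCollapse d m M Q B)

lemma isClosedEmbedding_tori : Topology.IsClosedEmbedding S.tori :=
  have := S.t2Space
  .of_continuous_injective_isClosedMap S.tori.continuous S.tori_injective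
    S.tori.continuous.isClosedMap

lemma proj_mem_range_tori_iff {x : M} : S.proj x ∈ Set.range S.tori ↔ x ∈ B := by
  rw [S.range_tori]
  refine ⟨?_, Set.mem_image_of_mem _⟩
  rintro ⟨b, hb, h⟩
  exact (S.eq_or_mem _ _ h).elim (· ▸ hb) And.right

-- Tori of dimension at most `d + 1` have no homology above that dimension.
lemma exists_bdry_eq_of_mem_chainsIn_range_tori (hk : d + 1 ≤ k) {c : SChain R Q (k + 1)}
    (hc : c ∈ chainsIn R Q (Set.range S.tori) (k + 1)) (hcycle : bdry R Q k c = 0) :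
    ∃ w ∈ chainsIn R Q (Set.range S.tori) (k + 2), bdry R Q (k + 1) w = c := by
  rw [← Set.image_univ] at hc
  obtain ⟨b, -, rfl⟩ := exists_pushforward_eq S.isClosedEmbedding_tori.isEmbedding hc
  have hb : bdry R _ k b = 0 :=
    pushforward_injective S.tori_injective (by rw [← bdry_pushforward, hcycle, map_zero])
  have hvanish : LocalHomologyVanishesAbove R (d + 1)
      (Set.univ : Set (Σ i, Torus (S.rank i))) := by
    refine .of_isCompact isCompact_univ ?_
    rintro ⟨i, θ⟩ -
    obtain ⟨g, hg, s, hs⟩ := exists_torus_chart θ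
    exact ⟨S.rank i, S.rank_le i, ⟨fun s => ⟨i, g s⟩, continuous_sigmaMk.comp g.continuous⟩,
      Topology.IsOpenEmbedding.sigmaMk.comp hg, s, congrArg (Sigma.mk i) hs⟩
  have hb_rel : b ∈ relCycles R _ Set.univᶜ k := by
    rw [mem_relCycles_iff, hb]
    exact zero_mem _
  obtain ⟨a, u, hu, hau⟩ := mem_relBdries_iff.1 (hvanish k hk hb_rel)
  rw [Set.compl_univ] at hu
  rw [eq_zero_of_mem_chainsIn_empty hu, add_zero] at hau
  exact ⟨pushforward S.tori a, pushforward_mem_chainsIn (A := Set.univ)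
    (fun x _ => Set.mem_range_self x) (mem_chainsIn_univ _), by rw [bdry_pushforward, hau]⟩

lemma isOpenEmbedding_proj_comp {Y : Type} [TopologicalSpace Y] {g : C(Y, M)}
    (hg : Topology.IsOpenEmbedding g) (hgB : Set.range g ⊆ Bᶜ) :
    Topology.IsOpenEmbedding (S.proj.comp g) := by
  have eq_of_proj_eq (a : Y) (x : M) (h : S.proj (g a) = S.proj x) : g a = x :=
    (S.eq_or_mem _ _ h).resolve_right fun h => hgB ⟨a, rfl⟩ h.1
  refine .of_continuous_injective_isOpenMap (S.proj.comp g).continuous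
    (fun a b h => hg.injective (eq_of_proj_eq a _ h)) fun U hU => ?_
  have himage : S.proj.comp g '' U = (S.proj '' (g '' U)ᶜ)ᶜ := by
    ext z
    constructor
    · rintro ⟨a, ha, rfl⟩ ⟨y, hy, h⟩
      exact hy ⟨a, ha, eq_of_proj_eq a y h.symm⟩
    · obtain ⟨x, rfl⟩ := S.surjective z
      intro h
      obtain ⟨a, ha, rfl⟩ : x ∈ g '' U := not_not.1 fun hx => h ⟨x, hx, rfl⟩
      exact ⟨a, ha, rfl⟩
  rw [himage]
  exact (S.isClosedMap _ (hg.isOpenMap _ hU).isClosed_compl).isOpen_compl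

lemma exists_chart (h : IsTopMfdWithBdry (n + 1) M B) {y : Q} (hy : y ∈ S.proj '' Bᶜ) :
    ∃ e : C(Fin (n + 1) → ℝ, Q), Topology.IsOpenEmbedding e ∧ y ∈ Set.range e := by
  obtain ⟨x, hx, rfl⟩ := hy
  obtain ⟨g, hg, ⟨s, rfl⟩, hgB⟩ := h.exists_interior_chart hx
  exact ⟨S.proj.comp g, S.isOpenEmbedding_proj_comp hg hgB, s, rfl⟩

lemma exists_descended_homotopy [CompactSpace M] {F : C(M × unitInterval, M)}
    (hF : IsDeformationRel B F) : ∃ G : C(Q × unitInterval, Q),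
      ∀ x t, G (S.proj x, t) = S.proj (F (x, t)) := by
  have := S.t2Space
  let p : C(M × unitInterval, Q × unitInterval) := S.proj.prodMap (ContinuousMap.id _)
  have hp : Topology.IsQuotientMap p := p.continuous.isClosedMap.isQuotientMap p.continuous
    (S.surjective.prodMap Function.surjective_id)
  have hlift (a b) (hab : p a = p b) : S.proj.comp F a = S.proj.comp F b := by
    obtain ⟨a, t⟩ := a
    obtain ⟨b, t'⟩ := b
    obtain ⟨h, rfl⟩ := Prod.mk.inj hab
    rcases S.eq_or_mem _ _ h with rfl | ⟨ha, hb⟩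
    · rfl
    · rw [ContinuousMap.comp_apply, ContinuousMap.comp_apply, hF.apply_of_mem _ ha,
        hF.apply_of_mem _ hb]
      exact h
  exact ⟨hp.lift (S.proj.comp F) hlift, fun x t =>
    DFunLike.congr_fun (hp.lift_comp (S.proj.comp F) hlift) (x, t)⟩

lemma exists_homotopy_into_range_tori [CompactSpace M] (h : IsTopMfdWithBdry (n + 1) M B) :
    ∃ G : C(Q × unitInterval, Q), (∀ y, G (y, 0) = y) ∧ ∃ A : Set Q, IsCompact A ∧
      A ⊆ S.proj '' Bᶜ ∧ ∀ y ∈ Aᶜ, G (y, 1) ∈ Set.range S.tori := by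
  obtain ⟨F, hF, U, hU, hBU, hUB⟩ := h.exists_isDeformationRel S.isCompact_bdry
  obtain ⟨G, hG⟩ := S.exists_descended_homotopy hF
  refine ⟨G, fun y => ?_, S.proj '' Uᶜ, hU.isClosed_compl.isCompact.image S.proj.continuous,
    Set.image_mono (Set.compl_subset_compl.2 hBU), fun y hy => ?_⟩
  · obtain ⟨x, rfl⟩ := S.surjective y
    rw [hG, hF.apply_zero]
  · obtain ⟨x, rfl⟩ := S.surjective y
    rw [hG, S.proj_mem_range_tori_iff]
    exact hUB _ (not_not.1 fun hx => hy ⟨x, hx, rfl⟩)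

lemma mem_relBdries_compl_of_mem_relBdries_compl_singleton [PreconnectedSpace M]
    (h : IsTopMfdWithBdry (n + 1) M B) {v : SChain R Q (n + 1)} (hv : bdry R Q n v = 0) {x : M}
    (hx : x ∉ B) (hvx : v ∈ relBdries R Q {S.proj x}ᶜ n) {A : Set Q} (hA : IsCompact A)
    (hAB : A ⊆ S.proj '' Bᶜ) : v ∈ relBdries R Q Aᶜ n := by
  have := S.t2Space
  refine mem_relBdries_compl_of_isCompact (fun y hy => S.exists_chart h (hAB hy)) hA fun y hy => ?_
  obtain ⟨z, hz, rfl⟩ := hAB hy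
  exact h.interior_induction (P := fun z => v ∈ relBdries R Q {S.proj z}ᶜ n)
    (fun g hg hgB a b => mem_relBdries_compl_singleton_of_chart
      (S.isOpenEmbedding_proj_comp hg hgB) a b hv) hx hz hvx

lemma exists_bdry_eq_of_mem_relBdries [CompactSpace M] [PreconnectedSpace M]
    (h : IsTopMfdWithBdry (n + 1) M B) (hdn : d + 1 ≤ n) {v : SChain R Q (n + 1)}
    (hv : bdry R Q n v = 0) {x : M} (hx : x ∉ B) (hvx : v ∈ relBdries R Q {S.proj x}ᶜ n) :
    ∃ a, bdry R Q (n + 1) a = v := by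
  obtain ⟨G, hG, A, hA, hAB, hGA⟩ := S.exists_homotopy_into_range_tori h
  obtain ⟨a, u, hu, rfl⟩ := mem_relBdries_iff.1
    (S.mem_relBdries_compl_of_mem_relBdries_compl_singleton h hv hx hvx hA hAB)
  rw [map_add, bdry_bdry, zero_add] at hv
  let g : C(Q, Q) := G.comp ⟨fun y => (y, 1), by fun_prop⟩
  have hhomotopy := pushforward_sub_pushforward G (f := ContinuousMap.id Q) (g := g) hG
    (fun _ => rfl) u
  rw [hv, map_zero, add_zero, pushforward_id] at hhomotopy
  obtain ⟨w, -, hw⟩ := S.exists_bdry_eq_of_mem_chainsIn_range_tori hdn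
    (pushforward_mem_chainsIn (f := g) hGA hu) (by rw [bdry_pushforward, hv, map_zero])
  refine ⟨a + w - homotopyOp G (n + 1) u, ?_⟩
  rw [map_sub, map_add, hw, ← hhomotopy]
  abel

end BoundaryCollapse

/-! ### Fundamental classes -/

section IntegralChains

variable {Y : Type} [TopologicalSpace Y] {n : ℕ} {A : Set X}

/-- The extension of coefficients `intChain`, as an additive map. -/
def intChainHom : SChain ℤ X n →+ SChain ℝ X n where
  toFun := intChain
  map_zero' := by simp [intChain]
  map_add' a b := by
    simp only [intChain, map_add]
    rw [← map_add]
    exact congrArg _ (Finsupp.mapRange_add Int.cast_add _ _)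

lemma intChainHom_ofSimplex (σ : SSimplex X n) : intChainHom (ofSimplex ℤ σ) = ofSimplex ℝ σ := by
  change intChain (ofSimplex ℤ σ) = _
  simp [intChain, ofSimplex]

lemma intChainHom_zsmul (a : ℤ) (c : SChain ℤ X n) :
    intChainHom (a • c) = (a : ℝ) • intChainHom c := by
  rw [map_zsmul, Int.cast_smul_eq_zsmul]

-- `ℤ` acts on `SChain ℤ X n` through `instModuleSChain` and as on any additive group; the two
-- actions agree, but not reducibly.
lemma module_smul_eq_zsmul (a : ℤ) (c : SChain ℤ X n) :
    (instModuleSChain ℤ X n).toSMul.smul a c = a • c :=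
  int_smul_eq_zsmul (instModuleSChain ℤ X n) a c

lemma addHom_congr {W : Type*} [AddCommGroup W] {f g : SChain ℤ X n →+ W}
    (h : ∀ σ, f (ofSimplex ℤ σ) = g (ofSimplex ℤ σ)) (c : SChain ℤ X n) : f c = g c := by
  induction c using chain_induction with
  | zero => simp
  | add a b ha hb => simp [ha, hb]
  | smul a σ =>
    refine (congrArg f (module_smul_eq_zsmul a _)).trans (.trans ?_
      (congrArg g (module_smul_eq_zsmul a _)).symm)
    rw [map_zsmul, map_zsmul, h]

lemma intChainHom_pushforward (f : C(X, Y)) (c : SChain ℤ X n) :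
    intChainHom (pushforward f c) = pushforward f (intChainHom c) :=
  addHom_congr (f := intChainHom.comp (pushforward f).toAddMonoidHom)
    (g := (pushforward f).toAddMonoidHom.comp intChainHom)
    (fun σ => by simp [intChainHom_ofSimplex]) c

lemma intChainHom_bdry (c : SChain ℤ X (n + 1)) :
    intChainHom (bdry ℤ X n c) = bdry ℝ X n (intChainHom c) := by
  refine addHom_congr (f := intChainHom.comp (bdry ℤ X n).toAddMonoidHom)
    (g := (bdry ℝ X n).toAddMonoidHom.comp intChainHom) (fun σ => ?_) c
  simp only [AddMonoidHom.comp_apply, LinearMap.toAddMonoidHom_coe, intChainHom_ofSimplex,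
    bdry_ofSimplex, map_sum]
  refine Finset.sum_congr rfl fun i _ => ?_
  refine (congrArg intChainHom (module_smul_eq_zsmul _ _)).trans ?_
  rw [intChainHom_zsmul, intChainHom_ofSimplex, Int.cast_pow, Int.cast_neg, Int.cast_one]

lemma intChainHom_mem_chainsIn {c : SChain ℤ X n} (h : c ∈ chainsIn ℤ X A n) :
    intChainHom c ∈ chainsIn ℝ X A n := by
  rw [chainsIn_eq_span] at h
  induction h using Submodule.span_induction with
  | mem _ h =>
    obtain ⟨σ, hσ, rfl⟩ := h
    exact intChainHom_ofSimplex σ ▸ ofSimplex_mem_chainsIn hσ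
  | zero => exact map_zero (intChainHom (X := X) (n := n)) ▸ zero_mem _
  | add a b _ _ ha hb => exact map_add intChainHom a b ▸ add_mem ha hb
  | smul k c _ hc =>
    have hsmul := (congrArg intChainHom (module_smul_eq_zsmul k c)).trans (intChainHom_zsmul k c)
    exact hsmul ▸ Submodule.smul_mem _ (k : ℝ) hc

end IntegralChains

section FundamentalClasses

variable {Y : Type} [TopologicalSpace Y] {n : ℕ} {A : Set X}

lemma relHomClass_eq_iff {c c' : relCycles R X A n} :
    relHomClass c = relHomClass c' ↔ c.1 - c'.1 ∈ relBdries R X A n :=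
  Submodule.Quotient.eq _

lemma mem_relCycles_empty_iff {v : SChain R X (n + 1)} :
    v ∈ relCycles R X ∅ n ↔ bdry R X n v = 0 :=
  ⟨eq_zero_of_mem_chainsIn_empty, fun h => mem_relCycles_iff.2 (h ▸ zero_mem _)⟩

/-- The chain `z` represents a generator of the local homology group
`H_{n+1}(X, X ∖ {x}; ℤ)`. -/
def IsLocalGenerator (z : SChain ℤ X (n + 1)) (x : X) : Prop :=
  z ∈ relCycles ℤ X {x}ᶜ n ∧
    ∀ v ∈ relCycles ℤ X {x}ᶜ n, ∃ k : ℤ, v - k • z ∈ relBdries ℤ X {x}ᶜ n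

lemma isFundClassOn_iff {reg : Set X} {μ : relHomology ℝ X A n} :
    IsFundClassOn X A reg n μ ↔ ∃ z ∈ relCycles ℤ X A n,
      (∃ h : intChainHom z ∈ relCycles ℝ X A n, relHomClass ⟨intChainHom z, h⟩ = μ) ∧
        ∀ x ∈ reg, IsLocalGenerator z x := by
  have generates_iff (z : SChain ℤ X (n + 1)) (x : X) : IsLocalGenerator z x ↔
      ∃ hz : z ∈ relCycles ℤ X {x}ᶜ n,
        ∀ β : relHomology ℤ X {x}ᶜ n, ∃ k : ℤ, β = k • relHomClass ⟨z, hz⟩ := by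
    refine exists_prop.symm.trans (exists_congr fun hz => ⟨fun h β => ?_, fun h v hv => ?_⟩)
    · obtain ⟨⟨v, hv⟩, rfl⟩ := Submodule.Quotient.mk_surjective _ β
      exact (h v hv).imp fun k hk =>
        relHomClass_eq_iff (c' := k • (⟨z, hz⟩ : relCycles ℤ X {x}ᶜ n)).2 hk
    · exact (h (relHomClass ⟨v, hv⟩)).imp fun k hk =>
        relHomClass_eq_iff (c' := k • (⟨z, hz⟩ : relCycles ℤ X {x}ᶜ n)).1 hk
  simp only [generates_iff, ← exists_prop (a := _ ∈ relCycles ℤ X A n)]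
  rfl

end FundamentalClasses

namespace BoundaryCollapse

variable {d m n : ℕ} {M Q : Type} [TopologicalSpace M] [TopologicalSpace Q] {B : Set M}
  (S : BoundaryCollapse d m M Q B)

lemma mapsTo_proj_bdry : Set.MapsTo S.proj B (Set.range S.tori) :=
  fun _ => S.proj_mem_range_tori_iff.2

lemma mapsTo_proj_compl_singleton {x : M} (hx : x ∉ B) :
    Set.MapsTo S.proj {x}ᶜ {S.proj x}ᶜ :=
  fun _ hy h => (S.eq_or_mem _ _ h).elim hy fun h => hx h.2

lemma exists_bdry_pushforward_proj_sub_eq_zero (hdn : d + 2 ≤ n) {z : SChain R M (n + 1)}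
    (hz : z ∈ relCycles R M B n) :
    ∃ w ∈ chainsIn R Q (Set.range S.tori) (n + 1),
      bdry R Q n (pushforward S.proj z - w) = 0 := by
  obtain ⟨n, rfl⟩ : ∃ k, n = k + 1 := ⟨n - 1, by lia⟩
  obtain ⟨w, hw, hwz⟩ := S.exists_bdry_eq_of_mem_chainsIn_range_tori (by lia)
    (pushforward_mem_chainsIn S.mapsTo_proj_bdry hz)
    (by rw [bdry_pushforward, bdry_bdry, map_zero])
  exact ⟨w, hw, by rw [map_sub, hwz, bdry_pushforward, sub_self]⟩

lemma isLocalGenerator_pushforward_proj_sub (h : IsTopMfdWithBdry (n + 1) M B)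
    {z : SChain ℤ M (n + 1)} {w : SChain ℤ Q (n + 1)}
    (hw : w ∈ chainsIn ℤ Q (Set.range S.tori) (n + 1))
    (hcycle : bdry ℤ Q n (pushforward S.proj z - w) = 0) {x : M} (hx : x ∉ B)
    (hz : IsLocalGenerator z x) : IsLocalGenerator (pushforward S.proj z - w) (S.proj x) := by
  have := S.t2Space
  refine ⟨relCycles_mono (Set.empty_subset _) (mem_relCycles_empty_iff.2 hcycle), fun v hv => ?_⟩
  obtain ⟨g, hg, ⟨t, rfl⟩, hgB⟩ := h.exists_interior_chart hx
  have himage : (S.proj.comp g) '' {t} = {S.proj (g t)} := Set.image_singleton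
  obtain ⟨y, hy, hvy⟩ := exists_relCycle_sub_pushforward_mem_relBdries
    (S.isOpenEmbedding_proj_comp hg hgB) (A := {t}) (himage ▸ isClosed_singleton) (himage ▸ hv)
  rw [himage, ← pushforward_pushforward] at hvy
  have hmaps : Set.MapsTo g {t}ᶜ {g t}ᶜ := fun s hs h => hs (hg.injective h)
  obtain ⟨k, hk⟩ := hz.2 (pushforward g y) (pushforward_mem_relCycles hmaps hy)
  have hproj := pushforward_mem_relBdries (S.mapsTo_proj_compl_singleton hx) hk
  have hw_rel : w ∈ relBdries ℤ Q {S.proj (g t)}ᶜ n :=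
    chainsIn_le_relBdries (chainsIn_mono (by
      rintro _ hr rfl
      exact hx (S.proj_mem_range_tori_iff.1 hr)) hw)
  refine ⟨k, ?_⟩
  convert add_mem (add_mem hvy hproj) (Submodule.smul_mem _ k hw_rel) using 1
  rw [map_sub, map_smul, smul_sub]
  abel

lemma exists_isFundClassOn (h : IsTopMfdWithBdry (n + 1) M B) (hdn : d + 2 ≤ n)
    {μ : relHomology ℝ M B n} (hμ : IsFundClass M B n μ) :
    ∃ ρ : relHomology ℝ Q ∅ n, IsFundClassOn Q ∅ (S.proj '' Bᶜ) n ρ := by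
  obtain ⟨z, hz, -, hgen⟩ := isFundClassOn_iff.1 hμ
  obtain ⟨w, hw, hcycle⟩ := S.exists_bdry_pushforward_proj_sub_eq_zero hdn hz
  have hreal : intChainHom (pushforward S.proj z - w) ∈ relCycles ℝ Q ∅ n :=
    mem_relCycles_empty_iff.2 (by rw [← intChainHom_bdry, hcycle, map_zero])
  refine ⟨relHomClass ⟨_, hreal⟩, isFundClassOn_iff.2
    ⟨_, mem_relCycles_empty_iff.2 hcycle, ⟨hreal, rfl⟩, ?_⟩⟩
  rintro _ ⟨x, hx, rfl⟩
  exact S.isLocalGenerator_pushforward_proj_sub h hw hcycle hx (hgen x hx)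

lemma exists_eq_smul_add_bdry [CompactSpace M] [PreconnectedSpace M]
    (h : IsTopMfdWithBdry (n + 1) M B) (hdn : d + 1 ≤ n) {v v' : SChain ℤ Q (n + 1)}
    (hv : bdry ℤ Q n v = 0) (hv' : bdry ℤ Q n v' = 0) {x : M} (hx : x ∉ B)
    (hgen : IsLocalGenerator v (S.proj x)) (hgen' : IsLocalGenerator v' (S.proj x)) :
    ∃ s : ℝ, |s| ≤ 1 ∧ ∃ e, intChainHom v' = s • intChainHom v + bdry ℝ Q (n + 1) e := by
  have exists_multiple {v v' : SChain ℤ Q (n + 1)} (hv : bdry ℤ Q n v = 0)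
      (hv' : bdry ℤ Q n v' = 0) (hgen : IsLocalGenerator v (S.proj x)) :
      ∃ (k : ℤ) (a : SChain ℝ Q (n + 2)),
        bdry ℝ Q (n + 1) a = intChainHom v' - (k : ℝ) • intChainHom v := by
    obtain ⟨k, hk⟩ := hgen.2 v' (relCycles_mono (Set.empty_subset _)
      (mem_relCycles_empty_iff.2 hv'))
    obtain ⟨a, ha⟩ := S.exists_bdry_eq_of_mem_relBdries h hdn
      (by rw [map_sub, map_smul, hv, hv', smul_zero, sub_zero]) hx hk
    exact ⟨k, intChainHom a, by rw [← intChainHom_bdry, ha, map_sub, intChainHom_zsmul]⟩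
  obtain ⟨k, a, ha⟩ := exists_multiple hv hv' hgen
  obtain ⟨l, b, hb⟩ := exists_multiple hv' hv hgen'
  -- Either `k` is a unit, or `v'` is a real boundary because `(1 - k * l) • v'` is one.
  by_cases hkl : k * l = 1
  · have hk : |k| = 1 := Int.isUnit_iff_abs_eq.1 (.of_mul_eq_one _ hkl)
    exact ⟨k, by exact_mod_cast hk.le, a, by rw [ha]; abel⟩
  · have hne : 1 - (k : ℝ) * l ≠ 0 := sub_ne_zero.2 (by exact_mod_cast Ne.symm hkl)
    have hbdry : bdry ℝ Q (n + 1) (a + (k : ℝ) • b) = (1 - (k : ℝ) * l) • intChainHom v' := by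
      rw [map_add, map_smul, ha, hb]
      module
    exact ⟨0, by simp, (1 - (k : ℝ) * l)⁻¹ • (a + (k : ℝ) • b),
      by rw [map_smul, hbdry, inv_smul_smul₀ hne, zero_smul, zero_add]⟩

end BoundaryCollapse

/-! ### The `ℓ¹`-norm, averages and alternation -/

section L1Norm

variable {Y : Type} [TopologicalSpace Y] {n k : ℕ} {A : Set X}

lemma l1_nonneg (c : SChain ℝ X n) : 0 ≤ l1 c :=
  Finset.sum_nonneg fun _ _ => abs_nonneg _

@[simp]
lemma l1_zero : l1 (0 : SChain ℝ X n) = 0 := by simp [l1]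

@[simp]
lemma l1_ofSimplex (σ : SSimplex X n) : l1 (ofSimplex ℝ σ) = 1 := by simp [l1, ofSimplex]

lemma l1_smul (a : ℝ) (c : SChain ℝ X n) : l1 (a • c) = |a| * l1 c := by
  unfold l1
  rw [map_smul, Finsupp.sum_smul_index (by simp)]
  simp only [abs_mul]
  exact (Finsupp.mul_sum _ _).symm

@[simp]
lemma l1_neg (c : SChain ℝ X n) : l1 (-c) = l1 c := by
  rw [← neg_one_smul ℝ, l1_smul, abs_neg, abs_one, one_mul]

lemma l1_add_le (a b : SChain ℝ X n) : l1 (a + b) ≤ l1 a + l1 b := by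
  classical
  have sum_abs_add_le (f g : SSimplex X n →₀ ℝ) :
      ((f + g).sum fun _ r => |r|) ≤ (f.sum fun _ r => |r|) + g.sum fun _ r => |r| := by
    rw [Finsupp.sum_of_support_subset (f + g) Finsupp.support_add _ (by simp),
      Finsupp.sum_of_support_subset f (Finset.subset_union_left (s₂ := g.support)) _ (by simp),
      Finsupp.sum_of_support_subset g (Finset.subset_union_right (s₁ := f.support)) _ (by simp),
      ← Finset.sum_add_distrib]
    exact Finset.sum_le_sum fun σ _ => abs_add_le _ _
  exact sum_abs_add_le _ _

lemma l1_sub_le (a b : SChain ℝ X n) : l1 (a - b) ≤ l1 a + l1 b := by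
  rw [sub_eq_add_neg, ← l1_neg b]
  exact l1_add_le _ _

lemma l1_sum_le {ι : Type*} (s : Finset ι) (f : ι → SChain ℝ X n) :
    l1 (∑ i ∈ s, f i) ≤ ∑ i ∈ s, l1 (f i) :=
  Finset.le_sum_of_subadditive l1 l1_zero.le l1_add_le s f

lemma l1_chainLift_le {φ : SSimplex X n → SChain ℝ Y k} (h : ∀ σ, l1 (φ σ) ≤ 1)
    (c : SChain ℝ X n) : l1 (chainLift φ c) ≤ l1 c := by
  let f := (chainEquiv ℝ X n).symm c
  calc l1 (chainLift φ c) = l1 (∑ σ ∈ f.support, f σ • φ σ) := by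
        simp [chainLift, Finsupp.linearCombination_apply, Finsupp.sum, f]
    _ ≤ ∑ σ ∈ f.support, |f σ| * l1 (φ σ) := by
        simpa only [l1_smul] using l1_sum_le f.support fun σ => f σ • φ σ
    _ ≤ ∑ σ ∈ f.support, |f σ| :=
        Finset.sum_le_sum fun σ _ => mul_le_of_le_one_right (abs_nonneg _) (h σ)

lemma l1_pushforward_le (f : C(X, Y)) (c : SChain ℝ X n) : l1 (pushforward f c) ≤ l1 c :=
  l1_chainLift_le (fun _ => (l1_ofSimplex _).le) c

lemma l1_naturalOp_le {a : SChain ℝ (Δ n) k} (ha : l1 a ≤ 1) (c : SChain ℝ X n) :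
    l1 (naturalOp a c) ≤ l1 c :=
  l1_chainLift_le (fun σ => (l1_pushforward_le σ a).trans ha) c

lemma l1HomNorm_le (c : relCycles ℝ X A n) : l1HomNorm (relHomClass c) ≤ l1 c.1 :=
  csInf_le ⟨0, by rintro _ ⟨c, -, rfl⟩; exact l1_nonneg _⟩ ⟨c, rfl, rfl⟩

lemma l1HomNorm_le_add_bdry (c : relCycles ℝ X A n) (e : SChain ℝ X (n + 2)) :
    l1HomNorm (relHomClass c) ≤ l1 (c.1 + bdry ℝ X (n + 1) e) := by
  let c' : relCycles ℝ X A n :=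
    ⟨c.1 + bdry ℝ X (n + 1) e, add_mem c.2 (relBdries_le_relCycles (bdry_mem_relBdries e))⟩
  have hclass : relHomClass c' = relHomClass c :=
    relHomClass_eq_iff.2 (by simpa [c'] using bdry_mem_relBdries e)
  exact hclass ▸ l1HomNorm_le c'

end L1Norm

section Average

variable {G G' W V : Type*} [Fintype G] [Fintype G'] [AddCommGroup W] [Module ℝ W]
  [AddCommGroup V] [Module ℝ V]

/-- The mean of a function on a finite type with values in a real vector space (the junk value on
the empty type is `0`). -/
def average (F : G → W) : W := (Fintype.card G : ℝ)⁻¹ • ∑ g, F g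

lemma card_smul_average [Nonempty G] (F : G → W) :
    (Fintype.card G : ℝ) • average F = ∑ g, F g :=
  smul_inv_smul₀ (Nat.cast_ne_zero.2 Fintype.card_ne_zero) _

lemma average_const [Nonempty G] (w : W) : average (fun _ : G => w) = w := by
  rw [average, Finset.sum_const, Finset.card_univ, ← Nat.cast_smul_eq_nsmul ℝ,
    inv_smul_smul₀ (Nat.cast_ne_zero.2 Fintype.card_ne_zero)]

lemma average_sub (F F' : G → W) : average (fun g => F g - F' g) = average F - average F' := by
  simp only [average, Finset.sum_sub_distrib, smul_sub]

lemma map_average (f : W →ₗ[ℝ] V) (F : G → W) : f (average F) = average fun g => f (F g) := by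
  simp only [average, map_smul, map_sum]

lemma average_smul (c : ℝ) (F : G → W) : average (fun g => c • F g) = c • average F := by
  simp only [average, ← Finset.smul_sum, smul_comm c]

lemma average_sum {ι : Type*} (s : Finset ι) (F : ι → G → W) :
    average (fun g => ∑ i ∈ s, F i g) = ∑ i ∈ s, average (F i) := by
  simp only [average, ← Finset.smul_sum]
  rw [Finset.sum_comm]

lemma average_comp_equiv (e : G ≃ G') (F : G' → W) : average (fun g => F (e g)) = average F := by
  rw [average, average, e.sum_comp, Fintype.card_congr e]

lemma average_prod (F : G × G' → W) :
    average F = average fun g => average fun g' => F (g, g') := by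
  simp only [average, Fintype.card_prod, Fintype.sum_prod_type, ← Finset.smul_sum, smul_smul,
    Nat.cast_mul, mul_inv]

lemma l1_average_le {n : ℕ} {F : G → SChain ℝ X n} (h : ∀ g, l1 (F g) ≤ 1) :
    l1 (average F) ≤ 1 := by
  have hsum : l1 (∑ g, F g) ≤ Fintype.card G :=
    (l1_sum_le _ _).trans ((Finset.sum_le_sum fun g _ => h g).trans (by simp))
  rw [average, l1_smul, abs_of_nonneg (by positivity)]
  exact (mul_le_mul_of_nonneg_left hsum (by positivity)).trans inv_mul_le_one

end Average

section Alternation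

variable {k : ℕ}

/-- The permutation of `Fin (k + 2)` sending `i` to `j` and inducing `ρ` between the complements of
`i` and `j`, both of which are identified with `Fin (k + 1)` by the order. -/
def extendPerm (i j : Fin (k + 2)) (ρ : Equiv.Perm (Fin (k + 1))) : Equiv.Perm (Fin (k + 2)) :=
  j.cycleRange.symm * Equiv.Perm.decomposeFin.symm (0, ρ) * i.cycleRange

lemma extendPerm_succAbove (i j : Fin (k + 2)) (ρ : Equiv.Perm (Fin (k + 1))) (l : Fin (k + 1)) :
    extendPerm i j ρ (i.succAbove l) = j.succAbove (ρ l) := by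
  simp [extendPerm]

lemma extendPerm_self (i j : Fin (k + 2)) (ρ : Equiv.Perm (Fin (k + 1))) :
    extendPerm i j ρ i = j := by
  simp [extendPerm]

lemma neg_one_pow_mul_sign_extendPerm (i j : Fin (k + 2)) (ρ : Equiv.Perm (Fin (k + 1))) :
    (-1 : ℝ) ^ (i : ℕ) * ((Equiv.Perm.sign (extendPerm i j ρ) : ℤ) : ℝ) =
      (-1 : ℝ) ^ (j : ℕ) * ((Equiv.Perm.sign ρ : ℤ) : ℝ) := by
  have hsq : (-1 : ℝ) ^ (i : ℕ) * (-1 : ℝ) ^ (i : ℕ) = 1 := by simp [← mul_pow]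
  have hsign : ((Equiv.Perm.sign (extendPerm i j ρ) : ℤ) : ℝ) =
      (-1) ^ (j : ℕ) * ((Equiv.Perm.sign ρ : ℤ) : ℝ) * (-1) ^ (i : ℕ) := by
    simp [extendPerm, Fin.sign_cycleRange]
  linear_combination (-1 : ℝ) ^ (i : ℕ) * hsign +
    (-1 : ℝ) ^ (j : ℕ) * ((Equiv.Perm.sign ρ : ℤ) : ℝ) * hsq

lemma bijective_extendPerm (i : Fin (k + 2)) : Function.Bijective
    fun p : Fin (k + 2) × Equiv.Perm (Fin (k + 1)) => extendPerm i p.1 p.2 := by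
  rw [Fintype.bijective_iff_injective_and_card]
  refine ⟨?_, Fintype.card_congr Equiv.Perm.decomposeFin.symm⟩
  rintro ⟨j, ρ⟩ ⟨j', ρ'⟩ h
  obtain rfl : j = j' := by
    simpa only [extendPerm_self] using DFunLike.congr_fun h i
  congr 1
  ext1 l
  have hl := DFunLike.congr_fun h (i.succAbove l)
  simp only [extendPerm_succAbove] at hl
  exact Fin.succAbove_right_injective hl

/-- The chain whose natural operator is the alternation of singular chains. -/
def altChain (k : ℕ) : SChain ℝ (Δ k) k :=
  average fun π : Equiv.Perm (Fin (k + 1)) =>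
    ((Equiv.Perm.sign π : ℤ) : ℝ) • ofSimplex ℝ (simplexMap π)

lemma bdry_altChain (k : ℕ) : bdry ℝ _ k (altChain (k + 1)) =
    naturalOp (altChain k) (bdry ℝ _ k (idChain ℝ (k + 1))) := by
  let term (j : Fin (k + 2)) (ρ : Equiv.Perm (Fin (k + 1))) : SChain ℝ (Δ (k + 1)) k :=
    ((-1 : ℝ) ^ (j : ℕ) * ((Equiv.Perm.sign ρ : ℤ) : ℝ)) •
      ofSimplex ℝ (simplexMap (j.succAbove ∘ ρ))
  have average_face (i : Fin (k + 2)) :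
      average (fun π : Equiv.Perm (Fin (k + 2)) => ((-1 : ℝ) ^ (i : ℕ) *
        ((Equiv.Perm.sign π : ℤ) : ℝ)) • ofSimplex ℝ (simplexMap (n := k + 1) (π ∘ i.succAbove))) =
      average fun p : Fin (k + 2) × Equiv.Perm (Fin (k + 1)) => term p.1 p.2 := by
    rw [← average_comp_equiv (.ofBijective _ (bijective_extendPerm i))]
    congr 1
    funext ⟨j, ρ⟩
    simp only [term, Equiv.ofBijective_apply, neg_one_pow_mul_sign_extendPerm]
    rw [show extendPerm i j ρ ∘ i.succAbove = j.succAbove ∘ ρ from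
      funext (extendPerm_succAbove i j ρ)]
  calc bdry ℝ _ k (altChain (k + 1))
    _ = ∑ i : Fin (k + 2), average fun π : Equiv.Perm (Fin (k + 2)) => ((-1 : ℝ) ^ (i : ℕ) *
        ((Equiv.Perm.sign π : ℤ) : ℝ)) •
          ofSimplex ℝ (simplexMap (n := k + 1) (π ∘ i.succAbove)) := by
      simp only [altChain, map_average, map_smul, bdry_ofSimplex, faceOf, face_eq_simplexMap,
        simplexMap_comp, mul_smul, Finset.smul_sum, average_sum]
      simp only [smul_comm ((-1 : ℝ) ^ _)]
    _ = (Fintype.card (Fin (k + 2)) : ℝ) • average fun j => average (term j) := by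
      simp only [average_face, Finset.sum_const, Finset.card_univ, average_prod,
        Nat.cast_smul_eq_nsmul ℝ]
    _ = naturalOp (altChain k) (bdry ℝ _ k (idChain ℝ (k + 1))) := by
      rw [card_smul_average, idChain, bdry_ofSimplex, map_sum]
      refine Finset.sum_congr rfl fun j _ => ?_
      simp only [term, map_smul, naturalOp_ofSimplex, altChain, map_average, pushforward_ofSimplex,
        faceOf, ContinuousMap.id_comp, face_eq_simplexMap, simplexMap_comp, mul_smul]
      simp [average, Finset.smul_sum, smul_comm ((-1 : ℝ) ^ _)]

lemma isNaturalChainMap_altChain : IsNaturalChainMap altChain where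
  zero := by
    have hperm (π : Equiv.Perm (Fin (0 + 1))) : π = 1 :=
      Equiv.ext fun _ => Subsingleton.elim (α := Fin 1) _ _
    simp only [altChain, hperm, average_const, Equiv.Perm.coe_one, simplexMap_id, idChain]
    simp
  bdry_succ := bdry_altChain

-- Precomposition with a transposition reverses all signs.
lemma augmentation_altChain (k : ℕ) : augmentation ℝ _ (k + 1) (altChain (k + 1)) = 0 := by
  have hswap := average_comp_equiv (Equiv.mulRight (Equiv.swap (0 : Fin (k + 2)) 1))
    fun π : Equiv.Perm (Fin (k + 2)) => ((Equiv.Perm.sign π : ℤ) : ℝ)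
  simp only [Equiv.coe_mulRight, Equiv.Perm.sign_mul, Equiv.Perm.sign_swap Fin.zero_ne_one, mul_neg,
    mul_one, Units.val_neg, Int.cast_neg] at hswap
  simp only [altChain, map_average, map_smul, augmentation_ofSimplex, smul_eq_mul, mul_one]
  simp only [average, Finset.sum_neg_distrib, smul_neg] at hswap ⊢
  linarith

lemma l1_altChain_le (k : ℕ) : l1 (altChain k) ≤ 1 :=
  l1_average_le fun π => by
    rcases Int.units_eq_one_or (Equiv.Perm.sign π) with h | h <;> simp [h]

end Alternation

/-! ### Extending homotopies over a prism -/

section PrismExtension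

variable {Q : Type} [TopologicalSpace Q] {k : ℕ}

lemma exists_face_eq_of_apply_eq_zero {i : Fin (k + 2)} {y : Δ (k + 1)} (h : y.1 i = 0) :
    ∃ x : Δ k, face i x = y := by
  have hsum : ∑ j, y.1 (i.succAbove j) = 1 := by
    simpa only [Fin.sum_univ_succAbove _ i, h, zero_add] using y.2.2
  refine ⟨⟨fun j => y.1 (i.succAbove j), fun j => y.2.1 _, hsum⟩, Subtype.ext (funext fun j => ?_)⟩
  rcases Fin.eq_self_or_eq_succAbove i j with rfl | ⟨l, rfl⟩
  · rw [face_apply_self, h]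
  · rw [face_apply_succAbove]

lemma face_injective (i : Fin (k + 2)) : Function.Injective (face (n := k) i) := by
  intro x y h
  refine Subtype.ext (funext fun j => ?_)
  rw [← face_apply_succAbove i x, h, face_apply_succAbove]

/-- The bottom and the sides of the prism `Δ (k + 1) × [0, 1]`. -/
def prismBottomSides (k : ℕ) : Set (Δ (k + 1) × unitInterval) := {p | p.2 = 0 ∨ ∃ i, p.1.1 i = 0}

/-- The amount by which `prismRetraction` lowers the barycentric coordinates. It vanishes exactly
on the bottom and the sides; the factor `2` keeps the sum of the lowered coordinates positive. -/
def retractionShift (k : ℕ) (p : Δ (k + 1) × unitInterval) : ℝ :=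
  min (Finset.univ.inf' Finset.univ_nonempty p.1.1) ((p.2 : ℝ) / (2 * (k + 2)))

lemma continuous_retractionShift : Continuous (retractionShift k) := by
  refine Continuous.min ?_ (by fun_prop)
  exact Continuous.finset_inf'_apply _ fun i _ =>
    (continuous_apply i).comp (continuous_subtype_val.comp continuous_fst)

lemma retractionShift_nonneg (p : Δ (k + 1) × unitInterval) : 0 ≤ retractionShift k p :=
  le_min (Finset.le_inf' _ _ fun i _ => p.1.2.1 i) (div_nonneg p.2.2.1 (by positivity))

lemma retractionShift_le_apply (p : Δ (k + 1) × unitInterval) (i : Fin (k + 2)) :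
    retractionShift k p ≤ p.1.1 i :=
  (min_le_left _ _).trans (Finset.inf'_le _ (Finset.mem_univ i))

lemma mul_retractionShift_le (p : Δ (k + 1) × unitInterval) :
    2 * (k + 2) * retractionShift k p ≤ p.2 :=
  (le_div_iff₀' (by positivity)).1 (min_le_right _ _)

lemma one_sub_mul_retractionShift_pos (p : Δ (k + 1) × unitInterval) :
    0 < 1 - (k + 2) * retractionShift k p := by
  linarith [mul_retractionShift_le p, p.2.2.2]

/-- The retraction of the prism `Δ (k + 1) × [0, 1]` onto its bottom and sides. -/
def prismRetraction (k : ℕ) : C(Δ (k + 1) × unitInterval, Δ (k + 1) × unitInterval) where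
  toFun p :=
    (⟨fun i => (p.1.1 i - retractionShift k p) / (1 - (k + 2) * retractionShift k p),
      fun i => div_nonneg (sub_nonneg.2 (retractionShift_le_apply p i))
        (one_sub_mul_retractionShift_pos p).le, by
        rw [← Finset.sum_div, Finset.sum_sub_distrib, p.1.2.2,
          div_eq_one_iff_eq (one_sub_mul_retractionShift_pos p).ne']
        simp only [Finset.sum_const, Finset.card_univ, Fintype.card_fin, nsmul_eq_mul]
        push_cast
        ring⟩,
    ⟨p.2 - 2 * (k + 2) * retractionShift k p, sub_nonneg.2 (mul_retractionShift_le p),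
      (sub_le_self _ (mul_nonneg (by positivity) (retractionShift_nonneg p))).trans p.2.2.2⟩)
  continuous_toFun := by
    have hshift := continuous_retractionShift (k := k)
    refine Continuous.prodMk (Continuous.subtype_mk (continuous_pi fun i => Continuous.div ?_ ?_
      fun p => (one_sub_mul_retractionShift_pos p).ne') _) (Continuous.subtype_mk ?_ _)
    · exact ((continuous_apply i).comp (continuous_subtype_val.comp continuous_fst)).sub hshift
    all_goals fun_prop

lemma prismRetraction_mem (p : Δ (k + 1) × unitInterval) :
    prismRetraction k p ∈ prismBottomSides k := by
  rcases min_choice (Finset.univ.inf' Finset.univ_nonempty p.1.1) ((p.2 : ℝ) / (2 * (k + 2)))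
    with hmin | hmin
  · obtain ⟨i, -, hi⟩ := Finset.exists_mem_eq_inf' Finset.univ_nonempty p.1.1
    have hshift : retractionShift k p = p.1.1 i := hmin.trans hi
    exact Or.inr ⟨i, by simp [prismRetraction, hshift]⟩
  · have hshift : 2 * (k + 2) * retractionShift k p = p.2 := by
      rw [retractionShift, hmin, mul_div_cancel₀ _ (by positivity)]
    exact Or.inl (Subtype.ext (by simp [prismRetraction, hshift]))

lemma prismRetraction_of_mem {p : Δ (k + 1) × unitInterval} (h : p ∈ prismBottomSides k) :
    prismRetraction k p = p := by
  have hshift : retractionShift k p = 0 := by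
    refine le_antisymm ?_ (retractionShift_nonneg p)
    rcases h with h | ⟨i, h⟩
    · have hle := mul_retractionShift_le p
      rw [h] at hle
      exact nonpos_of_mul_nonpos_right hle (by positivity)
    · exact h ▸ retractionShift_le_apply p i
  ext <;> simp [prismRetraction, hshift]

/-- The decomposition of `prismBottomSides` into the bottom and the individual sides. -/
def prismBottomSidesCover (k : ℕ) :
    C(Δ (k + 1) ⊕ (Σ _ : Fin (k + 2), Δ k × unitInterval), prismBottomSides k) where
  toFun := Sum.elim (fun x => ⟨(x, 0), Or.inl rfl⟩)
    fun p => ⟨(face p.1 p.2.1, p.2.2), Or.inr ⟨p.1, face_apply_self _ _⟩⟩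
  continuous_toFun := Continuous.sumElim (Continuous.subtype_mk (by fun_prop) _)
    (continuous_sigma fun _ => Continuous.subtype_mk (by fun_prop) _)

lemma isQuotientMap_prismBottomSidesCover (k : ℕ) :
    Topology.IsQuotientMap (prismBottomSidesCover k) := by
  refine (map_continuous _).isClosedMap.isQuotientMap (map_continuous _) ?_
  rintro ⟨⟨y, t⟩, h | ⟨i, h⟩⟩
  · exact ⟨Sum.inl y, Subtype.ext (Prod.ext rfl h.symm)⟩
  · obtain ⟨x, rfl⟩ := exists_face_eq_of_apply_eq_zero h
    exact ⟨Sum.inr ⟨i, x, t⟩, rfl⟩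

lemma exists_extension_prismBottomSides (σ : SSimplex Q (k + 1))
    (h : Fin (k + 2) → C(Δ k × unitInterval, Q)) (h0 : ∀ i x, h i (x, 0) = σ (face i x))
    (hcompat : ∀ i j x y t, face i x = face j y → h i (x, t) = h j (y, t)) :
    ∃ G : C(prismBottomSides k, Q),
      ∀ a, G (prismBottomSidesCover k a) = Sum.elim σ (fun p => h p.1 p.2) a := by
  let g : C(Δ (k + 1) ⊕ (Σ _ : Fin (k + 2), Δ k × unitInterval), Q) :=
    ⟨Sum.elim σ fun p => h p.1 p.2,
      σ.continuous.sumElim (continuous_sigma fun i => (h i).continuous)⟩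
  have hg : Function.FactorsThrough g (prismBottomSidesCover k) := by
    intro a b hab
    have hΔ := congrArg (fun z => z.1.1) hab
    have ht := congrArg (fun z => z.1.2) hab
    rcases a with x | ⟨i, x, t⟩ <;> rcases b with y | ⟨j, y, s⟩
    · exact congrArg σ hΔ
    · obtain rfl : x = face j y := hΔ
      obtain rfl : 0 = s := ht
      exact (h0 j y).symm
    · obtain rfl : face i x = y := hΔ
      obtain rfl : t = 0 := ht
      exact h0 i x
    · obtain rfl : t = s := ht
      exact hcompat i j x y t hΔ
  have hquot := isQuotientMap_prismBottomSidesCover k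
  exact ⟨hquot.lift g hg, DFunLike.congr_fun (hquot.lift_comp g hg)⟩

lemma exists_prism_extension (σ : SSimplex Q (k + 1)) (h : Fin (k + 2) → C(Δ k × unitInterval, Q))
    (h0 : ∀ i x, h i (x, 0) = σ (face i x))
    (hcompat : ∀ i j x y t, face i x = face j y → h i (x, t) = h j (y, t)) :
    ∃ G : C(Δ (k + 1) × unitInterval, Q),
      (∀ x, G (x, 0) = σ x) ∧ ∀ i x t, G (face i x, t) = h i (x, t) := by
  obtain ⟨G, hG⟩ := exists_extension_prismBottomSides σ h h0 hcompat
  let retract : C(Δ (k + 1) × unitInterval, prismBottomSides k) :=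
    ⟨fun p => ⟨prismRetraction k p, prismRetraction_mem p⟩,
      Continuous.subtype_mk (map_continuous _) _⟩
  have retract_cover (a) : retract (prismBottomSidesCover k a).1 = prismBottomSidesCover k a :=
    Subtype.ext (prismRetraction_of_mem (prismBottomSidesCover k a).2)
  refine ⟨G.comp retract, fun x => ?_, fun i x t => ?_⟩
  · exact (congrArg G (retract_cover (Sum.inl x))).trans (hG _)
  · exact (congrArg G (retract_cover (Sum.inr ⟨i, x, t⟩))).trans (hG _)

end PrismExtension

/-! ### Straightening along torus coverings -/

section LatticeSimplices

variable {k r : ℕ}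

lemma face_vertex (i : Fin (k + 2)) (j : Fin (k + 1)) :
    face i (stdSimplex.vertex j) = stdSimplex.vertex (i.succAbove j) := by
  rw [face_eq_simplexMap]
  exact stdSimplex.map_vertex _ _

lemma exists_forall_eq_intCast {f : Δ k → ℝ} (hf : Continuous f) (h : ∀ x, ∃ z : ℤ, f x = z) :
    ∃ z : ℤ, ∀ x, f x = z := by
  choose z hz using h
  have hcont : Continuous z := by
    rw [Int.isClosedEmbedding_coe_real.isInducing.continuous_iff]
    exact hf.congr hz
  refine ⟨z (stdSimplex.vertex 0), fun x => ?_⟩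
  rw [hz, PreconnectedSpace.constant inferInstance hcont]

/-- The affine simplex in `ℝ ^ r` with the integral vertices `v`. -/
def latticeSimplex (v : Fin (k + 1) → Fin r → ℤ) : C(Δ k, Fin r → ℝ) where
  toFun x c := ∑ j, x.1 j * (v j c : ℝ)
  continuous_toFun := continuous_pi fun _ => continuous_finsetSum _ fun j _ =>
    ((continuous_apply j).comp continuous_subtype_val).mul continuous_const

lemma latticeSimplex_apply (v : Fin (k + 1) → Fin r → ℤ) (x : Δ k) (c : Fin r) :
    latticeSimplex v x c = ∑ j, x.1 j * (v j c : ℝ) := rfl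

lemma latticeSimplex_face (v : Fin (k + 2) → Fin r → ℤ) (i : Fin (k + 2)) (x : Δ k) :
    latticeSimplex v (face i x) = latticeSimplex (v ∘ i.succAbove) x := by
  funext c
  simp only [latticeSimplex_apply, Fin.sum_univ_succAbove _ i, face_apply_self,
    face_apply_succAbove, zero_mul, zero_add, Function.comp_apply]

/-- The vertices of a simplex in `ℝ ^ r`, rounded down to the lattice `ℤ ^ r`. -/
def roundedVertices (s : C(Δ k, Fin r → ℝ)) : Fin (k + 1) → Fin r → ℤ :=
  fun j c => ⌊s (stdSimplex.vertex j) c⌋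

lemma roundedVertices_comp_face (s : C(Δ (k + 1), Fin r → ℝ)) (i : Fin (k + 2)) :
    roundedVertices (s.comp (face i)) = roundedVertices s ∘ i.succAbove := by
  funext j c
  simp only [roundedVertices, ContinuousMap.comp_apply, face_vertex, Function.comp_apply]

/-- The straight-line homotopy from a simplex in `ℝ ^ r` to the affine simplex on its rounded
vertices, translated by the labels `g`. -/
def latticeHomotopy (s : C(Δ k, Fin r → ℝ)) (g : Fin (k + 1) → Fin r → ℤ) :
    C(Δ k × unitInterval, Fin r → ℝ) where
  toFun p := (1 - (p.2 : ℝ)) • s p.1 + (p.2 : ℝ) • latticeSimplex (roundedVertices s + g) p.1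

lemma latticeHomotopy_apply (s : C(Δ k, Fin r → ℝ)) (g : Fin (k + 1) → Fin r → ℤ) (x : Δ k)
    (t : unitInterval) : latticeHomotopy s g (x, t) =
      (1 - (t : ℝ)) • s x + (t : ℝ) • latticeSimplex (roundedVertices s + g) x := rfl

lemma latticeHomotopy_zero (s : C(Δ k, Fin r → ℝ)) (g : Fin (k + 1) → Fin r → ℤ) (x : Δ k) :
    latticeHomotopy s g (x, 0) = s x := by
  simp [latticeHomotopy_apply]

lemma latticeHomotopy_one (s : C(Δ k, Fin r → ℝ)) (g : Fin (k + 1) → Fin r → ℤ) (x : Δ k) :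
    latticeHomotopy s g (x, 1) = latticeSimplex (roundedVertices s + g) x := by
  simp [latticeHomotopy_apply]

lemma latticeHomotopy_face (s : C(Δ (k + 1), Fin r → ℝ)) (g : Fin (k + 2) → Fin r → ℤ)
    (i : Fin (k + 2)) (x : Δ k) (t : unitInterval) :
    latticeHomotopy s g (face i x, t) =
      latticeHomotopy (s.comp (face i)) (g ∘ i.succAbove) (x, t) := by
  simp only [latticeHomotopy_apply, latticeSimplex_face, roundedVertices_comp_face,
    ContinuousMap.comp_apply, Pi.add_comp]

-- By connectedness, the integers by which the two simplices differ do not depend on the point.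
lemma exists_latticeHomotopy_eq_add_intCast {s s' : C(Δ k, Fin r → ℝ)}
    (g : Fin (k + 1) → Fin r → ℤ) {c : Fin r} (h : ∀ x, ∃ z : ℤ, s x c = s' x c + z)
    (p : Δ k × unitInterval) :
    ∃ z : ℤ, latticeHomotopy s g p c = latticeHomotopy s' g p c + z := by
  obtain ⟨z, hz⟩ := exists_forall_eq_intCast (f := fun x => s x c - s' x c) (by fun_prop)
    fun x => (h x).imp fun z hz => by rw [hz, add_sub_cancel_left]
  have hs (x) : s x c = s' x c + z := by rw [← hz x, add_sub_cancel]
  obtain ⟨x, t⟩ := p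
  have hsum : ∑ j, x.1 j * (z : ℝ) = z := by rw [← Finset.sum_mul, x.2.2, one_mul]
  have hlattice : latticeSimplex (roundedVertices s + g) x c =
      latticeSimplex (roundedVertices s' + g) x c + z := by
    rw [← hsum]
    simp only [latticeSimplex_apply, Pi.add_apply, roundedVertices, hs, Int.floor_add_intCast,
      ← Finset.sum_add_distrib]
    refine Finset.sum_congr rfl fun j _ => ?_
    push_cast
    ring
  refine ⟨z, ?_⟩
  simp only [latticeHomotopy_apply, Pi.add_apply, Pi.smul_apply, smul_eq_mul, hlattice, hs]
  ring

end LatticeSimplices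

section Straightening

variable {Q : Type} [TopologicalSpace Q] {ι : Type} {k r : ℕ}

/-- A family of maps from `ℝ ^ r` to `Q` with disjoint images, the `i`-th of which is the quotient
by the integral translations of the coordinates in `IsPeriodic i` and by all translations of the
other coordinates. -/
structure TorusCoverings (Q : Type) [TopologicalSpace Q] (ι : Type) (r : ℕ) where
  cover : ι → C(Fin r → ℝ, Q)
  IsPeriodic : ι → Fin r → Prop
  cover_eq_iff : ∀ i i' a b,
    cover i a = cover i' b ↔ i = i' ∧ ∀ c, IsPeriodic i c → ∃ z : ℤ, a c = b c + z

/-- A homotopy for every singular `k`-simplex with labels in `ℤ ^ r` at its vertices. -/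
abbrev HomotopyFamily (Q : Type) [TopologicalSpace Q] (r k : ℕ) : Type :=
  SSimplex Q k → (Fin (k + 1) → Fin r → ℤ) → C(Δ k × unitInterval, Q)

/-- The homotopies of the faces of a simplex agree where the faces meet. -/
def IsFaceConsistent (H : HomotopyFamily Q r k) : Prop :=
  ∀ (σ : SSimplex Q (k + 1)) (g : Fin (k + 2) → Fin r → ℤ) (i j : Fin (k + 2)) (x y : Δ k)
    (t : unitInterval), face i x = face j y →
      H (faceOf σ i) (g ∘ i.succAbove) (x, t) = H (faceOf σ j) (g ∘ j.succAbove) (y, t)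

/-- The homotopies in `H'` restrict on the faces to the homotopies in `H`. -/
def IsFaceCompatible (H : HomotopyFamily Q r k) (H' : HomotopyFamily Q r (k + 1)) : Prop :=
  ∀ (σ : SSimplex Q (k + 1)) (g : Fin (k + 2) → Fin r → ℤ) (i : Fin (k + 2)) (x : Δ k)
    (t : unitInterval), H' σ g (face i x, t) = H (faceOf σ i) (g ∘ i.succAbove) (x, t)

lemma IsFaceCompatible.isFaceConsistent {H : HomotopyFamily Q r k}
    {H' : HomotopyFamily Q r (k + 1)} (h : IsFaceCompatible H H') : IsFaceConsistent H' := by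
  intro σ g i j x y t hxy
  rcases Fin.eq_self_or_eq_succAbove i j with rfl | ⟨l, rfl⟩
  · rw [face_injective _ hxy]
  · have hxl : x.1 l = 0 := by rw [← face_apply_succAbove i, hxy, face_apply_self]
    obtain ⟨u, rfl⟩ := exists_face_eq_of_apply_eq_zero hxl
    have hface := DFunLike.congr_fun (face_comp_face (n := k) i l) u
    simp only [ContinuousMap.comp_apply] at hface
    rw [← hface] at hxy
    obtain rfl := face_injective _ hxy
    rw [h, h, faceOf_faceOf]
    congr 2
    funext a
    simp [Fin.succAbove_succAbove_succAbove_predAbove]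

lemma isFaceConsistent_zero (H : HomotopyFamily Q r 0) : IsFaceConsistent H := by
  intro σ g i j x y t hxy
  rcases Fin.eq_self_or_eq_succAbove i j with rfl | ⟨l, rfl⟩
  · rw [face_injective _ hxy]
  · have hxl : x.1 l = 0 := by rw [← face_apply_succAbove i, hxy, face_apply_self]
    have hsum := x.2.2
    rw [Fin.sum_univ_one, Subsingleton.elim 0 l, hxl] at hsum
    exact absurd hsum zero_ne_one

namespace TorusCoverings

variable (P : TorusCoverings Q ι r)

lemma cover_latticeHomotopy_congr {i i' : ι} {s s' : C(Δ k, Fin r → ℝ)}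
    (h : (P.cover i).comp s = (P.cover i').comp s') (g : Fin (k + 1) → Fin r → ℤ)
    (p : Δ k × unitInterval) :
    P.cover i (latticeHomotopy s g p) = P.cover i' (latticeHomotopy s' g p) := by
  have hpoint (x) : P.cover i (s x) = P.cover i' (s' x) := DFunLike.congr_fun h x
  simp only [P.cover_eq_iff] at hpoint ⊢
  exact ⟨(hpoint (stdSimplex.vertex 0)).1,
    fun c hc => exists_latticeHomotopy_eq_add_intCast g (fun x => (hpoint x).2 c hc) p⟩

/-- Every homotopy in `H` starts at the given simplex and, if the simplex lifts along one of the
coverings, is the image of the lattice homotopy of a lift. -/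
structure IsStraightening (H : HomotopyFamily Q r k) : Prop where
  apply_zero : ∀ σ g x, H σ g (x, 0) = σ x
  apply_cover_comp : ∀ i s g p, H ((P.cover i).comp s) g p = P.cover i (latticeHomotopy s g p)

open Classical in
/-- The homotopies in `F`, replaced by the images of lattice homotopies on those simplices that lift
along one of the coverings. -/
def straighten (F : HomotopyFamily Q r k) : HomotopyFamily Q r k := fun σ g =>
  if h : ∃ q : ι × C(Δ k, Fin r → ℝ), σ = (P.cover q.1).comp q.2 then
    (P.cover h.choose.1).comp (latticeHomotopy h.choose.2 g) else F σ g

lemma isStraightening_straighten {F : HomotopyFamily Q r k} (hF : ∀ σ g x, F σ g (x, 0) = σ x) :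
    P.IsStraightening (P.straighten F) where
  apply_zero σ g x := by
    unfold straighten
    split_ifs with h
    · rw [ContinuousMap.comp_apply, latticeHomotopy_zero]
      exact (DFunLike.congr_fun h.choose_spec x).symm
    · exact hF σ g x
  apply_cover_comp i s g p := by
    have h : ∃ q : ι × C(Δ k, Fin r → ℝ), (P.cover i).comp s = (P.cover q.1).comp q.2 :=
      ⟨(i, s), rfl⟩
    rw [straighten, dif_pos h]
    exact (P.cover_latticeHomotopy_congr h.choose_spec g p).symm

lemma exists_isStraightening_zero : ∃ H : HomotopyFamily Q r 0, P.IsStraightening H :=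
  ⟨_, P.isStraightening_straighten (F := fun σ _ => ⟨fun p => σ p.1, by fun_prop⟩)
    fun _ _ _ => rfl⟩

variable {P} in
lemma IsStraightening.exists_succ {H : HomotopyFamily Q r k} (h : P.IsStraightening H)
    (hconsistent : IsFaceConsistent H) :
    ∃ H' : HomotopyFamily Q r (k + 1), P.IsStraightening H' ∧ IsFaceCompatible H H' := by
  choose F hF0 hF using fun (σ : SSimplex Q (k + 1)) (g : Fin (k + 2) → Fin r → ℤ) =>
    exists_prism_extension σ (fun i => H (faceOf σ i) (g ∘ i.succAbove))
      (fun i x => h.apply_zero _ _ _) (hconsistent σ g)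
  have hstraight := P.isStraightening_straighten hF0
  refine ⟨P.straighten F, hstraight, fun σ g i x t => ?_⟩
  by_cases hlift : ∃ q : ι × C(Δ (k + 1), Fin r → ℝ), σ = (P.cover q.1).comp q.2
  · obtain ⟨⟨a, s⟩, rfl⟩ := hlift
    rw [hstraight.apply_cover_comp, latticeHomotopy_face]
    exact (h.apply_cover_comp a (s.comp (face i)) _ _).symm
  · rw [straighten, dif_neg hlift]
    exact hF _ _ _ _ _

/-- A face-compatible choice of straightening homotopies in all dimensions. -/
structure Straightening where
  homotopy : ∀ k, HomotopyFamily Q r k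
  isStraightening : ∀ k, P.IsStraightening (homotopy k)
  isFaceCompatible : ∀ k, IsFaceCompatible (homotopy k) (homotopy (k + 1))

lemma nonempty_straightening : Nonempty P.Straightening := by
  let Level (k : ℕ) := {H : HomotopyFamily Q r k // P.IsStraightening H ∧ IsFaceConsistent H}
  choose next hnext hcompat using fun (k : ℕ) (H : Level k) => H.2.1.exists_succ H.2.2
  obtain ⟨H₀, hH₀⟩ := P.exists_isStraightening_zero
  let level (k : ℕ) : Level k := Nat.rec ⟨H₀, hH₀, isFaceConsistent_zero H₀⟩
    (fun k H => ⟨next k H, hnext k H, (hcompat k H).isFaceConsistent⟩) k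
  exact ⟨⟨fun k => (level k).1, fun k => (level k).2.1, fun k => hcompat k (level k)⟩⟩

end TorusCoverings

end Straightening

/-! ### Averaging over labels -/

section Folner

variable {k r N n : ℕ}

lemma l1_sum_sub_sum_le {G T : Type} [Fintype G] [DecidableEq T] {f : G → T}
    (hf : Function.Injective f) {S : T → SChain ℝ X n} (hS : ∀ t, l1 (S t) ≤ 1) {A : Finset T}
    (hA : A ⊆ Finset.univ.image f) :
    l1 (∑ g, S (f g) - ∑ t ∈ A, S t) ≤ Fintype.card G - A.card := by
  have hcard : ((Finset.univ.image f \ A).card : ℝ) = Fintype.card G - A.card := by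
    rw [Finset.card_sdiff_of_subset hA, Nat.cast_sub (Finset.card_le_card hA),
      Finset.card_image_of_injective _ hf, Finset.card_univ]
  rw [← Finset.sum_image (s := Finset.univ) (g := f) (f := S) fun _ _ _ _ h => hf h,
    ← Finset.sum_sdiff hA, add_sub_cancel_right, ← hcard]
  exact (l1_sum_le _ _).trans ((Finset.sum_le_sum fun t _ => hS t).trans (by simp))

lemma l1_average_sub_average_le {G T : Type} [Fintype G] [Nonempty G] [DecidableEq T]
    {f f' : G → T} (hf : Function.Injective f) (hf' : Function.Injective f')
    {S : T → SChain ℝ X n} (hS : ∀ t, l1 (S t) ≤ 1) {A : Finset T}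
    (hA : A ⊆ Finset.univ.image f) (hA' : A ⊆ Finset.univ.image f') :
    l1 (average (fun g => S (f g)) - average fun g => S (f' g)) ≤
      2 * (1 - A.card / Fintype.card G) := by
  have hG : (0 : ℝ) < Fintype.card G := Nat.cast_pos.2 Fintype.card_pos
  have hsum : l1 (∑ g, S (f g) - ∑ g, S (f' g)) ≤ 2 * (Fintype.card G - A.card) := by
    rw [← sub_sub_sub_cancel_right _ _ (∑ t ∈ A, S t)]
    linarith [l1_sub_le (∑ g, S (f g) - ∑ t ∈ A, S t) (∑ g, S (f' g) - ∑ t ∈ A, S t),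
      l1_sum_sub_sum_le hf hS hA, l1_sum_sub_sum_le hf' hS hA']
  rw [average, average, ← smul_sub, l1_smul, abs_of_pos (inv_pos.2 hG), inv_mul_le_iff₀ hG]
  refine hsum.trans_eq ?_
  field_simp

/-- The labels with entries in `{0, …, N - 1}`, as integral labels. -/
def boxLabels (g : Fin k → Fin r → Fin N) : Fin k → Fin r → ℤ := fun j c => ((g j c : ℕ) : ℤ)

lemma boxLabels_injective :
    Function.Injective (boxLabels : (Fin k → Fin r → Fin N) → Fin k → Fin r → ℤ) := by
  intro g g' h
  funext j c
  exact Fin.ext (Int.ofNat_inj.1 (congrFun (congrFun h j) c))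

lemma average_comp_succAbove {W : Type} [AddCommGroup W] [Module ℝ W] [NeZero N]
    (F : (Fin k → Fin r → Fin N) → W) (i : Fin (k + 1)) :
    average (fun g : Fin (k + 1) → Fin r → Fin N => F (g ∘ i.succAbove)) = average F := by
  have hforget (a : Fin r → Fin N) (g : Fin k → Fin r → Fin N) :
      Fin.insertNthEquiv (fun _ => Fin r → Fin N) i (a, g) ∘ i.succAbove = g := by
    funext j
    simp [Fin.insertNthEquiv]
  rw [← average_comp_equiv (Fin.insertNthEquiv (fun _ => Fin r → Fin N) i), average_prod]
  simp only [hforget, average_const]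

/-- The labels with entries in `{β, …, N - β - 1}`. -/
def innerBox (k r N β : ℕ) : Finset (Fin k → Fin r → ℤ) :=
  Fintype.piFinset fun _ => Fintype.piFinset fun _ => Finset.Ico (β : ℤ) ((N : ℤ) - β)

lemma innerBox_subset_image_add_boxLabels [DecidableEq (Fin k → Fin r → ℤ)] {β : ℕ}
    {b : Fin k → Fin r → ℤ} (hb : ∀ j c, |b j c| ≤ β) :
    innerBox k r N β ⊆ Finset.univ.image fun g : Fin k → Fin r → Fin N => b + boxLabels g := by
  intro h hh
  simp only [innerBox, Fintype.mem_piFinset, Finset.mem_Ico] at hh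
  have hbounds (j c) : 0 ≤ h j c - b j c ∧ h j c - b j c < N := by
    have := abs_le.1 (hb j c)
    have := hh j c
    omega
  refine Finset.mem_image.2 ⟨fun j c => ⟨(h j c - b j c).toNat, ?_⟩, Finset.mem_univ _, ?_⟩
  · have := hbounds j c
    omega
  · funext j c
    simp [boxLabels, Int.toNat_of_nonneg (hbounds j c).1]

lemma card_innerBox_div_card {β : ℕ} (hN : 2 * β < N) :
    ((innerBox k r N β).card : ℝ) / Fintype.card (Fin k → Fin r → Fin N) =
      ((1 - 2 * (β : ℝ) / N) ^ r) ^ k := by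
  have hN0 : (N : ℝ) ≠ 0 := Nat.cast_ne_zero.2 (by omega)
  have hIco : ((N : ℤ) - β - β).toNat = N - 2 * β := by omega
  have hratio : 1 - 2 * (β : ℝ) / N = (N - 2 * β) / N := by field_simp
  rw [hratio, div_pow, div_pow]
  simp only [innerBox, Fintype.card_piFinset, Int.card_Ico, Finset.prod_const, Finset.card_univ,
    Fintype.card_fun, Fintype.card_fin, hIco, Nat.cast_pow, Nat.cast_sub hN.le, Nat.cast_mul,
    Nat.cast_ofNat]

-- The boxes `[0, N) ^ r` form a Følner sequence in `ℤ ^ r`.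
lemma tendsto_l1_average_add_boxLabels_sub {S : (Fin k → Fin r → ℤ) → SChain ℝ X n}
    (hS : ∀ t, l1 (S t) ≤ 1) (b : Fin k → Fin r → ℤ) :
    Filter.Tendsto (fun N : ℕ =>
      l1 (average (fun g : Fin k → Fin r → Fin N => S (b + boxLabels g)) -
        average fun g : Fin k → Fin r → Fin N => S (boxLabels g))) Filter.atTop (nhds 0) := by
  classical
  obtain ⟨β, hβ⟩ : ∃ β : ℕ, ∀ j c, |b j c| ≤ β := by
    obtain ⟨β, hβ⟩ := (Set.finite_range fun p : Fin k × Fin r => (b p.1 p.2).natAbs).bddAbove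
    refine ⟨β, fun j c => ?_⟩
    rw [Int.abs_eq_natAbs]
    exact_mod_cast hβ ⟨(j, c), rfl⟩
  have hlim : Filter.Tendsto (fun N : ℕ => 2 * (1 - ((1 - 2 * (β : ℝ) / N) ^ r) ^ k))
      Filter.atTop (nhds 0) := by
    simpa using (((((tendsto_const_div_atTop_nhds_zero_nat (2 * (β : ℝ))).const_sub 1).pow r).pow
      k).const_sub 1).const_mul 2
  refine squeeze_zero' (.of_forall fun N => l1_nonneg _) ?_ hlim
  filter_upwards [Filter.eventually_gt_atTop (2 * β)] with N hN
  have : NeZero N := ⟨by omega⟩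
  have hbox := innerBox_subset_image_add_boxLabels (k := k) (r := r) (N := N) (β := β) (b := 0)
    (by simp)
  simp only [zero_add] at hbox
  rw [← card_innerBox_div_card hN]
  exact l1_average_sub_average_le (fun g g' h => boxLabels_injective (add_left_cancel h))
    boxLabels_injective hS (innerBox_subset_image_add_boxLabels hβ) hbox

end Folner

namespace TorusCoverings.Straightening

variable {Q : Type} [TopologicalSpace Q] {ι : Type} {k r N : ℕ} {P : TorusCoverings Q ι r}
  (S : P.Straightening)

/-- The end of the straightening homotopy, averaged over the labels in the box of size `N`. -/
def averagedMap (N k : ℕ) : SChain ℝ Q k →ₗ[ℝ] SChain ℝ Q k :=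
  chainLift fun σ => average fun g : Fin (k + 1) → Fin r → Fin N =>
    ofSimplex ℝ ((S.homotopy k σ (boxLabels g)).comp (prismLevel k 1))

/-- The chain homotopy from the identity to `averagedMap`. -/
def averagedHomotopy (N k : ℕ) : SChain ℝ Q k →ₗ[ℝ] SChain ℝ Q (k + 1) :=
  chainLift fun σ => average fun g : Fin (k + 1) → Fin r → Fin N =>
    pushforward (S.homotopy k σ (boxLabels g)) (prismChain ℝ k)

lemma averagedMap_sub_self [NeZero N] (c : SChain ℝ Q (k + 1)) :
    S.averagedMap N (k + 1) c - c = bdry ℝ Q (k + 1) (S.averagedHomotopy N (k + 1) c) +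
      S.averagedHomotopy N k (bdry ℝ Q k c) := by
  refine chainHom_congr (f := S.averagedMap N (k + 1) - LinearMap.id)
    (g := (bdry ℝ Q (k + 1)).comp (S.averagedHomotopy N (k + 1)) +
      (S.averagedHomotopy N k).comp (bdry ℝ Q k)) (fun σ => ?_) c
  have hbottom (g) : (S.homotopy (k + 1) σ g).comp (prismLevel (k + 1) 0) = σ :=
    ContinuousMap.ext fun x => (S.isStraightening (k + 1)).apply_zero σ g x
  have hside (g : Fin (k + 2) → Fin r → Fin N) (i) :
      (S.homotopy (k + 1) σ (boxLabels g)).comp (prismFace i) =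
        S.homotopy k (faceOf σ i) (boxLabels (g ∘ i.succAbove)) :=
    ContinuousMap.ext fun ⟨x, t⟩ => S.isFaceCompatible k σ (boxLabels g) i x t
  have hforget (i) := average_comp_succAbove (fun g : Fin (k + 1) → Fin r → Fin N =>
    pushforward (S.homotopy k (faceOf σ i) (boxLabels g)) (prismChain ℝ k)) i
  simp only [LinearMap.sub_apply, LinearMap.add_apply, LinearMap.comp_apply, LinearMap.id_apply,
    averagedMap, averagedHomotopy, chainLift_ofSimplex, bdry_ofSimplex, map_sum, map_smul,
    map_average, bdry_pushforward, bdry_prismChain_succ, map_sub, pushforward_pushforward,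
    pushforward_ofSimplex, hbottom, hside, average_sub, average_const, average_sum, average_smul,
    hforget]
  abel

lemma l1_averagedMap_le (c : SChain ℝ Q k) : l1 (S.averagedMap N k c) ≤ l1 c :=
  l1_chainLift_le (fun _ => l1_average_le fun _ => (l1_ofSimplex _).le) c

end TorusCoverings.Straightening

/-! ### Asymptotic vanishing on tori -/

namespace TorusCoverings

variable {Q : Type} [TopologicalSpace Q] {ι : Type} {k r : ℕ} (P : TorusCoverings Q ι r)

/-- The average over all labels in the box of size `N` of the straight simplices with these labels
as vertices, in the `i`-th torus. -/
def averagedSimplex (i : ι) (k N : ℕ) : SChain ℝ Q k :=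
  average fun g : Fin (k + 1) → Fin r → Fin N =>
    ofSimplex ℝ ((P.cover i).comp (latticeSimplex (boxLabels g)))

variable {P}

lemma Straightening.averagedMap_ofSimplex_cover_comp (S : P.Straightening) (i : ι)
    (s : C(Δ k, Fin r → ℝ)) (N : ℕ) :
    S.averagedMap N k (ofSimplex ℝ ((P.cover i).comp s)) =
      average fun g : Fin (k + 1) → Fin r → Fin N =>
        ofSimplex ℝ ((P.cover i).comp (latticeSimplex (roundedVertices s + boxLabels g))) := by
  rw [averagedMap, chainLift_ofSimplex]
  congr 1
  funext g
  congr 1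
  ext x
  rw [ContinuousMap.comp_apply, ContinuousMap.comp_apply, ← latticeHomotopy_one]
  exact (S.isStraightening k).apply_cover_comp i s _ _

lemma Straightening.tendsto_l1_averagedMap_sub (S : P.Straightening) (i : ι)
    (s : C(Δ k, Fin r → ℝ)) (a : SChain ℝ (Δ k) k) :
    Filter.Tendsto (fun N => l1 (S.averagedMap N k (pushforward ((P.cover i).comp s) a) -
      augmentation ℝ _ k a • P.averagedSimplex i k N)) Filter.atTop (nhds 0) := by
  induction a using chain_induction with
  | zero => simp [l1_zero]
  | add a b ha hb =>
    refine squeeze_zero (fun N => l1_nonneg _) (fun N => ?_) (by simpa using ha.add hb)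
    simp only [map_add, add_smul, add_sub_add_comm]
    exact l1_add_le _ _
  | smul c σ =>
    have hσ := tendsto_l1_average_add_boxLabels_sub
      (S := fun v => ofSimplex ℝ ((P.cover i).comp (latticeSimplex v)))
      (fun v => (l1_ofSimplex _).le) (roundedVertices (s.comp σ))
    simp only [← S.averagedMap_ofSimplex_cover_comp] at hσ
    refine (mul_zero |c| ▸ hσ.const_mul |c|).congr fun N => ?_
    rw [← l1_smul, map_smul, map_smul, map_smul, pushforward_ofSimplex, augmentation_ofSimplex,
      smul_sub, smul_eq_mul, mul_one]
    rfl

lemma Straightening.tendsto_l1_averagedMap_altChain (S : P.Straightening) {L : Set Q}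
    (hL : ∀ σ : SSimplex Q (k + 1), Set.range σ ⊆ L → ∃ i s, σ = (P.cover i).comp s)
    {w : SChain ℝ Q (k + 1)} (hw : w ∈ chainsIn ℝ Q L (k + 1)) :
    Filter.Tendsto (fun N => l1 (S.averagedMap N (k + 1) (naturalOp (altChain (k + 1)) w)))
      Filter.atTop (nhds 0) := by
  rw [chainsIn_eq_span] at hw
  induction hw using Submodule.span_induction with
  | mem w hw =>
    obtain ⟨σ, hσ, rfl⟩ := hw
    obtain ⟨i, s, rfl⟩ := hL σ hσ
    simpa only [augmentation_altChain, zero_smul, sub_zero, naturalOp_ofSimplex] using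
      S.tendsto_l1_averagedMap_sub i s (altChain (k + 1))
  | zero => simp [l1_zero]
  | add a b _ _ ha hb =>
    refine squeeze_zero (fun N => l1_nonneg _) (fun N => ?_) (by simpa using ha.add hb)
    rw [map_add, map_add]
    exact l1_add_le _ _
  | smul c a _ ha =>
    refine (mul_zero |c| ▸ ha.const_mul |c|).congr fun N => ?_
    rw [← l1_smul, map_smul, map_smul]

lemma exists_l1_sub_add_bdry_le (P : TorusCoverings Q ι r) {L : Set Q}
    (hL : ∀ σ : SSimplex Q (k + 1), Set.range σ ⊆ L → ∃ i s, σ = (P.cover i).comp s)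
    {v w : SChain ℝ Q (k + 1)} (hw : w ∈ chainsIn ℝ Q L (k + 1))
    (hcycle : bdry ℝ Q k (v - w) = 0) {δ : ℝ} (hδ : 0 < δ) :
    ∃ a, l1 (v - w + bdry ℝ Q (k + 1) a) ≤ l1 v + δ := by
  obtain ⟨S⟩ := P.nonempty_straightening
  obtain ⟨N, hN, hN0⟩ := (((S.tendsto_l1_averagedMap_altChain hL hw).eventually_lt_const hδ).and
    (Filter.eventually_ne_atTop 0)).exists
  have : NeZero N := ⟨hN0⟩
  let alt (c : SChain ℝ Q (k + 1)) := naturalOp (altChain (k + 1)) c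
  have halt := isNaturalChainMap_altChain.naturalOp_sub_self k (v - w)
  rw [hcycle, map_zero, add_zero] at halt
  have halt_cycle : bdry ℝ Q k (alt (v - w)) = 0 := by
    rw [← sub_add_cancel (alt (v - w)) (v - w), map_add, halt, bdry_bdry, hcycle, add_zero]
  have hav := S.averagedMap_sub_self (N := N) (alt (v - w))
  rw [halt_cycle, map_zero, add_zero] at hav
  refine ⟨naturalOp (acyclicHomotopy altChain (k + 1)) (v - w) +
    S.averagedHomotopy N (k + 1) (alt (v - w)), ?_⟩
  calc l1 (v - w + bdry ℝ Q (k + 1) _)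
    _ = l1 (S.averagedMap N (k + 1) (alt v) - S.averagedMap N (k + 1) (alt w)) := by
      rw [map_add, ← halt, ← hav, ← add_assoc, add_sub_cancel, add_sub_cancel, ← map_sub,
        ← map_sub]
    _ ≤ l1 (S.averagedMap N (k + 1) (alt v)) + l1 (S.averagedMap N (k + 1) (alt w)) :=
      l1_sub_le _ _
    _ ≤ l1 v + δ := add_le_add
      ((S.l1_averagedMap_le _).trans (l1_naturalOp_le (l1_altChain_le _) v)) hN.le

end TorusCoverings

lemma exists_torusProj_lift {k r : ℕ} (τ : C(Δ k, Torus r)) :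
    ∃ F : C(Δ k, Fin r → ℝ), ∀ x, torusProj r (F x) = τ x := by
  have := (convex_stdSimplex ℝ (Fin (k + 1))).contractibleSpace ⟨_, (stdSimplex.vertex 0).2⟩
  have := (convex_stdSimplex ℝ (Fin (k + 1))).locallyPathConnectedSpace
  have hcoord (c : Fin r) : ∃ F : C(Δ k, ℝ), ∀ x, ((F x : ℝ) : AddCircle (1 : ℝ)) = τ x c := by
    obtain ⟨a, ha⟩ := QuotientAddGroup.mk_surjective (τ (stdSimplex.vertex 0) c)
    obtain ⟨F, ⟨-, hF⟩, -⟩ := (AddCircle.isCoveringMap_coe (1 : ℝ)).existsUnique_continuousMap_lifts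
      (⟨fun x => τ x c, by fun_prop⟩ : C(Δ k, AddCircle (1 : ℝ))) (stdSimplex.vertex 0) a ha
    exact ⟨F, congrFun hF⟩
  choose F hF using hcoord
  exact ⟨⟨fun x c => F c x, by fun_prop⟩, fun x => funext fun c => hF c x⟩

namespace BoundaryCollapse

variable {d m n : ℕ} {M Q : Type} [TopologicalSpace M] [TopologicalSpace Q] {B : Set M}
  (S : BoundaryCollapse d m M Q B)

/-- The universal coverings of the collapsed tori. They are precomposed with the projections
`ℝ ^ (d + 1) → ℝ ^ rank i`, so that all of them have the same source. -/
def torusCoverings : TorusCoverings Q (Fin m) (d + 1) where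
  cover i := ⟨fun a => S.tori ⟨i, torusProj (S.rank i) (a ∘ Fin.castLE (S.rank_le i))⟩,
    S.tori.continuous.comp (continuous_sigmaMk.comp
      ((continuous_torusProj _).comp (by fun_prop)))⟩
  IsPeriodic i c := c.1 < S.rank i
  cover_eq_iff i i' a b := by
    simp only [ContinuousMap.coe_mk, S.tori_injective.eq_iff]
    constructor
    · intro h
      obtain rfl : i = i' := congrArg Sigma.fst h
      obtain ⟨z, hz⟩ := torusProj_eq_iff.1 (sigma_mk_injective h)
      refine ⟨rfl, fun c hc => ⟨z ⟨c, hc⟩, ?_⟩⟩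
      rw [← intVec_apply, hz]
      simp
    · rintro ⟨rfl, h⟩
      choose z hz using h
      rw [sigma_mk_injective.eq_iff, torusProj_eq_iff]
      refine ⟨fun c => z (Fin.castLE (S.rank_le i) c) c.2, funext fun c => ?_⟩
      simp only [intVec_apply, Pi.sub_apply, Function.comp_apply]
      rw [hz (Fin.castLE (S.rank_le i) c) c.2, add_sub_cancel_left]

lemma exists_eq_torusCoverings_comp {k : ℕ} (σ : SSimplex Q k)
    (hσ : Set.range σ ⊆ Set.range S.tori) : ∃ i s, σ = (S.torusCoverings.cover i).comp s := by
  choose f hf using fun x => hσ ⟨x, rfl⟩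
  have hf_cont : Continuous f := by
    rw [S.isClosedEmbedding_tori.isInducing.continuous_iff]
    exact σ.continuous.congr fun x => (hf x).symm
  obtain ⟨i, τ, hτ⟩ :=
    ContinuousMap.exists_lift_sigma (⟨f, hf_cont⟩ : C(Δ k, Σ i, Torus (S.rank i)))
  obtain ⟨F, hF⟩ := exists_torusProj_lift τ
  refine ⟨i, ⟨fun x c => if h : c.1 < S.rank i then F x ⟨c, h⟩ else 0, ?_⟩,
    ContinuousMap.ext fun x => ?_⟩
  · refine continuous_pi fun c => ?_
    split_ifs <;> fun_prop
  · have hrestrict : (fun c : Fin (d + 1) => if h : c.1 < S.rank i then F x ⟨c, h⟩ else 0) ∘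
        Fin.castLE (S.rank_le i) = F x := by
      funext c
      simp
    have hfx : f x = ⟨i, torusProj (S.rank i) (F x)⟩ :=
      (DFunLike.congr_fun hτ x).trans (by rw [hF]; rfl)
    rw [← hf, hfx, ← hrestrict]
    rfl

end BoundaryCollapse

/-! ### The norm inequality -/

namespace BoundaryCollapse

variable {d m n : ℕ} {M Q : Type} [TopologicalSpace M] [TopologicalSpace Q] {B : Set M}
  (S : BoundaryCollapse d m M Q B)

lemma exists_l1_pushforward_proj_sub_add_bdry_le {c z : SChain ℝ M (n + 1)}
    (hcz : c - z ∈ relBdries ℝ M B n) {w : SChain ℝ Q (n + 1)}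
    (hw : w ∈ chainsIn ℝ Q (Set.range S.tori) (n + 1))
    (hcycle : bdry ℝ Q n (pushforward S.proj z - w) = 0) {δ : ℝ} (hδ : 0 < δ) :
    ∃ a, l1 (pushforward S.proj z - w + bdry ℝ Q (n + 1) a) ≤ l1 c + δ := by
  obtain ⟨e, u, hu, heu⟩ := mem_relBdries_iff.1 hcz
  have hshift : pushforward S.proj c - (pushforward S.proj u + w) =
      pushforward S.proj z - w + bdry ℝ Q (n + 1) (pushforward S.proj e) := by
    rw [bdry_pushforward, eq_sub_of_add_eq heu, map_sub, map_sub]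
    abel
  obtain ⟨a, ha⟩ := S.torusCoverings.exists_l1_sub_add_bdry_le
    (fun σ => S.exists_eq_torusCoverings_comp σ)
    (add_mem (pushforward_mem_chainsIn S.mapsTo_proj_bdry hu) hw)
    (v := pushforward S.proj c) (by rw [hshift, map_add, bdry_bdry, hcycle, add_zero]) hδ
  refine ⟨pushforward S.proj e + a, ?_⟩
  rw [map_add, ← add_assoc, ← hshift]
  exact ha.trans (add_le_add_left (l1_pushforward_le _ _) δ)

lemma l1HomNorm_le_of_isFundClassOn [CompactSpace M] [ConnectedSpace M]
    (h : IsTopMfdWithBdry (n + 1) M B) (hdn : d + 2 ≤ n) {μ : relHomology ℝ M B n}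
    (hμ : IsFundClass M B n μ) {ρ : relHomology ℝ Q ∅ n}
    (hρ : IsFundClassOn Q ∅ (S.proj '' Bᶜ) n ρ) : l1HomNorm ρ ≤ l1HomNorm μ := by
  obtain ⟨z, hz, ⟨hzℝ, rfl⟩, hz_gen⟩ := isFundClassOn_iff.1 hμ
  obtain ⟨v, hv, ⟨hvℝ, rfl⟩, hv_gen⟩ := isFundClassOn_iff.1 hρ
  obtain ⟨w, hw, hcycle⟩ := S.exists_bdry_pushforward_proj_sub_eq_zero hdn hz
  obtain ⟨x, hx⟩ := h.dense_compl.nonempty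
  obtain ⟨s, hs, e, hv_eq⟩ := S.exists_eq_smul_add_bdry h (by lia) hcycle
    (mem_relCycles_empty_iff.1 hv) hx
    (S.isLocalGenerator_pushforward_proj_sub h hw hcycle hx (hz_gen x hx))
    (hv_gen (S.proj x) ⟨x, hx, rfl⟩)
  rw [map_sub, intChainHom_pushforward] at hv_eq
  have hcycleℝ := congrArg intChainHom hcycle
  rw [intChainHom_bdry, map_sub, intChainHom_pushforward, map_zero] at hcycleℝ
  refine le_csInf ⟨_, ⟨_, hzℝ⟩, rfl, rfl⟩ ?_
  rintro _ ⟨c, hc, rfl⟩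
  refine le_of_forall_pos_le_add fun δ hδ => ?_
  obtain ⟨a, ha⟩ := S.exists_l1_pushforward_proj_sub_add_bdry_le (relHomClass_eq_iff.1 hc)
    (intChainHom_mem_chainsIn hw) hcycleℝ hδ
  calc l1HomNorm (relHomClass ⟨intChainHom v, hvℝ⟩)
    _ ≤ l1 (intChainHom v + bdry ℝ Q (n + 1) (s • a - e)) := l1HomNorm_le_add_bdry _ _
    _ = |s| * l1 (pushforward S.proj (intChainHom z) - intChainHom w + bdry ℝ Q (n + 1) a) := by
      rw [← l1_smul, hv_eq, map_sub, map_smul, smul_add]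
      abel_nf
    _ ≤ l1 c.1 + δ := (mul_le_of_le_one_left (l1_nonneg _) hs).trans ha

end BoundaryCollapse

theorem simplicial_volume_dehn_filling_general {d m n : ℕ} {M Q : Type} [TopologicalSpace M]
    [TopologicalSpace Q] [CompactSpace M] [ConnectedSpace M] {B : Set M}
    (S : BoundaryCollapse d m M Q B) (h : IsTopMfdWithBdry (n + 1) M B) (hdn : d + 2 ≤ n)
    {μ : relHomology ℝ M B n} (hμ : IsFundClass M B n μ) :
    (∃ ρ : relHomology ℝ Q ∅ n, IsFundClassOn Q ∅ (S.proj '' Bᶜ) n ρ) ∧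
    (∀ ρ : relHomology ℝ Q ∅ n,
      IsFundClassOn Q ∅ (S.proj '' Bᶜ) n ρ → l1HomNorm ρ ≤ l1HomNorm μ) :=
  ⟨S.exists_isFundClassOn h hdn hμ, fun _ hρ => S.l1HomNorm_le_of_isFundClassOn h hdn hμ hρ⟩

/-- **Simplicial volume of generalized Dehn fillings (generalizing Fujiwara–Manning).**
Let `M` be a compact connected oriented `n`-manifold, `n = d + 3 ≥ 3`, whose boundary is a
disjoint union of `(n-1)`-tori, and let `R = M(T_1, …, T_m)` be a generalized Dehn filling
of `M`. Then `R` (which is an oriented pseudomanifold) admits a fundamental class, whose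
regular points contain the image of the interior of `M`, and `‖R‖ ≤ ‖M, ∂M‖`. -/
theorem simplicial_volume_dehn_filling
    (d m : ℕ) (D : DehnData d m)
    (hcomp : CompactSpace D.M) (hconn : ConnectedSpace D.M)
    (hmfd : IsTopMfdWithBdry (d + 3) D.M D.B)
    (μ : relHomology ℝ D.M D.B (d + 2)) (hμ : IsFundClass D.M D.B (d + 2) μ) :
    (∃ ρ : relHomology ℝ D.Rfill ∅ (d + 2),
      IsFundClassOn D.Rfill ∅ (D.q '' D.Bᶜ) (d + 2) ρ) ∧
    (∀ ρ : relHomology ℝ D.Rfill ∅ (d + 2),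
      IsFundClassOn D.Rfill ∅ (D.q '' D.Bᶜ) (d + 2) ρ → l1HomNorm ρ ≤ l1HomNorm μ) := by
  have : T2Space D.M := hmfd.1
  exact simplicial_volume_dehn_filling_general D.boundaryCollapse hmfd le_rfl hμ

end BddCoh
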